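/- Let S₁ and S₂ be closed surfaces equipped with length metrics and let X be a metric wedge sum of S₁ and S₂ (gluing a point p₁ ∈ S₁ to a point p₂ ∈ S₂, with the quotient length metric). Then X is the Gromov-Hausdorff limit of a sequence of length spaces each homeomorphic to a connected sum S₁ # S₂. -/

import Mathlib

open Metric Set Filter GromovHausdorff

/-- Length of a path, as the total variation of the parametrization. -/
noncomputable def pathLength {X : Type} [MetricSpace X] {x y : X} (γ : Path x y) : ENNReal :=
  eVariationOn γ Set.univ

/-- A length space: the distance between two points is the infimum of lengths of
paths joining them. -/
def IsLengthSpace (X : Type) [MetricSpace X] : Prop :=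
  ∀ x y : X, edist x y = ⨅ γ : Path x y, pathLength γ

/-- `Z` is a connected sum of `S₁` and `S₂`: it decomposes into two closed pieces
glued along a common boundary circle, the pieces being homeomorphic to `S₁`, resp.
`S₂`, with an open disc removed. -/
def IsConnectedSumOf (Z S₁ S₂ : Type) [TopologicalSpace Z] [TopologicalSpace S₁]
    [TopologicalSpace S₂] : Prop :=
  ∃ (A B : Set Z) (D₁ : Set S₁) (D₂ : Set S₂),
    IsClosed A ∧ IsClosed B ∧ A ∪ B = Set.univ ∧ A ∩ B = frontier A ∧
    frontier A = frontier B ∧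
    Nonempty (↥(A ∩ B) ≃ₜ AddCircle (1 : ℝ)) ∧
    IsOpen D₁ ∧ IsOpen D₂ ∧
    Nonempty (↥D₁ ≃ₜ Metric.ball (0 : EuclideanSpace ℝ (Fin 2)) 1) ∧
    Nonempty (↥D₂ ≃ₜ Metric.ball (0 : EuclideanSpace ℝ (Fin 2)) 1) ∧
    Nonempty (↥A ≃ₜ ↥(D₁ᶜ)) ∧ Nonempty (↥B ≃ₜ ↥(D₂ᶜ))

open scoped Topology ENNReal unitInterval

/-! ### Paths of controlled length -/

section JoinedWithin

variable {Y Y' M M' : Type*} [TopologicalSpace Y] [TopologicalSpace Y']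
  [PseudoEMetricSpace M] [PseudoEMetricSpace M']

/-- `x` and `y` are joined by a path inside `Ω` whose image under `j` has length at most `ℓ`. -/
def JoinedWithin (j : Y → M) (Ω : Set Y) (x y : Y) (ℓ : ℝ≥0∞) : Prop :=
  ∃ γ : Path x y, (∀ t, γ t ∈ Ω) ∧ eVariationOn (j ∘ γ) univ ≤ ℓ

namespace JoinedWithin

variable {j : Y → M} {Ω Ω' : Set Y} {x y z : Y} {ℓ ℓ' : ℝ≥0∞}

theorem refl (hx : x ∈ Ω) : JoinedWithin j Ω x x 0 := by
  refine ⟨Path.refl x, fun _ => hx, ?_⟩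
  refine (eVariationOn.constant_on ?_).le
  rintro _ ⟨_, -, rfl⟩ _ ⟨_, -, rfl⟩
  rfl

theorem mono (h : JoinedWithin j Ω x y ℓ) (hΩ : Ω ⊆ Ω') (hℓ : ℓ ≤ ℓ') :
    JoinedWithin j Ω' x y ℓ' := by
  obtain ⟨γ, h1, h2⟩ := h
  exact ⟨γ, fun t => hΩ (h1 t), h2.trans hℓ⟩

theorem symm (h : JoinedWithin j Ω x y ℓ) : JoinedWithin j Ω y x ℓ := by
  obtain ⟨γ, h1, h2⟩ := h
  refine ⟨γ.symm, fun t => h1 _, le_trans ?_ h2⟩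
  exact eVariationOn.comp_le_of_antitoneOn (j ∘ γ) unitInterval.symm
    (fun a _ b _ hab => by
      rw [← Subtype.coe_le_coe] at hab ⊢
      simp only [unitInterval.coe_symm_eq]; linarith) (fun _ _ => mem_univ _)

theorem edist_le (h : JoinedWithin j Ω x y ℓ) : edist (j x) (j y) ≤ ℓ := by
  obtain ⟨γ, -, h2⟩ := h
  refine le_trans ?_ h2
  simpa using eVariationOn.edist_le (j ∘ γ) (mem_univ (0 : I)) (mem_univ (1 : I))

theorem trans (h : JoinedWithin j Ω x y ℓ) (h' : JoinedWithin j Ω y z ℓ') :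
    JoinedWithin j Ω x z (ℓ + ℓ') := by
  obtain ⟨γ, h1, h2⟩ := h
  obtain ⟨γ', h1', h2'⟩ := h'
  refine ⟨γ.trans γ', fun t => ?_, ?_⟩
  · rw [Path.trans_apply]
    split_ifs
    · exact h1 _
    · exact h1' _
  · set c : I := ⟨1 / 2, by norm_num, by norm_num⟩ with hc
    have hu : (univ : Set I) = Iic c ∪ Ici c := Iic_union_Ici.symm
    rw [hu, eVariationOn.union _ (x := c) isGreatest_Iic isLeast_Ici]
    refine add_le_add (le_trans ?_ h2) (le_trans ?_ h2')
    · rw [eVariationOn.eq_of_eqOn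
        (f' := (j ∘ γ) ∘ fun t : I => projIcc (0 : ℝ) 1 zero_le_one (2 * t))]
      · refine eVariationOn.comp_le_of_monotoneOn _ _ (fun a _ b _ hab => ?_)
          (fun _ _ => mem_univ _)
        exact monotone_projIcc _ (mul_le_mul_of_nonneg_left hab zero_le_two)
      · intro t ht
        have ht' : (t : ℝ) ≤ 1 / 2 := ht
        simp only [Function.comp_apply, Path.trans_apply, ht', dif_pos]
        rw [projIcc_of_mem]
    · rw [eVariationOn.eq_of_eqOn
        (f' := (j ∘ γ') ∘ fun t : I => projIcc (0 : ℝ) 1 zero_le_one (2 * t - 1))]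
      · refine eVariationOn.comp_le_of_monotoneOn _ _ (fun a _ b _ hab => ?_)
          (fun _ _ => mem_univ _)
        refine monotone_projIcc _ ?_
        have : (a : ℝ) ≤ b := hab
        linarith
      · intro t ht
        have ht' : 1 / 2 ≤ (t : ℝ) := ht
        simp only [Function.comp_apply, Path.trans_apply]
        split_ifs with h
        · have h3 : (t : ℝ) = 1 / 2 := le_antisymm h ht'
          have e1 : (⟨2 * t, (unitInterval.mul_pos_mem_iff zero_lt_two).2 ⟨t.2.1, h⟩⟩ : I) = 1 := by
            ext; simp [h3]
          have e2 : projIcc (0 : ℝ) 1 zero_le_one (2 * t - 1) = 0 := by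
            rw [h3]; norm_num
          rw [e1, e2, γ.target, γ'.source]
        · rw [projIcc_of_mem]

/-- A path joins any two of its points within the image of the parameter interval. -/
theorem of_subpath (j : Y → M) (γ : Path x y) {a b : I} (hab : a ≤ b) :
    JoinedWithin j (γ '' Icc a b) (γ a) (γ b) (eVariationOn (j ∘ γ) (Icc a b)) := by
  have hr := Path.range_subpath_of_le γ a b hab
  refine ⟨γ.subpath a b, fun t => hr ▸ mem_range_self t, ?_⟩
  refine eVariationOn.comp_le_of_monotoneOn (j ∘ γ) (Icc.convexComb a b) ?_ ?_
  · intro s _ t _ hst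
    rw [← Subtype.coe_le_coe] at hst hab ⊢
    simp only [Icc.coe_convexComb]
    nlinarith
  · intro t _
    have := Path.range_subpathAux a b
    have h2 : Icc.convexComb a b t ∈ uIcc a b := this ▸ mem_range_self t
    rwa [uIcc_of_le hab] at h2

/-- Transport of a path along a map which is Lipschitz for the auxiliary metrics. -/
theorem map {j' : Y' → M'} {g : Y → Y'} {K : ℝ≥0∞} (h : JoinedWithin j Ω x y ℓ)
    (hg : ContinuousOn g Ω)
    (hK : ∀ u ∈ Ω, ∀ v ∈ Ω, edist (j' (g u)) (j' (g v)) ≤ K * edist (j u) (j v)) :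
    JoinedWithin j' (g '' Ω) (g x) (g y) (K * ℓ) := by
  obtain ⟨γ, h1, h2⟩ := h
  have hr : range γ ⊆ Ω := range_subset_iff.2 h1
  refine ⟨γ.map' (hg.mono hr), fun t => ⟨_, h1 t, rfl⟩, ?_⟩
  refine le_trans ?_ (mul_le_mul_right h2 K)
  refine iSup_le fun p => ?_
  calc ∑ i ∈ Finset.range p.1, edist (j' (g (γ (p.2.1 (i + 1))))) (j' (g (γ (p.2.1 i))))
      ≤ ∑ i ∈ Finset.range p.1, K * edist (j (γ (p.2.1 (i + 1)))) (j (γ (p.2.1 i))) :=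
        Finset.sum_le_sum fun i _ => hK _ (h1 _) _ (h1 _)
    _ = K * ∑ i ∈ Finset.range p.1, edist (j (γ (p.2.1 (i + 1)))) (j (γ (p.2.1 i))) := by
        rw [Finset.mul_sum]
    _ ≤ _ := mul_le_mul_right (eVariationOn.sum_le p.2.2.1 fun i => mem_univ _) K

end JoinedWithin

end JoinedWithin

section InfiniteConcatenation

variable {Y M : Type*} [TopologicalSpace Y] [MetricSpace M]

/-- Concatenation of the first `n` paths of a sequence, parametrised so that all the paths of the
sequence fit into the unit interval. -/
noncomputable def concatUpTo {x : ℕ → Y} (p : ∀ n, Path (x n) (x (n + 1))) : ℕ → ℝ → Y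
  | 0 => fun _ => x 0
  | n + 1 => fun t => if t ≤ 1 - 1 / (n + 1 : ℝ) then concatUpTo p n t
      else (p n).extend ((t - (1 - 1 / (n + 1 : ℝ))) * ((n + 1) * (n + 2)))

variable {x : ℕ → Y} (p : ∀ n, Path (x n) (x (n + 1)))

theorem concatUpTo_of_ge (n : ℕ) {t : ℝ} (ht : 1 - 1 / (n + 1 : ℝ) ≤ t) :
    concatUpTo p n t = x n := by
  cases n with
  | zero => rfl
  | succ n =>
    have h0 : (0 : ℝ) < n + 1 := by positivity
    have h0' : (0 : ℝ) < n + 2 := by positivity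
    push_cast at ht
    rw [add_assoc, one_add_one_eq_two] at ht
    have h1 : (1 : ℝ) / (n + 2) < 1 / (n + 1) := by
      apply one_div_lt_one_div_of_lt <;> linarith
    have h2 : ¬ t ≤ 1 - 1 / (n + 1 : ℝ) := by linarith
    simp only [concatUpTo, h2, if_false]
    apply Path.extend_of_one_le
    have : 1 / (n + 1 : ℝ) - 1 / (n + 2) ≤ t - (1 - 1 / (n + 1 : ℝ)) := by linarith
    calc (1 : ℝ) = (1 / (n + 1 : ℝ) - 1 / (n + 2)) * ((n + 1) * (n + 2)) := by
          field_simp; ring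
      _ ≤ _ := by gcongr

theorem continuous_concatUpTo (n : ℕ) : Continuous (concatUpTo p n) := by
  induction n with
  | zero => exact continuous_const
  | succ n ih =>
    refine Continuous.if_le ih ?_ continuous_id continuous_const ?_
    · exact (p n).continuous_extend.comp (by fun_prop)
    · intro t ht
      rw [concatUpTo_of_ge p n ht.ge, ht]
      simp

theorem concatUpTo_zero (n : ℕ) : concatUpTo p n 0 = x 0 := by
  induction n with
  | zero => rfl
  | succ n ih =>
    have : (0 : ℝ) ≤ 1 - 1 / (n + 1 : ℝ) := by
      rw [sub_nonneg, div_le_one (by positivity)]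
      linarith [n.cast_nonneg (α := ℝ)]
    simp only [concatUpTo, this, if_true, ih]

variable {ℓ : ℕ → ℝ≥0∞} {j : Y → M}

theorem edist_concatUpTo_le (hp : ∀ n, eVariationOn (j ∘ p n) univ ≤ ℓ n) (n : ℕ) (t : ℝ) :
    edist (j (concatUpTo p n t)) (j (concatUpTo p (n + 1) t)) ≤ ℓ n := by
  by_cases h : t ≤ 1 - 1 / (n + 1 : ℝ)
  · simp only [concatUpTo, h, if_true, edist_self, zero_le]
  · rw [concatUpTo_of_ge p n (not_le.1 h).le]
    simp only [concatUpTo, h, if_false]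
    refine le_trans ?_ (hp n)
    have := eVariationOn.edist_le (j ∘ p n) (mem_univ (0 : I)) (mem_univ
      (projIcc (0 : ℝ) 1 zero_le_one ((t - (1 - 1 / (n + 1 : ℝ))) * ((n + 1) * (n + 2)))))
    simpa [Path.extend, IccExtend] using this

theorem eVariationOn_concatUpTo_le (hp : ∀ n, eVariationOn (j ∘ p n) univ ≤ ℓ n) (n : ℕ) :
    eVariationOn (j ∘ concatUpTo p n) univ ≤ ∑ k ∈ Finset.range n, ℓ k := by
  induction n with
  | zero =>
    refine (eVariationOn.constant_on ?_).le
    rintro _ ⟨_, -, rfl⟩ _ ⟨_, -, rfl⟩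
    rfl
  | succ n ih =>
    set c : ℝ := 1 - 1 / (n + 1 : ℝ) with hc
    have hu : (univ : Set ℝ) = Iic c ∪ Ici c := Iic_union_Ici.symm
    rw [hu, eVariationOn.union _ (x := c) isGreatest_Iic isLeast_Ici, Finset.sum_range_succ]
    refine add_le_add ?_ ?_
    · rw [eVariationOn.eq_of_eqOn (f' := j ∘ concatUpTo p n)]
      · exact (eVariationOn.mono _ (subset_univ _)).trans ih
      · intro t ht
        have ht' : t ≤ 1 - 1 / (n + 1 : ℝ) := ht
        simp only [Function.comp_apply, concatUpTo, ht', if_true]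
    · refine le_trans ?_ (hp n)
      rw [eVariationOn.eq_of_eqOn (f' := (j ∘ p n) ∘ fun t : ℝ =>
        projIcc (0 : ℝ) 1 zero_le_one ((t - c) * ((n + 1) * (n + 2))))]
      · refine eVariationOn.comp_le_of_monotoneOn _ _ (fun a _ b _ hab => ?_)
          (fun _ _ => mem_univ _)
        refine monotone_projIcc _ ?_
        gcongr
      · intro t ht
        have ht' : 1 - 1 / (n + 1 : ℝ) ≤ t := ht
        by_cases h : t ≤ 1 - 1 / (n + 1 : ℝ)
        · have h3 : t = c := le_antisymm h ht'
          simp only [Function.comp_apply, concatUpTo, h, if_true]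
          rw [concatUpTo_of_ge p n ht', h3]
          simp
        · simp only [Function.comp_apply, concatUpTo, h, if_false]
          rfl

/-- Countably many paths of summable length, whose endpoints converge, can be concatenated. -/
theorem JoinedWithin.infinite_concat [CompleteSpace M] (hj : Topology.IsClosedEmbedding j) {c : Y}
    (hx : Tendsto x atTop (𝓝 c)) (h : ∀ n, JoinedWithin j univ (x n) (x (n + 1)) (ℓ n))
    (hℓ : ∑' n, ℓ n ≠ ∞) : JoinedWithin j univ (x 0) c (∑' n, ℓ n) := by
  choose p _ hp using h
  have hcau : ∀ t, CauchySeq fun n => j (concatUpTo p n t) := fun t =>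
    cauchySeq_of_edist_le_of_tsum_ne_top ℓ (fun n => edist_concatUpTo_le p hp n t) hℓ
  choose g hg using fun t => cauchySeq_tendsto_of_complete (hcau t)
  have htail : Tendsto (fun n => ∑' m, ℓ (n + m)) atTop (𝓝 0) := by
    simpa only [add_comm] using ENNReal.tendsto_sum_nat_add ℓ hℓ
  have hunif : TendstoUniformly (fun n t => j (concatUpTo p n t)) g atTop := by
    rw [EMetric.tendstoUniformly_iff]
    intro ε hε
    filter_upwards [htail.eventually_lt_const hε] with n hn t
    rw [edist_comm]
    exact (edist_le_tsum_of_edist_le_of_tendsto ℓ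
      (fun n => edist_concatUpTo_le p hp n t) (hg t) n).trans_lt hn
  have hgc : Continuous g := hunif.continuous
    (Frequently.of_forall fun n => hj.continuous.comp (continuous_concatUpTo p n))
  have hrange : ∀ t, g t ∈ range j := fun t =>
    hj.isClosed_range.mem_of_tendsto (hg t) (Eventually.of_forall fun n => mem_range_self _)
  choose f hf using hrange
  have hfc : Continuous f := by
    rw [hj.isEmbedding.continuous_iff]
    exact hgc.congr fun t => (hf t).symm
  have hf0 : f 0 = x 0 := by
    apply hj.injective
    rw [hf]
    refine tendsto_nhds_unique (hg 0) ?_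
    simp only [concatUpTo_zero, tendsto_const_nhds]
  have hf1 : f 1 = c := by
    apply hj.injective
    rw [hf]
    refine tendsto_nhds_unique (hg 1) ?_
    refine ((hj.continuous.tendsto c).comp hx).congr fun n => ?_
    rw [concatUpTo_of_ge p n, Function.comp_apply]
    have : (0 : ℝ) ≤ 1 / (n + 1 : ℝ) := by positivity
    linarith
  refine ⟨⟨⟨fun t => f t, hfc.comp continuous_subtype_val⟩, by simpa using hf0, by simpa using hf1⟩,
    fun _ => mem_univ _, ?_⟩
  have hle : eVariationOn (j ∘ f) univ ≤ ∑' n, ℓ n := by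
    by_contra! hlt
    obtain ⟨n, hn⟩ := (eVariationOn.lowerSemicontinuous_aux (F := fun n => j ∘ concatUpTo p n)
      (p := atTop) (fun t _ => by simpa [hf t] using hg t) hlt).exists
    exact absurd (hn.trans_le (eVariationOn_concatUpTo_le p hp n)) (ENNReal.sum_le_tsum _).not_gt
  refine le_trans ?_ hle
  exact eVariationOn.comp_le_of_monotoneOn (j ∘ f) (fun t : I => (t : ℝ))
    (fun a _ b _ hab => hab) (fun _ _ => mem_univ _)

end InfiniteConcatenation

section InducedLength

variable {Z M : Type*} [TopologicalSpace Z] [MetricSpace M]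

/-- The infimum of the lengths, measured through `j`, of the paths from `x` to `y`. -/
noncomputable def inducedLength (j : Z → M) (x y : Z) : ℝ≥0∞ :=
  ⨅ γ : Path x y, eVariationOn (j ∘ γ) univ

variable {j : Z → M}

theorem JoinedWithin.inducedLength_le {Ω : Set Z} {x y : Z} {ℓ : ℝ≥0∞}
    (h : JoinedWithin j Ω x y ℓ) : inducedLength j x y ≤ ℓ := by
  obtain ⟨γ, -, h⟩ := h
  exact (iInf_le _ γ).trans h

theorem joinedWithin_of_inducedLength_lt {x y : Z} {ℓ : ℝ≥0∞} (h : inducedLength j x y < ℓ) :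
    JoinedWithin j univ x y ℓ := by
  obtain ⟨γ, h⟩ := iInf_lt_iff.1 h
  exact ⟨γ, fun _ => mem_univ _, h.le⟩

theorem inducedLength_self (x : Z) : inducedLength j x x = 0 :=
  le_antisymm (JoinedWithin.refl (mem_univ x)).inducedLength_le bot_le

theorem inducedLength_comm (x y : Z) : inducedLength j x y = inducedLength j y x := by
  have : ∀ x y : Z, inducedLength j x y ≤ inducedLength j y x := fun x y =>
    le_of_forall_gt fun ℓ h => by
      obtain ⟨γ, hγ⟩ := iInf_lt_iff.1 h
      exact (JoinedWithin.symm ⟨γ, fun _ => mem_univ _, le_rfl⟩ :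
        JoinedWithin j univ x y _).inducedLength_le.trans_lt hγ
  exact le_antisymm (this x y) (this y x)

theorem inducedLength_triangle (x y z : Z) :
    inducedLength j x z ≤ inducedLength j x y + inducedLength j y z := by
  conv_rhs => simp only [inducedLength, ENNReal.iInf_add, ENNReal.add_iInf]
  refine le_iInf fun γ' => le_iInf fun γ => ?_
  exact (JoinedWithin.trans (Ω := univ) ⟨γ, fun _ => mem_univ _, le_rfl⟩
    ⟨γ', fun _ => mem_univ _, le_rfl⟩).inducedLength_le

theorem edist_le_inducedLength (x y : Z) : edist (j x) (j y) ≤ inducedLength j x y :=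
  le_iInf fun γ => JoinedWithin.edist_le (Ω := univ) ⟨γ, fun _ => mem_univ _, le_rfl⟩

theorem sum_eVariationOn_Icc_le {α : Type*} [LinearOrder α] (f : α → M) {u : ℕ → α}
    (hu : Monotone u) (n : ℕ) :
    ∑ i ∈ Finset.range n, eVariationOn f (Icc (u i) (u (i + 1))) ≤
      eVariationOn f (Icc (u 0) (u n)) := by
  induction n with
  | zero => simp
  | succ n ih =>
    rw [Finset.sum_range_succ]
    have := eVariationOn.Icc_add_Icc f (s := univ) (hu n.zero_le) (hu n.le_succ) (mem_univ _)
    simp only [univ_inter] at this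
    rw [← this]
    gcongr

end InducedLength

/-- If all points of a compact space are joined by paths of finite length, measured through an
injective map, and nearby points by short paths, then the induced length metric
metrises the space. -/
theorem exists_length_metric {Z : Type} {M : Type*} [TopologicalSpace Z] [CompactSpace Z]
    [MetricSpace M] {j : Z → M} (hj : Function.Injective j)
    (hfin : ∀ x y, inducedLength j x y ≠ ∞)
    (hloc : ∀ x, ∀ η > 0, ∀ᶠ y in 𝓝 x, inducedLength j x y < η) :
    ∃ m : MetricSpace Z, m.toPseudoMetricSpace.toUniformSpace.toTopologicalSpace = ‹_› ∧
      (letI := m; IsLengthSpace Z ∧ ∀ x y : Z, edist x y = inducedLength j x y) := by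
  let e : EMetricSpace Z :=
    { edist := inducedLength j
      edist_self := inducedLength_self
      edist_comm := inducedLength_comm
      edist_triangle := inducedLength_triangle
      eq_of_edist_eq_zero := fun {x y} h => hj (edist_le_zero.1
        ((edist_le_inducedLength x y).trans h.le)) }
  let m₀ : MetricSpace Z := @EMetricSpace.toMetricSpace Z e hfin
  have htop : (‹_› : TopologicalSpace Z) =
      m₀.toPseudoMetricSpace.toUniformSpace.toTopologicalSpace := by
    have hc : @Continuous Z Z _ m₀.toPseudoMetricSpace.toUniformSpace.toTopologicalSpace id := by
      rw [@continuous_iff_continuousAt]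
      intro x
      refine (@EMetric.tendsto_nhds Z Z m₀.toPseudoMetricSpace.toPseudoEMetricSpace _ _ _).2
        fun η hη => ?_
      filter_upwards [hloc x η hη] with y hy
      rw [@edist_comm]
      exact hy
    refine le_antisymm (continuous_id_iff_le.1 hc) fun s hs => ?_
    have h1 : IsCompact sᶜ := (isClosed_compl_iff.2 hs).isCompact
    have h2 := @IsCompact.isClosed Z m₀.toPseudoMetricSpace.toUniformSpace.toTopologicalSpace
      inferInstance _ (@IsCompact.image Z Z _
        m₀.toPseudoMetricSpace.toUniformSpace.toTopologicalSpace _ _ h1 hc)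
    rw [image_id] at h2
    exact (@isClosed_compl_iff Z m₀.toPseudoMetricSpace.toUniformSpace.toTopologicalSpace s).1 h2
  let m : MetricSpace Z := m₀.replaceTopology htop
  have hm : ∀ x y : Z, @edist Z m.toPseudoMetricSpace.toPseudoEMetricSpace.toEDist x y
    = inducedLength j x y := fun x y => rfl
  refine ⟨m, rfl, ?_⟩
  let := m
  refine ⟨fun x y => le_antisymm (le_iInf fun γ => ?_) ?_, hm⟩
  · have := eVariationOn.edist_le γ (mem_univ (0 : I)) (mem_univ (1 : I))
    rw [γ.source, γ.target] at this
    exact this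
  · rw [hm]
    refine iInf_mono fun γ => iSup_le fun p => ?_
    calc ∑ i ∈ Finset.range p.1, edist (γ (p.2.1 (i + 1))) (γ (p.2.1 i))
        ≤ ∑ i ∈ Finset.range p.1, eVariationOn (j ∘ γ) (Icc (p.2.1 i) (p.2.1 (i + 1))) := by
          refine Finset.sum_le_sum fun i _ => ?_
          rw [edist_comm, hm]
          exact (JoinedWithin.of_subpath j γ (p.2.2.1 i.le_succ)).inducedLength_le
      _ ≤ _ := sum_eVariationOn_Icc_le _ p.2.2.1 _
      _ ≤ _ := eVariationOn.mono _ (subset_univ _)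

/-! ### Length spaces and their wedge sums -/

/-- Any two points are joined by paths of length arbitrarily close to their distance. -/
def HasShortPaths (X : Type*) [MetricSpace X] : Prop :=
  ∀ (x y : X) (ℓ : ℝ), dist x y < ℓ → JoinedWithin id univ x y (ENNReal.ofReal ℓ)

theorem IsLengthSpace.hasShortPaths {S : Type} [MetricSpace S] (h : IsLengthSpace S) :
    HasShortPaths S := by
  intro x y ℓ hℓ
  apply joinedWithin_of_inducedLength_lt
  have h1 : edist x y < ENNReal.ofReal ℓ := by
    rw [edist_dist]
    exact (ENNReal.ofReal_lt_ofReal_iff_of_nonneg dist_nonneg).2 hℓ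
  rwa [h x y] at h1

theorem HasShortPaths.map_isometry {S X : Type*} [MetricSpace S] [MetricSpace X]
    (h : HasShortPaths S) {i : S → X} (hi : Isometry i) {x y : S} {ℓ : ℝ} (hℓ : dist x y < ℓ) :
    JoinedWithin id univ (i x) (i y) (ENNReal.ofReal ℓ) := by
  have := (h x y ℓ hℓ).map (j' := id) (g := i) (K := 1) hi.continuous.continuousOn
    (fun u _ v _ => by simp [hi u v])
  rw [one_mul] at this
  exact this.mono (subset_univ _) le_rfl

theorem hasShortPaths_wedge {S₁ S₂ X : Type*} [MetricSpace S₁] [MetricSpace S₂] [MetricSpace X]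
    (hS₁ : HasShortPaths S₁) (hS₂ : HasShortPaths S₂) {p₁ : S₁} {p₂ : S₂}
    {i₁ : S₁ → X} {i₂ : S₂ → X} (h₁ : Isometry i₁) (h₂ : Isometry i₂)
    (hwp : i₁ p₁ = i₂ p₂) (hcover : Set.range i₁ ∪ Set.range i₂ = Set.univ)
    (hcross : ∀ (x : S₁) (y : S₂), dist (i₁ x) (i₂ y) = dist x p₁ + dist p₂ y) :
    HasShortPaths X := by
  have key : ∀ (x : S₁) (y : S₂) (ℓ : ℝ), dist (i₁ x) (i₂ y) < ℓ →
      JoinedWithin id univ (i₁ x) (i₂ y) (ENNReal.ofReal ℓ) := by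
    intro x y ℓ hℓ
    rw [hcross] at hℓ
    set η := (ℓ - (dist x p₁ + dist p₂ y)) / 2 with hη
    have h3 := (hS₁.map_isometry h₁ (x := x) (y := p₁) (ℓ := dist x p₁ + η) (by linarith))
    have h4 := (hS₂.map_isometry h₂ (x := p₂) (y := y) (ℓ := dist p₂ y + η) (by linarith))
    rw [hwp] at h3
    have h5 := h3.trans h4
    rw [← ENNReal.ofReal_add (by have := dist_nonneg (x := x) (y := p₁); linarith)
      (by have := dist_nonneg (x := p₂) (y := y); linarith)] at h5
    exact h5.mono le_rfl (ENNReal.ofReal_le_ofReal (by linarith))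
  intro x y ℓ hℓ
  have hx : x ∈ range i₁ ∪ range i₂ := hcover ▸ mem_univ x
  have hy : y ∈ range i₁ ∪ range i₂ := hcover ▸ mem_univ y
  rcases hx with ⟨x, rfl⟩ | ⟨x, rfl⟩ <;> rcases hy with ⟨y, rfl⟩ | ⟨y, rfl⟩
  · exact hS₁.map_isometry h₁ (by rwa [h₁.dist_eq] at hℓ)
  · exact key x y ℓ hℓ
  · exact (key y x ℓ (by rwa [dist_comm])).symm
  · exact hS₂.map_isometry h₂ (by rwa [h₂.dist_eq] at hℓ)

/-! ### Cell systems accumulating at a point -/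

/-- A family of compact connected cells `Q i`, with open neighbourhoods `U i`, accumulating at a
point `w`, coloured so that cells of the same colour are separated, together with values `z i`
varying slowly, at scale `e i`, from one cell to its neighbours. -/
structure CellSystem {X : Type*} [MetricSpace X] (w : X) (ι : Type*) where
  Q : ι → Set X
  U : ι → Set X
  col : ι → ℕ
  z : ι → ℂ
  e : ι → ℝ
  adj : ι → Finset ι
  N : ℕ
  K : ℝ
  isCompact_Q : ∀ i, IsCompact (Q i)
  isConnected_Q : ∀ i, IsConnected (Q i)
  Q_subset : ∀ i, Q i ⊆ U i
  isOpen_U : ∀ i, IsOpen (U i)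
  notMem_U : ∀ i, w ∉ U i
  col_lt : ∀ i, col i < 4
  eq_of_col : ∀ i j x, col i = col j → x ∈ U i → x ∈ U j → i = j
  mem_adj : ∀ i j x, x ∈ U i → x ∈ U j → j ∈ adj i
  card_adj : ∀ i, (adj i).card ≤ N
  e_pos : ∀ i, 0 < e i
  one_le_K : 1 ≤ K
  z_le : ∀ i j x, x ∈ U i → x ∈ U j → ‖z j - z i‖ ≤ K * e i
  e_le : ∀ i j x, x ∈ U i → x ∈ U j → e j ≤ K * e i
  finite_far : ∀ r > 0, {i | ¬ U i ⊆ ball w r}.Finite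
  covered : ∀ j, U j ⊆ (⋃ i, Q i) ∨ ‖z j‖ ≤ K * e j

theorem HasShortPaths.joinedWithin_ball {X : Type*} [MetricSpace X] (hX : HasShortPaths X)
    {x y : X} {r : ℝ} (h : dist x y < r) : JoinedWithin id (ball x r) x y (ENNReal.ofReal r) := by
  obtain ⟨r', h1, h2⟩ := exists_between h
  obtain ⟨γ, -, hγ⟩ := hX x y r' h1
  refine ⟨γ, fun t => ?_, hγ.trans (ENNReal.ofReal_le_ofReal h2.le)⟩
  have h3 := eVariationOn.edist_le (id ∘ γ) (mem_univ (0 : I)) (mem_univ t)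
  simp only [Function.comp_apply, id, γ.source] at h3
  rw [mem_ball, dist_comm]
  have h4 := (h3.trans hγ).trans_lt ((ENNReal.ofReal_lt_ofReal_iff
    (dist_nonneg.trans_lt h)).2 h2)
  rwa [edist_dist, ENNReal.ofReal_lt_ofReal_iff (dist_nonneg.trans_lt h)] at h4

/-- In a length space, the points of a small neighbourhood of a connected compact set are joined
in this neighbourhood by paths of bounded length. -/
theorem HasShortPaths.exists_thickening_joined {X : Type*} [MetricSpace X] (hX : HasShortPaths X)
    {Q U : Set X} (hQ : IsCompact Q) (hQc : IsConnected Q) (hU : IsOpen U) (hQU : Q ⊆ U) :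
    ∃ r > 0, ∃ L : ℝ, 0 ≤ L ∧ thickening (2 * r) Q ⊆ U ∧ ∀ x ∈ thickening r Q,
      ∀ y ∈ thickening r Q, JoinedWithin id (thickening r Q) x y (ENNReal.ofReal L) := by
  obtain ⟨r', hr', hrU⟩ := hQ.exists_thickening_subset_open hU hQU
  set r := r' / 2 with hr
  have hr0 : 0 < r := by positivity
  have hstep : ∀ q ∈ Q, ∀ y, dist q y < r →
      JoinedWithin id (thickening r Q) q y (ENNReal.ofReal r) := fun q hq y hy =>
    (hX.joinedWithin_ball hy).mono (ball_subset_thickening hq r) le_rfl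
  obtain ⟨q₀, hq₀⟩ := hQc.nonempty
  have hfin : ∀ q ∈ Q, ∃ L : ℝ≥0∞, L ≠ ∞ ∧ JoinedWithin id (thickening r Q) q₀ q L := by
    intro q hq
    refine hQc.isPreconnected.induction₂
      (fun q q' => ∃ L : ℝ≥0∞, L ≠ ∞ ∧ JoinedWithin id (thickening r Q) q q' L) ?_ ?_ ?_ hq₀ hq
    · intro x hx
      filter_upwards [mem_nhdsWithin_of_mem_nhds (ball_mem_nhds x hr0)] with y hy
      have := hstep x hx y (by rwa [dist_comm])
      exact ⟨_, ENNReal.ofReal_ne_top, this⟩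
    · rintro x y z - - - ⟨L, hL, h⟩ ⟨L', hL', h'⟩
      exact ⟨L + L', ENNReal.add_ne_top.2 ⟨hL, hL'⟩, h.trans h'⟩
    · rintro x y - - ⟨L, hL, h⟩
      exact ⟨L, hL, h.symm⟩
  obtain ⟨L, hL, hjoin⟩ : ∃ L : ℝ≥0∞, L ≠ ∞ ∧
      ∀ q ∈ Q, JoinedWithin id (thickening r Q) q₀ q L := by
    refine hQ.induction_on (p := fun s => ∃ L : ℝ≥0∞, L ≠ ∞ ∧
      ∀ q ∈ s, JoinedWithin id (thickening r Q) q₀ q L) ⟨0, by simp⟩ ?_ ?_ ?_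
    · rintro s t hst ⟨L, hL, h⟩
      exact ⟨L, hL, fun q hq => h q (hst hq)⟩
    · rintro s t ⟨L, hL, h⟩ ⟨L', hL', h'⟩
      refine ⟨L + L', ENNReal.add_ne_top.2 ⟨hL, hL'⟩, ?_⟩
      rintro q (hq | hq)
      · exact (h q hq).mono le_rfl le_self_add
      · exact (h' q hq).mono le_rfl le_add_self
    · intro q hq
      obtain ⟨L, hL, h⟩ := hfin q hq
      exact ⟨ball q r, mem_nhdsWithin_of_mem_nhds (ball_mem_nhds q hr0), L + ENNReal.ofReal r,
        ENNReal.add_ne_top.2 ⟨hL, ENNReal.ofReal_ne_top⟩, fun y hy =>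
          h.trans (hstep q hq y (by rwa [dist_comm]))⟩
  have hjoin' : ∀ x ∈ thickening r Q,
      JoinedWithin id (thickening r Q) q₀ x (L + ENNReal.ofReal r) := by
    intro x hx
    obtain ⟨q, hq, hqx⟩ := mem_thickening_iff.1 hx
    exact (hjoin q hq).trans (hstep q hq x (by rwa [dist_comm]))
  have htop : L + ENNReal.ofReal r + (L + ENNReal.ofReal r) ≠ ∞ := by
    simp [hL]
  refine ⟨r, hr0, (L + ENNReal.ofReal r + (L + ENNReal.ofReal r)).toReal,
    ENNReal.toReal_nonneg, ?_, fun x hx y hy => ?_⟩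
  · rwa [hr, mul_div_cancel₀ _ two_ne_zero]
  · rw [ENNReal.ofReal_toReal htop]
    exact (hjoin' x hx).symm.trans (hjoin' y hy)

/-- Auxiliary data attached to a cell system: slightly enlarged cells `V i` and a scale
function `s`, small on each cell and vanishing only at the accumulation point. -/
structure CellSystem.Refinement {X : Type*} [MetricSpace X] {w : X} {ι : Type*}
    (S : CellSystem w ι) where
  V : ι → Set X
  κ : ι → ℝ
  len : ι → ℝ
  s : X → ℝ
  Q_subset_V : ∀ i, S.Q i ⊆ V i
  V_subset_U : ∀ i, V i ⊆ S.U i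
  joined : ∀ i, ∀ x ∈ V i, ∀ y ∈ V i, JoinedWithin id (V i) x y (ENNReal.ofReal (len i))
  κ_pos : ∀ i, 0 < κ i
  κ_le_one : ∀ i, κ i ≤ 1
  κ_le_e : ∀ i, κ i ≤ S.e i
  κ_mul_len_le : ∀ i, κ i * len i ≤ S.e i
  s_lip : ∀ x y, |s x - s y| ≤ dist x y / 10
  s_center : s w = 0
  s_pos : ∀ x, x ≠ w → 0 < s x
  s_le : ∀ i, ∀ x ∈ S.U i, 10 * s x ≤ κ i
  le_infDist : ∀ i x, x ∉ S.U i → 10 * s x ≤ infDist x (V i)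

theorem CellSystem.nonempty_refinement {X : Type*} [MetricSpace X] {w : X} {ι : Type*}
    [Nonempty ι] (S : CellSystem w ι) (hX : HasShortPaths X) : Nonempty S.Refinement := by
  choose r hr0 L hL0 hrU hL using fun i =>
    hX.exists_thickening_joined (S.isCompact_Q i) (S.isConnected_Q i) (S.isOpen_U i) (S.Q_subset i)
  have hVU : ∀ i, thickening (r i) (S.Q i) ⊆ S.U i := fun i =>
    (thickening_mono (by linarith [hr0 i]) _).trans (hrU i)
  have hVne : ∀ i, (thickening (r i) (S.Q i)).Nonempty := fun i =>
    (S.isConnected_Q i).nonempty.mono (self_subset_thickening (hr0 i) _)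
  have hUne : ∀ i, (S.U i).Nonempty := fun i => (hVne i).mono (hVU i)
  set κ : ι → ℝ := fun i => min (min (r i) 1) (min (S.e i) (S.e i / (L i + 1))) with hκ
  have hκ0 : ∀ i, 0 < κ i := fun i => by
    have := S.e_pos i
    have := hL0 i
    have := hr0 i
    simp only [hκ, lt_min_iff]
    refine ⟨⟨by assumption, one_pos⟩, by assumption, by positivity⟩
  have hκr : ∀ i, κ i ≤ r i := fun i => (min_le_left _ _).trans (min_le_left _ _)
  have hκL : ∀ i, κ i * (L i + 1) ≤ S.e i := fun i => by
    have := hL0 i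
    rw [← le_div_iff₀ (by positivity)]
    exact (min_le_right _ _).trans (min_le_right _ _)
  set h : ι → X → ℝ := fun i x => max (κ i) (infDist x (S.U i)) with hh
  have hh0 : ∀ i x, 0 ≤ h i x := fun i x => (hκ0 i).le.trans (le_max_left _ _)
  have hbdd : ∀ x, BddBelow (range fun i => h i x) := fun x => ⟨0, by
    rintro _ ⟨i, rfl⟩; exact hh0 i x⟩
  have hlip : ∀ i x y, h i x ≤ h i y + dist x y := fun i x y => by
    refine max_le ((le_max_left _ _).trans (le_add_of_nonneg_right dist_nonneg)) ?_
    exact infDist_le_infDist_add_dist.trans (by gcongr; exact le_max_right _ _)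
  set m : X → ℝ := fun x => min (dist x w) (⨅ i, h i x) with hm
  have hmlip : ∀ x y, m x ≤ m y + dist x y := fun x y => by
    rw [hm, ← min_add_add_right]
    refine min_le_min ?_ ?_
    · linarith [dist_triangle x y w]
    · rw [← sub_le_iff_le_add]
      refine le_ciInf fun i => ?_
      linarith [ciInf_le (hbdd x) i, hlip i x y]
  have hm_le : ∀ i x, m x ≤ h i x := fun i x => (min_le_right _ _).trans (ciInf_le (hbdd x) i)
  refine ⟨{
    V := fun i => thickening (r i) (S.Q i)
    κ := κ
    len := L
    s := fun x => m x / 10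
    Q_subset_V := fun i => self_subset_thickening (hr0 i) _
    V_subset_U := hVU
    joined := hL
    κ_pos := hκ0
    κ_le_one := fun i => (min_le_left _ _).trans (min_le_right _ _)
    κ_le_e := fun i => (min_le_right _ _).trans (min_le_left _ _)
    κ_mul_len_le := fun i => by linarith [hκL i, hκ0 i]
    s_lip := fun x y => ?_
    s_center := ?_
    s_pos := fun x hx => ?_
    s_le := fun i x hx => ?_
    le_infDist := fun i x hx => ?_ }⟩
  · rw [← sub_div, abs_div, abs_of_pos (by norm_num : (0 : ℝ) < 10)]
    gcongr
    rw [abs_sub_le_iff]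
    constructor
    · linarith [hmlip x y]
    · linarith [hmlip y x, dist_comm x y]
  · have h0 : m w = 0 := by
      rw [hm]
      simp only [dist_self]
      exact min_eq_left (Real.iInf_nonneg fun i => hh0 i w)
    simp [h0]
  · have hd : 0 < dist x w := dist_pos.2 hx
    have hfin := S.finite_far (dist x w / 2) (by positivity)
    obtain ⟨c, hc0, hc⟩ : ∃ c > 0, ∀ i ∈ {i | ¬ S.U i ⊆ ball w (dist x w / 2)}, c ≤ κ i := by
      rcases hfin.toFinset.eq_empty_or_nonempty with he | hne
      · refine ⟨1, one_pos, fun i hi => ?_⟩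
        have : i ∈ hfin.toFinset := by simpa using hi
        rw [he] at this
        simp at this
      · obtain ⟨i, -, hi⟩ := hfin.toFinset.exists_min_image κ hne
        exact ⟨κ i, hκ0 i, fun i' hi' => hi i' (by simpa using hi')⟩
    have : min c (dist x w / 2) ≤ ⨅ i, h i x := by
      refine le_ciInf fun i => ?_
      by_cases hi : S.U i ⊆ ball w (dist x w / 2)
      · refine (min_le_right _ _).trans (le_max_of_le_right ?_)
        refine (le_infDist (hUne i)).2 fun u hu => ?_
        have := mem_ball.1 (hi hu)
        linarith [dist_triangle x u w]
      · exact (min_le_left _ _).trans (le_max_of_le_left (hc i hi))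
    have h2 : 0 < ⨅ i, h i x := (lt_min hc0 (by positivity)).trans_le this
    have h3 : 0 < m x := lt_min hd h2
    positivity
  · have := hm_le i x
    rw [hh] at this
    simp only [infDist_zero_of_mem hx, max_eq_left (hκ0 i).le] at this
    linarith
  · have h1 := hm_le i x
    have h2 : infDist x (S.U i) ≤ infDist x (thickening (r i) (S.Q i)) :=
      infDist_le_infDist_of_subset (hVU i) (hVne i)
    have h3 : κ i ≤ infDist x (thickening (r i) (S.Q i)) := by
      refine (hκr i).trans ((le_infDist (hVne i)).2 fun v hv => ?_)
      by_contra! hlt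
      obtain ⟨q, hq, hvq⟩ := mem_thickening_iff.1 hv
      refine hx (hrU i (mem_thickening_iff.2 ⟨q, hq, ?_⟩))
      linarith [dist_triangle x v q]
    have : h i x ≤ infDist x (thickening (r i) (S.Q i)) := max_le h3 h2
    linarith

namespace CellSystem.Refinement

variable {X : Type*} [MetricSpace X] {w : X} {ι : Type*} {S : CellSystem w ι} (R : S.Refinement)

/-- The cut-off function of the cell `i`. -/
noncomputable def cutoff (i : ι) (x : X) : ℝ := max 0 (min 1 (2 - infDist x (R.V i) / R.s x))

theorem V_nonempty (i : ι) : (R.V i).Nonempty :=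
  (S.isConnected_Q i).nonempty.mono (R.Q_subset_V i)

theorem s_nonneg (x : X) : 0 ≤ R.s x := by
  by_cases h : x = w
  · rw [h, R.s_center]
  · exact (R.s_pos x h).le

theorem ne_center {i : ι} {x : X} (h : x ∈ S.U i) : x ≠ w := fun h' => S.notMem_U i (h' ▸ h)

theorem continuous_s : Continuous R.s := by
  refine (LipschitzWith.of_dist_le_mul (K := 1) fun x y => ?_).continuous
  rw [Real.dist_eq, NNReal.coe_one, one_mul]
  linarith [R.s_lip x y, dist_nonneg (x := x) (y := y)]

theorem mem_U_of_infDist_lt {i : ι} {x : X} (h : infDist x (R.V i) < 10 * R.s x) : x ∈ S.U i := by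
  by_contra hx
  exact (R.le_infDist i x hx).not_gt h

theorem cutoff_nonneg (i : ι) (x : X) : 0 ≤ R.cutoff i x := le_max_left _ _

theorem cutoff_le_one (i : ι) (x : X) : R.cutoff i x ≤ 1 := max_le zero_le_one (min_le_left _ _)

theorem cutoff_eq_zero {i : ι} {x : X} (hx : x ≠ w) (h : 2 * R.s x ≤ infDist x (R.V i)) :
    R.cutoff i x = 0 := by
  have := (le_div_iff₀ (R.s_pos x hx)).2 h
  exact max_eq_left ((min_le_right _ _).trans (by linarith))

theorem cutoff_eq_zero_of_notMem {i : ι} {x : X} (hx : x ≠ w) (h : x ∉ S.U i) :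
    R.cutoff i x = 0 :=
  R.cutoff_eq_zero hx (by linarith [R.le_infDist i x h, R.s_nonneg x])

theorem cutoff_eq_one {i : ι} {x : X} (h : x ∈ R.V i) : R.cutoff i x = 1 := by
  simp [cutoff, infDist_zero_of_mem h]

theorem abs_cutoff_sub_le (i : ι) {x y : X} {s₀ : ℝ} (h₀ : 0 < s₀) (hx : s₀ ≤ R.s x)
    (hy : s₀ ≤ R.s y) : |R.cutoff i x - R.cutoff i y| ≤ 2 * dist x y / s₀ := by
  wlog h : infDist y (R.V i) / R.s y ≤ 2 generalizing x y
  · by_cases h' : infDist x (R.V i) / R.s x ≤ 2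
    · rw [abs_sub_comm, dist_comm]
      exact this hy hx h'
    · have e1 : R.cutoff i x = 0 := max_eq_left ((min_le_right _ _).trans (by linarith))
      have e2 : R.cutoff i y = 0 := max_eq_left ((min_le_right _ _).trans (by linarith))
      rw [e1, e2]
      simp only [sub_self, abs_zero]
      positivity
  have hsx := h₀.trans_le hx
  have hsy := h₀.trans_le hy
  have h1 : |R.cutoff i x - R.cutoff i y| ≤
      |infDist x (R.V i) / R.s x - infDist y (R.V i) / R.s y| := by
    refine (abs_max_sub_max_le_max (0 : ℝ) _ 0 _).trans ?_
    rw [sub_self, abs_zero, max_eq_right (abs_nonneg _)]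
    refine (abs_min_sub_min_le_max (1 : ℝ) _ 1 _).trans ?_
    rw [sub_self, abs_zero, max_eq_right (abs_nonneg _), abs_sub_comm]
    exact le_of_eq (by ring_nf)
  refine h1.trans ?_
  have h2 : infDist x (R.V i) / R.s x - infDist y (R.V i) / R.s y =
      ((infDist x (R.V i) - infDist y (R.V i)) +
        (infDist y (R.V i) / R.s y) * (R.s y - R.s x)) / R.s x := by
    field_simp
    ring
  rw [h2, abs_div, abs_of_pos hsx]
  have h3 : |infDist x (R.V i) - infDist y (R.V i)| ≤ dist x y := by
    rw [abs_sub_le_iff]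
    constructor
    · linarith [infDist_le_infDist_add_dist (s := R.V i) (x := x) (y := y)]
    · linarith [infDist_le_infDist_add_dist (s := R.V i) (x := y) (y := x), dist_comm x y]
  have h4 : |(infDist y (R.V i) / R.s y) * (R.s y - R.s x)| ≤ 2 * (dist x y / 10) := by
    rw [abs_mul, abs_sub_comm]
    gcongr
    · rwa [abs_of_nonneg (by have := infDist_nonneg (x := y) (s := R.V i); positivity)]
    · exact R.s_lip x y
  calc _ ≤ (dist x y + 2 * (dist x y / 10)) / R.s x := by
        gcongr
        exact (abs_add_le _ _).trans (add_le_add h3 h4)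
    _ ≤ 2 * dist x y / s₀ := by
        have := dist_nonneg (x := x) (y := y)
        gcongr
        linarith

open Classical in
/-- Move the value `v` towards the value prescribed by the cell of colour `c` containing `x`. -/
noncomputable def overwrite (c : ℕ) (x : X) (v : ℂ) : ℂ :=
  if h : ∃ i, S.col i = c ∧ x ∈ S.U i then v + R.cutoff h.choose x • (S.z h.choose - v) else v

theorem overwrite_of_mem {c : ℕ} {i : ι} {x : X} (hc : S.col i = c) (hx : x ∈ S.U i) (v : ℂ) :
    R.overwrite c x v = v + R.cutoff i x • (S.z i - v) := by
  have h : ∃ i, S.col i = c ∧ x ∈ S.U i := ⟨i, hc, hx⟩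
  have hi : h.choose = i :=
    S.eq_of_col _ _ x (h.choose_spec.1.trans hc.symm) h.choose_spec.2 hx
  rw [overwrite, dif_pos h, hi]

theorem overwrite_of_forall {c : ℕ} {x : X} (h : ∀ i, S.col i = c → x ∈ S.U i → R.cutoff i x = 0)
    (v : ℂ) : R.overwrite c x v = v := by
  by_cases hx : ∃ i, S.col i = c ∧ x ∈ S.U i
  · obtain ⟨i, hc, hi⟩ := hx
    rw [R.overwrite_of_mem hc hi, h i hc hi, zero_smul, add_zero]
  · rw [overwrite, dif_neg hx]

/-- Successive overwriting by the cells of colours less than `n`. -/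
noncomputable def paint (b : ℂ) (x : X) : ℕ → ℂ
  | 0 => b
  | n + 1 => R.overwrite n x (paint b x n)

theorem paint_eq {i : ι} {x : X} (hi : R.cutoff i x = 1) (hx : x ∈ S.U i)
    (h : ∀ j, S.col i < S.col j → x ∈ S.U j → R.cutoff j x = 0) (b : ℂ) {n : ℕ}
    (hn : S.col i < n) : R.paint b x n = S.z i := by
  induction n with
  | zero => omega
  | succ n ih =>
    rcases (Nat.lt_succ_iff.1 hn).eq_or_lt with hc | hc
    · simp [paint, R.overwrite_of_mem hc hx, hi]
    · rw [paint, R.overwrite_of_forall (fun j hj => h j (hj ▸ hc)), ih hc]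

theorem paint_congr {i : ι} {x : X} (hi : R.cutoff i x = 1) (hx : x ∈ S.U i) (b b' : ℂ) {n : ℕ}
    (hn : S.col i < n) : R.paint b x n = R.paint b' x n := by
  induction n with
  | zero => omega
  | succ n ih =>
    rcases (Nat.lt_succ_iff.1 hn).eq_or_lt with hc | hc
    · simp [paint, R.overwrite_of_mem hc hx, hi]
    · rw [paint, paint, ih hc]

theorem norm_paint_sub_le {b v₀ : ℂ} {r : ℝ} {x : X} (hb : ‖b - v₀‖ ≤ r)
    (h : ∀ i, x ∈ S.U i → ‖S.z i - v₀‖ ≤ r) (n : ℕ) : ‖R.paint b x n - v₀‖ ≤ r := by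
  induction n with
  | zero => exact hb
  | succ n ih =>
    by_cases hx : ∃ i, S.col i = n ∧ x ∈ S.U i
    · obtain ⟨i, hc, hi⟩ := hx
      rw [paint, R.overwrite_of_mem hc hi]
      set v := R.paint b x n
      set p := R.cutoff i x
      have hp0 : 0 ≤ p := R.cutoff_nonneg i x
      have hp1 : p ≤ 1 := R.cutoff_le_one i x
      have : v + p • (S.z i - v) - v₀ = (1 - p) • (v - v₀) + p • (S.z i - v₀) := by
        simp only [smul_sub, sub_smul, one_smul]; abel
      rw [this]
      refine (norm_add_le _ _).trans ?_
      rw [norm_smul, norm_smul, Real.norm_of_nonneg hp0, Real.norm_of_nonneg (sub_nonneg.2 hp1)]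
      nlinarith [h i hi]
    · rw [paint, overwrite, dif_neg hx]
      exact ih

theorem norm_overwrite_sub_le {v₀ v v' : ℂ} {r s₀ : ℝ} {x y : X} (h₀ : 0 < s₀) (hxw : x ≠ w)
    (hyw : y ≠ w) (hx : s₀ ≤ R.s x) (hy : s₀ ≤ R.s y) (hv : ‖v - v₀‖ ≤ r)
    (hzx : ∀ i, x ∈ S.U i → ‖S.z i - v₀‖ ≤ r) (hzy : ∀ i, y ∈ S.U i → ‖S.z i - v₀‖ ≤ r) (c : ℕ) :
    ‖R.overwrite c x v - R.overwrite c y v'‖ ≤ ‖v - v'‖ + 8 * r * dist x y / s₀ := by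
  have hr : 0 ≤ r := (norm_nonneg _).trans hv
  have hd : 0 ≤ 4 * r * dist x y / s₀ := by positivity
  have hterm : ∀ i, ‖S.z i - v₀‖ ≤ r →
      ‖(R.cutoff i x - R.cutoff i y) • (S.z i - v)‖ ≤ 4 * r * dist x y / s₀ := by
    intro i hi
    rw [norm_smul, Real.norm_eq_abs]
    have h1 : ‖S.z i - v‖ ≤ 2 * r := by
      have : S.z i - v = (S.z i - v₀) - (v - v₀) := by abel
      rw [this]
      linarith [norm_sub_le (S.z i - v₀) (v - v₀)]
    calc _ ≤ (2 * dist x y / s₀) * (2 * r) := by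
          gcongr
          exact R.abs_cutoff_sub_le i h₀ hx hy
      _ = _ := by ring
  have hcontr : ∀ i, ‖(1 - R.cutoff i y) • (v - v')‖ ≤ ‖v - v'‖ := by
    intro i
    rw [norm_smul, Real.norm_of_nonneg (sub_nonneg.2 (R.cutoff_le_one i y))]
    exact mul_le_of_le_one_left (norm_nonneg _) (by linarith [R.cutoff_nonneg i y])
  have height : 8 * r * dist x y / s₀ = 4 * r * dist x y / s₀ + 4 * r * dist x y / s₀ := by ring
  rw [height]
  have hy' : ∀ i, S.col i = c → y ∈ S.U i →
      ‖v - R.overwrite c y v'‖ ≤ ‖v - v'‖ + ‖R.cutoff i y • (S.z i - v)‖ := by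
    intro i hi hiy
    rw [R.overwrite_of_mem hi hiy]
    have : v - (v' + R.cutoff i y • (S.z i - v')) =
        (1 - R.cutoff i y) • (v - v') - R.cutoff i y • (S.z i - v) := by
      simp only [smul_sub, sub_smul, one_smul]; abel
    rw [this]
    exact (norm_sub_le _ _).trans (by gcongr; exact hcontr i)
  by_cases h1 : ∃ i, S.col i = c ∧ x ∈ S.U i
  · obtain ⟨i, hi, hix⟩ := h1
    by_cases hiy : y ∈ S.U i
    · rw [R.overwrite_of_mem hi hix, R.overwrite_of_mem hi hiy]
      have : v + R.cutoff i x • (S.z i - v) - (v' + R.cutoff i y • (S.z i - v')) =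
          (1 - R.cutoff i y) • (v - v') + (R.cutoff i x - R.cutoff i y) • (S.z i - v) := by
        simp only [smul_sub, sub_smul, one_smul]; abel
      rw [this]
      refine (norm_add_le _ _).trans ?_
      linarith [hcontr i, hterm i (hzx i hix)]
    · have e1 := hterm i (hzx i hix)
      rw [R.cutoff_eq_zero_of_notMem hyw hiy, sub_zero] at e1
      have e2 : ‖v - R.overwrite c y v'‖ ≤ ‖v - v'‖ + 4 * r * dist x y / s₀ := by
        by_cases h2 : ∃ i, S.col i = c ∧ y ∈ S.U i
        · obtain ⟨i', hi', hiy'⟩ := h2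
          have hix' : x ∉ S.U i' := fun h =>
            hiy (S.eq_of_col i i' x (hi.trans hi'.symm) hix h ▸ hiy')
          have e3 := hterm i' (hzy i' hiy')
          rw [R.cutoff_eq_zero_of_notMem hxw hix', zero_sub, neg_smul, norm_neg] at e3
          linarith [hy' i' hi' hiy']
        · rw [overwrite, dif_neg h2]
          linarith
      rw [R.overwrite_of_mem hi hix, add_sub_right_comm]
      refine (norm_add_le _ _).trans ?_
      linarith
  · have e0 : R.overwrite c x v = v := by rw [overwrite, dif_neg h1]
    rw [e0]
    by_cases h2 : ∃ i, S.col i = c ∧ y ∈ S.U i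
    · obtain ⟨i', hi', hiy'⟩ := h2
      have hix' : x ∉ S.U i' := fun h => h1 ⟨i', hi', h⟩
      have e3 := hterm i' (hzy i' hiy')
      rw [R.cutoff_eq_zero_of_notMem hxw hix', zero_sub, neg_smul, norm_neg] at e3
      linarith [hy' i' hi' hiy']
    · rw [overwrite, dif_neg h2]
      linarith

theorem norm_paint_sub_paint_le {b v₀ : ℂ} {r s₀ : ℝ} {x y : X} (h₀ : 0 < s₀) (hxw : x ≠ w)
    (hyw : y ≠ w) (hx : s₀ ≤ R.s x) (hy : s₀ ≤ R.s y) (hb : ‖b - v₀‖ ≤ r)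
    (hzx : ∀ i, x ∈ S.U i → ‖S.z i - v₀‖ ≤ r) (hzy : ∀ i, y ∈ S.U i → ‖S.z i - v₀‖ ≤ r) (n : ℕ) :
    ‖R.paint b x n - R.paint b y n‖ ≤ n * (8 * r * dist x y / s₀) := by
  induction n with
  | zero => simp [paint]
  | succ n ih =>
    rw [paint, paint]
    refine (R.norm_overwrite_sub_le h₀ hxw hyw hx hy (R.norm_paint_sub_le hb hzx n) hzx hzy
      n).trans ?_
    push_cast
    linarith

/-- The value painted by all the cells. -/
noncomputable def value (x : X) : ℂ := R.paint 0 x 4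

theorem value_eq {i : ι} {x : X} (hx : x ∈ R.V i)
    (h : ∀ j, S.col i < S.col j → x ∈ S.U j → R.cutoff j x = 0) : R.value x = S.z i :=
  R.paint_eq (R.cutoff_eq_one hx) (R.V_subset_U i hx) h 0 (S.col_lt i)

theorem norm_value_sub_le {i : ι} {x : X} (hx : x ∈ R.V i) :
    ‖R.value x - S.z i‖ ≤ S.K * S.e i := by
  have hxU := R.V_subset_U i hx
  rw [value, R.paint_congr (R.cutoff_eq_one hx) hxU 0 (S.z i) (S.col_lt i)]
  refine R.norm_paint_sub_le ?_ (fun j hj => S.z_le i j x hxU hj) 4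
  have := S.e_pos i
  have := S.one_le_K
  rw [sub_self, norm_zero]
  positivity

theorem exists_base (i : ι) :
    ∃ b, ‖b - S.z i‖ ≤ S.K * S.e i ∧ ∀ x ∈ S.U i, R.value x = R.paint b x 4 := by
  rcases S.covered i with h | h
  · refine ⟨S.z i, ?_, fun x hx => ?_⟩
    · have := S.e_pos i
      have := S.one_le_K
      rw [sub_self, norm_zero]
      positivity
    · obtain ⟨j, hj⟩ := mem_iUnion.1 (h hx)
      exact R.paint_congr (R.cutoff_eq_one (R.Q_subset_V j hj)) (S.Q_subset j hj) _ _ (S.col_lt j)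
  · exact ⟨0, by rwa [zero_sub, norm_neg], fun x _ => rfl⟩

theorem norm_value_sub_value_le {i : ι} {s₀ : ℝ} {x y : X} (h₀ : 0 < s₀) (hx : s₀ ≤ R.s x)
    (hy : s₀ ≤ R.s y) (hxi : x ∈ S.U i) (hyi : y ∈ S.U i) :
    ‖R.value x - R.value y‖ ≤ 32 * (S.K * S.e i) / s₀ * dist x y := by
  obtain ⟨b, hb, h⟩ := R.exists_base i
  rw [h x hxi, h y hyi]
  refine (R.norm_paint_sub_paint_le h₀ (ne_center hxi) (ne_center hyi) hx hy hb
    (fun j hj => S.z_le i j x hxi hj) (fun j hj => S.z_le i j y hyi hj) 4).trans (le_of_eq ?_)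
  push_cast
  ring

theorem value_locallyLipschitz {x : X} (hx : x ≠ w) :
    ∃ k, ∃ t ∈ 𝓝 x, LipschitzOnWith k R.value t := by
  have hd : 0 < dist x w := dist_pos.2 hx
  have hfin := S.finite_far (dist x w / 2) (by positivity)
  obtain ⟨r, hr⟩ := (hfin.image fun i => ‖S.z i‖).bddAbove
  have hfar : ∀ y ∈ ball x (dist x w / 2), y ≠ w ∧ ∀ i, y ∈ S.U i → ‖S.z i - 0‖ ≤ max r 0 := by
    intro y hy
    have h1 : dist x w / 2 < dist y w := by
      linarith [mem_ball'.1 hy, dist_triangle x y w]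
    refine ⟨dist_pos.1 (by linarith), fun i hi => ?_⟩
    rw [sub_zero]
    refine le_max_of_le_left (hr ⟨i, fun hsub => ?_, rfl⟩)
    exact (mem_ball.1 (hsub hi)).not_gt h1
  have hs := R.s_pos x hx
  have hnear : ∀ᶠ y in 𝓝 x, R.s x / 2 < R.s y :=
    R.continuous_s.continuousAt.eventually_const_lt (by linarith)
  refine ⟨Real.toNNReal (4 * (8 * max r 0 / (R.s x / 2))), _,
    inter_mem hnear (ball_mem_nhds x (half_pos hd)), ?_⟩
  refine LipschitzOnWith.of_dist_le_mul fun y hy y' hy' => ?_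
  rw [dist_eq_norm, Real.coe_toNNReal _ (by positivity)]
  refine (R.norm_paint_sub_paint_le (v₀ := 0) (half_pos hs) (hfar y hy.2).1 (hfar y' hy'.2).1
    (le_of_lt hy.1) (le_of_lt hy'.1) ?_ (hfar y hy.2).2 (hfar y' hy'.2).2 4).trans (le_of_eq ?_)
  · simp
  · push_cast
    ring

/-- A bump function around `x`, of radius and height controlled by the scale function. -/
noncomputable def bump (x : X) : C(X, ℝ) where
  toFun y := max 0 (R.s x - dist x y) ^ 2
  continuous_toFun := by fun_prop

theorem bump_self (x : X) : R.bump x x = R.s x ^ 2 := by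
  simp [bump, R.s_nonneg x]

theorem dist_bump_le [CompactSpace X] (x y : X) :
    dist (R.bump x) (R.bump y) ≤ 2 * (R.s x + R.s y) * dist x y := by
  have hx := R.s_nonneg x
  have hy := R.s_nonneg y
  rw [ContinuousMap.dist_le (by positivity)]
  intro u
  have h1 : ∀ x, max 0 (R.s x - dist x u) ≤ R.s x := fun x =>
    max_le (R.s_nonneg x) (by linarith [dist_nonneg (x := x) (y := u)])
  have h2 : |max 0 (R.s x - dist x u) - max 0 (R.s y - dist y u)| ≤ 2 * dist x y := by
    refine (abs_max_sub_max_le_max (0 : ℝ) _ 0 _).trans ?_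
    rw [sub_self, abs_zero, max_eq_right (abs_nonneg _)]
    have e : R.s x - dist x u - (R.s y - dist y u) = (R.s x - R.s y) - (dist x u - dist y u) := by
      ring
    rw [e]
    refine (abs_sub _ _).trans ?_
    linarith [R.s_lip x y, abs_dist_sub_le x y u, dist_nonneg (x := x) (y := y)]
  rw [Real.dist_eq]
  change |max 0 (R.s x - dist x u) ^ 2 - max 0 (R.s y - dist y u) ^ 2| ≤ _
  rw [sq_sub_sq, abs_mul, abs_of_nonneg (by positivity)]
  calc _ ≤ (R.s x + R.s y) * (2 * dist x y) := by
        gcongr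
        · exact h1 x
        · exact h1 y
    _ = _ := by ring

theorem bump_injective : Function.Injective R.bump := by
  have key : ∀ x y, R.bump x = R.bump y → x ≠ w → x ≠ y → R.s x < R.s y := by
    intro x y h hx hxy
    have h1 := congrArg (fun f : C(X, ℝ) => f x) h
    simp only [bump_self] at h1
    have h2 : R.bump y x = max 0 (R.s y - dist y x) ^ 2 := rfl
    rw [h2] at h1
    have hs := R.s_pos x hx
    have h3 := (sq_eq_sq₀ hs.le (le_max_left _ _)).1 h1
    have hd := dist_pos.2 hxy.symm
    rcases max_choice 0 (R.s y - dist y x) with h4 | h4 <;> rw [h4] at h3 <;> linarith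
  intro x y h
  by_contra hxy
  by_cases hx : x = w
  · have hy : y ≠ w := fun hy => hxy (hx.trans hy.symm)
    have := key y x h.symm hy (Ne.symm hxy)
    rw [hx, R.s_center] at this
    exact (R.s_nonneg y).not_gt this
  · have h1 := key x y h hx hxy
    by_cases hy : y = w
    · rw [hy, R.s_center] at h1
      exact (R.s_nonneg x).not_gt h1
    · exact lt_asymm h1 (key y x h.symm hy (Ne.symm hxy))

end CellSystem.Refinement

theorem JoinedWithin.of_dist_le {X M : Type*} [MetricSpace X] [PseudoMetricSpace M] {j : X → M}
    {Ω : Set X} {x y : X} {ℓ k : ℝ} (hk : 0 ≤ k)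
    (h : JoinedWithin id Ω x y (ENNReal.ofReal ℓ))
    (hj : ∀ u ∈ Ω, ∀ v ∈ Ω, dist (j u) (j v) ≤ k * dist u v) :
    JoinedWithin j Ω x y (ENNReal.ofReal (k * ℓ)) := by
  have := h.map (j' := j) (g := id) (K := ENNReal.ofReal k) continuousOn_id (fun u hu v hv => by
    simp only [id, edist_dist]
    rw [← ENNReal.ofReal_mul hk]
    exact ENNReal.ofReal_le_ofReal (hj u hu v hv))
  rwa [image_id, ← ENNReal.ofReal_mul hk] at this

namespace CellSystem.Refinement

variable {X : Type*} [MetricSpace X] [CompactSpace X] {w : X} {ι : Type*} {S : CellSystem w ι}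
  (R : S.Refinement)

/-- The painted value together with the bump function. -/
noncomputable def coord (x : X) : ℂ × C(X, ℝ) := (R.value x, R.bump x)

theorem exists_hop (hX : HasShortPaths X) {i : ι} {p : X} (hp : p ≠ w)
    (h : infDist p (R.V i) ≤ 2 * R.s p) :
    ∃ v ∈ R.V i, JoinedWithin R.coord (⋃ i, S.U i) p v (ENNReal.ofReal (150 * S.K * S.e i)) := by
  have hs := R.s_pos p hp
  obtain ⟨v, hv, hpv⟩ := (infDist_lt_iff (R.V_nonempty i)).1
    (h.trans_lt (by linarith : 2 * R.s p < 3 * R.s p))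
  have hsu : ∀ u ∈ ball p (3 * R.s p), 0.7 * R.s p ≤ R.s u ∧ R.s u ≤ 1.3 * R.s p := by
    intro u hu
    have h1 := (abs_sub_le_iff.1 (R.s_lip u p))
    have h2 := mem_ball.1 hu
    constructor <;> linarith
  have hU : ball p (3 * R.s p) ⊆ S.U i := by
    intro u hu
    apply R.mem_U_of_infDist_lt
    have h1 := infDist_le_dist_of_mem (x := u) hv
    have h2 := mem_ball.1 hu
    linarith [dist_triangle u p v, (hsu u hu).1]
  have hpU := hU (mem_ball_self (by positivity))
  have hκ := R.s_le i p hpU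
  have hκ1 := R.κ_le_one i
  have hκe := R.κ_le_e i
  have he := S.e_pos i
  have hK := S.one_le_K
  refine ⟨v, hv, ?_⟩
  have hk : 0 ≤ 32 * (S.K * S.e i) / (0.7 * R.s p) + 5.2 * R.s p := by positivity
  refine ((hX.joinedWithin_ball hpv).of_dist_le (j := R.coord) hk ?_).mono
    (hU.trans (subset_iUnion S.U i)) (ENNReal.ofReal_le_ofReal ?_)
  · intro u hu u' hu'
    rw [Prod.dist_eq]
    refine max_le ?_ ?_
    · have h3 := R.norm_value_sub_value_le (s₀ := 0.7 * R.s p) (by positivity) (hsu u hu).1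
        (hsu u' hu').1 (hU hu) (hU hu')
      rw [← dist_eq_norm] at h3
      refine h3.trans ?_
      gcongr
      linarith
    · refine (R.dist_bump_le u u').trans ?_
      have h4 : 0 ≤ 32 * (S.K * S.e i) / (0.7 * R.s p) := by positivity
      gcongr
      linarith [(hsu u hu).2, (hsu u' hu').2]
  · have e1 : (32 * (S.K * S.e i) / (0.7 * R.s p) + 5.2 * R.s p) * (3 * R.s p) =
        (960 / 7) * (S.K * S.e i) + 15.6 * R.s p * R.s p := by
      field_simp
      ring
    rw [e1]
    have e2 : R.s p * R.s p ≤ 0.1 * (0.1 * S.e i) := by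
      gcongr <;> linarith
    nlinarith [mul_le_mul_of_nonneg_right hK he.le]

theorem joined_of_no_higher (i : ι) {Ω : Set X} {x y : X} (hΩ : Ω ⊆ R.V i)
    (hval : ∀ u ∈ Ω, ∀ j, S.col i < S.col j → 2 * R.s u ≤ infDist u (R.V j))
    (h : JoinedWithin id Ω x y (ENNReal.ofReal (R.len i))) :
    JoinedWithin R.coord (⋃ i, S.U i) x y (ENNReal.ofReal (S.e i)) := by
  have hκ := R.κ_pos i
  refine (h.of_dist_le (j := R.coord) (k := R.κ i) hκ.le ?_).mono
    (hΩ.trans ((R.V_subset_U i).trans (subset_iUnion S.U i)))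
    (ENNReal.ofReal_le_ofReal (R.κ_mul_len_le i))
  intro u hu v hv
  have hconst : ∀ u ∈ Ω, R.value u = S.z i := fun u hu => R.value_eq (hΩ hu) fun j hj hju =>
    R.cutoff_eq_zero (ne_center hju) (hval u hu j hj)
  rw [Prod.dist_eq]
  refine max_le ?_ ((R.dist_bump_le u v).trans ?_)
  · simp only [coord, hconst u hu, hconst v hv, dist_self]
    positivity
  · gcongr
    linarith [R.s_le i u (R.V_subset_U i (hΩ hu)), R.s_le i v (R.V_subset_U i (hΩ hv))]

/-- A path inside `V i` may be replaced by one making detours through the cells of higher colour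
it meets. -/
theorem joined_along (hX : HasShortPaths X) {B : ℝ} (hB : 0 ≤ B) (i : ι)
    (hhigh : ∀ j, S.col i < S.col j → ∀ x ∈ R.V j, ∀ y ∈ R.V j,
      JoinedWithin R.coord (⋃ i, S.U i) x y (ENNReal.ofReal (B * S.e j)))
    {x y : X} (P : Path x y) (hP : ∀ t, P t ∈ R.V i)
    (hlen : eVariationOn (id ∘ P) univ ≤ ENNReal.ofReal (R.len i)) (n : ℕ) :
    ∀ F : Finset ι, F.card = n → (∀ j ∈ F, S.col i < S.col j) → ∀ a b : I, a ≤ b →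
      (∀ t ∈ Icc a b, ∀ j, S.col i < S.col j → infDist (P t) (R.V j) < 2 * R.s (P t) → j ∈ F) →
      JoinedWithin R.coord (⋃ i, S.U i) (P a) (P b)
        (ENNReal.ofReal (3 ^ n * (1 + (300 * S.K + B) * S.K) * S.e i)) := by
  classical
  have he := S.e_pos i
  have hK := S.one_le_K
  have hPw : ∀ t, P t ≠ w := fun t => ne_center (R.V_subset_U i (hP t))
  induction n with
  | zero =>
    intro F hF hcol a b hab hmeet
    rw [Finset.card_eq_zero] at hF
    subst hF
    refine (R.joined_of_no_higher i (Ω := P '' Icc a b) ?_ ?_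
      ((JoinedWithin.of_subpath id P hab).mono le_rfl
        ((eVariationOn.mono _ (subset_univ _)).trans hlen))).mono le_rfl
      (ENNReal.ofReal_le_ofReal ?_)
    · rintro _ ⟨t, -, rfl⟩
      exact hP t
    · rintro _ ⟨t, ht, rfl⟩ j hj
      by_contra! hlt
      simpa using hmeet t ht j hj hlt
    · have : 0 ≤ (300 * S.K + B) * S.K * S.e i := by positivity
      nlinarith
  | succ n ih =>
    intro F hF hcol a b hab hmeet
    have hmono : 3 ^ n * (1 + (300 * S.K + B) * S.K) * S.e i ≤
        3 ^ (n + 1) * (1 + (300 * S.K + B) * S.K) * S.e i := by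
      gcongr
      · norm_num
      · omega
    obtain ⟨j, hj⟩ : F.Nonempty := by
      rw [← Finset.card_pos]
      omega
    have hcard : (F.erase j).card = n := by
      rw [Finset.card_erase_of_mem hj]
      omega
    have hcol' : ∀ j' ∈ F.erase j, S.col i < S.col j' := fun j' hj' =>
      hcol j' (Finset.mem_of_mem_erase hj')
    set T : Set I := {t | t ∈ Icc a b ∧ infDist (P t) (R.V j) ≤ 2 * R.s (P t)} with hT
    have hcont1 : Continuous fun t => infDist (P t) (R.V j) :=
      (continuous_infDist_pt _).comp P.continuous
    have hcont2 : Continuous fun t => 2 * R.s (P t) :=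
      continuous_const.mul (R.continuous_s.comp P.continuous)
    have hTc : IsCompact T :=
      (isClosed_Icc.inter (isClosed_le hcont1 hcont2)).isCompact
    rcases T.eq_empty_or_nonempty with hTe | hTn
    · refine (ih (F.erase j) hcard hcol' a b hab fun t ht j' hj' hlt => ?_).mono le_rfl
        (ENNReal.ofReal_le_ofReal hmono)
      refine Finset.mem_erase.2 ⟨?_, hmeet t ht j' hj' hlt⟩
      rintro rfl
      have : t ∈ T := ⟨ht, hlt.le⟩
      rw [hTe] at this
      exact this
    obtain ⟨t₁, ht₁, hmin⟩ := hTc.exists_isLeast hTn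
    obtain ⟨t₂, ht₂, hmax⟩ := hTc.exists_isGreatest hTn
    have hC : 0 ≤ 3 ^ n * (1 + (300 * S.K + B) * S.K) * S.e i := by positivity
    have hleft : JoinedWithin R.coord (⋃ i, S.U i) (P a) (P t₁)
        (ENNReal.ofReal (3 ^ n * (1 + (300 * S.K + B) * S.K) * S.e i)) := by
      rcases ht₁.1.1.eq_or_lt with h | h
      · rw [← h]
        exact (JoinedWithin.refl (mem_iUnion.2 ⟨i, R.V_subset_U i (hP a)⟩)).mono le_rfl bot_le
      · refine ih (F.erase j) hcard hcol' a t₁ h.le fun t ht j' hj' hlt => ?_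
        refine Finset.mem_erase.2 ⟨?_, hmeet t ⟨ht.1, ht.2.trans ht₁.1.2⟩ j' hj' hlt⟩
        rintro rfl
        have hcl : Icc a t₁ ⊆ {t | 2 * R.s (P t) ≤ infDist (P t) (R.V j')} := by
          rw [← closure_Ico h.ne]
          refine closure_minimal (fun u hu => ?_) (isClosed_le hcont2 hcont1)
          by_contra hnot
          exact hu.2.not_ge (hmin ⟨⟨hu.1, hu.2.le.trans ht₁.1.2⟩, (not_le.1 hnot).le⟩)
        exact (hcl ht).not_gt hlt
    have hright : JoinedWithin R.coord (⋃ i, S.U i) (P t₂) (P b)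
        (ENNReal.ofReal (3 ^ n * (1 + (300 * S.K + B) * S.K) * S.e i)) := by
      rcases ht₂.1.2.eq_or_lt with h | h
      · rw [h]
        exact (JoinedWithin.refl (mem_iUnion.2 ⟨i, R.V_subset_U i (hP b)⟩)).mono le_rfl bot_le
      · refine ih (F.erase j) hcard hcol' t₂ b h.le fun t ht j' hj' hlt => ?_
        refine Finset.mem_erase.2 ⟨?_, hmeet t ⟨ht₂.1.1.trans ht.1, ht.2⟩ j' hj' hlt⟩
        rintro rfl
        have hcl : Icc t₂ b ⊆ {t | 2 * R.s (P t) ≤ infDist (P t) (R.V j')} := by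
          rw [← closure_Ioc h.ne]
          refine closure_minimal (fun u hu => ?_) (isClosed_le hcont2 hcont1)
          by_contra hnot
          exact hu.1.not_ge (hmax ⟨⟨ht₂.1.1.trans hu.1.le, hu.2⟩, (not_le.1 hnot).le⟩)
        exact (hcl ht).not_gt hlt
    obtain ⟨v₁, hv₁, hop₁⟩ := R.exists_hop hX (hPw t₁) ht₁.2
    obtain ⟨v₂, hv₂, hop₂⟩ := R.exists_hop hX (hPw t₂) ht₂.2
    have hej : S.e j ≤ S.K * S.e i := by
      refine S.e_le i j (P t₁) (R.V_subset_U i (hP t₁)) (R.mem_U_of_infDist_lt ?_)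
      linarith [ht₁.2, R.s_pos _ (hPw t₁)]
    have hej0 := S.e_pos j
    have htotal := ((((hleft.trans hop₁).trans (hhigh j (hcol j hj) v₁ hv₁ v₂ hv₂)).trans
      hop₂.symm).trans hright)
    rw [← ENNReal.ofReal_add (by positivity) (by positivity),
      ← ENNReal.ofReal_add (by positivity) (by positivity),
      ← ENNReal.ofReal_add (by positivity) (by positivity),
      ← ENNReal.ofReal_add (by positivity) (by positivity)] at htotal
    refine htotal.mono le_rfl (ENNReal.ofReal_le_ofReal ?_)
    have h1 : (300 * S.K + B) * S.e j ≤ (300 * S.K + B) * (S.K * S.e i) := by gcongr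
    have h3 : (1 : ℝ) ≤ 3 ^ n := one_le_pow₀ (by norm_num)
    have h2 : (300 * S.K + B) * S.K * S.e i ≤
        3 ^ n * ((1 + (300 * S.K + B) * S.K) * S.e i) := by
      refine le_trans ?_ (le_mul_of_one_le_left (by positivity) h3)
      nlinarith
    rw [pow_succ]
    nlinarith

theorem exists_joined_bound (hX : HasShortPaths X) :
    ∃ B : ℝ, 0 ≤ B ∧ ∀ i, ∀ x ∈ R.V i, ∀ y ∈ R.V i,
      JoinedWithin R.coord (⋃ i, S.U i) x y (ENNReal.ofReal (B * S.e i)) := by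
  classical
  have key : ∀ c ≤ 4, ∃ B : ℝ, 0 ≤ B ∧ ∀ i, 4 - c ≤ S.col i → ∀ x ∈ R.V i, ∀ y ∈ R.V i,
      JoinedWithin R.coord (⋃ i, S.U i) x y (ENNReal.ofReal (B * S.e i)) := by
    intro c
    induction c with
    | zero =>
      intro _
      exact ⟨0, le_rfl, fun i hi => absurd (S.col_lt i) (by omega)⟩
    | succ c ih =>
      intro hc
      obtain ⟨B, hB, h⟩ := ih (by omega)
      have hK := S.one_le_K
      have hB' : B ≤ 3 ^ S.N * (1 + (300 * S.K + B) * S.K) := by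
        have h3 : (1 : ℝ) ≤ 3 ^ S.N := one_le_pow₀ (by norm_num)
        refine le_trans ?_ (le_mul_of_one_le_left (by positivity) h3)
        nlinarith
      refine ⟨3 ^ S.N * (1 + (300 * S.K + B) * S.K), by positivity, fun i hi x hx y hy => ?_⟩
      have he := S.e_pos i
      by_cases hi' : 4 - c ≤ S.col i
      · exact (h i hi' x hx y hy).mono le_rfl (ENNReal.ofReal_le_ofReal (by gcongr))
      obtain ⟨P, hP, hlen⟩ := R.joined i x hx y hy
      have hfin := R.joined_along hX hB i (fun j hj => h j (by omega)) P hP hlen _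
        ((S.adj i).filter fun j => S.col i < S.col j) rfl (fun j hj => (Finset.mem_filter.1 hj).2)
        0 1 zero_le_one (fun t _ j hj hlt => ?_)
      · rw [P.source, P.target] at hfin
        refine hfin.mono le_rfl (ENNReal.ofReal_le_ofReal ?_)
        gcongr
        · norm_num
        · exact (Finset.card_filter_le _ _).trans (S.card_adj i)
      · have hU := R.V_subset_U i (hP t)
        refine Finset.mem_filter.2 ⟨S.mem_adj i j (P t) hU (R.mem_U_of_infDist_lt ?_), hj⟩
        linarith [R.s_nonneg (P t)]
  obtain ⟨B, hB, h⟩ := key 4 le_rfl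
  exact ⟨B, hB, fun i => h i (by omega)⟩

end CellSystem.Refinement

/-- A cell system in a compact length space carries coordinates for which
the points of a cell are joined by paths as short as the scale of the cell. -/
theorem CellSystem.exists_coord {X : Type*} [MetricSpace X] [CompactSpace X] {w : X} {ι : Type*}
    [Nonempty ι] (S : CellSystem w ι) (hX : HasShortPaths X) :
    ∃ (Φ : X → ℂ) (f : X → C(X, ℝ)) (B : ℝ),
      (∀ x, x ≠ w → ∃ k, ∃ t ∈ 𝓝 x, LipschitzOnWith k Φ t) ∧
      (∃ k, LipschitzWith k f) ∧ Function.Injective f ∧ 0 ≤ B ∧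
      (∀ i, ∀ x ∈ S.Q i, ‖Φ x - S.z i‖ ≤ S.K * S.e i) ∧
      ∀ i, ∀ x ∈ S.Q i, ∀ y ∈ S.Q i, JoinedWithin (fun x => (Φ x, f x)) (⋃ i, S.U i) x y
        (ENNReal.ofReal (B * S.e i)) := by
  obtain ⟨R⟩ := S.nonempty_refinement hX
  obtain ⟨B, hB, h⟩ := R.exists_joined_bound hX
  refine ⟨R.value, R.bump, B, fun x hx => R.value_locallyLipschitz hx, ?_, R.bump_injective, hB,
    fun i x hx => R.norm_value_sub_le (R.Q_subset_V i hx),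
    fun i x hx y hy => h i x (R.Q_subset_V i hx) y (R.Q_subset_V i hy)⟩
  obtain ⟨m, hm⟩ := (isCompact_range R.continuous_s).bddAbove
  have hm' : ∀ x, R.s x ≤ max m 0 := fun x => le_max_of_le_left (hm (mem_range_self x))
  refine ⟨Real.toNNReal (4 * max m 0), LipschitzWith.of_dist_le_mul fun x y => ?_⟩
  rw [Real.coe_toNNReal _ (by positivity)]
  refine (R.dist_bump_le x y).trans ?_
  exact mul_le_mul_of_nonneg_right (by linarith [hm' x, hm' y]) dist_nonneg

/-! ### Petals and their dyadic cells -/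

/-- Logarithmic polar coordinates in the plane, with angles counted in turns. -/
noncomputable def polar (p : ℝ × ℝ) : ℂ := Complex.exp (-p.1 + 2 * Real.pi * p.2 * Complex.I)

theorem continuous_polar : Continuous polar := by
  unfold polar; fun_prop

theorem polar_ne_zero (p : ℝ × ℝ) : polar p ≠ 0 := Complex.exp_ne_zero _

theorem norm_polar (p : ℝ × ℝ) : ‖polar p‖ = Real.exp (-p.1) := by
  simp [polar, Complex.norm_exp]

theorem polar_eq_polar {p q : ℝ × ℝ} : polar p = polar q ↔ p.1 = q.1 ∧ ∃ l : ℤ, p.2 = q.2 + l := by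
  have hpi := Real.pi_pos
  rw [polar, polar, Complex.exp_eq_exp_iff_exists_int]
  constructor
  · rintro ⟨l, hl⟩
    have h1 := congrArg Complex.re hl
    have h2 := congrArg Complex.im hl
    simp at h1 h2
    refine ⟨h1, l, ?_⟩
    have : 2 * Real.pi * (p.2 - (q.2 + l)) = 0 := by linear_combination h2
    have := (mul_eq_zero.1 this).resolve_left (by positivity)
    linarith
  · rintro ⟨h1, l, h2⟩
    refine ⟨l, ?_⟩
    rw [h1, h2]
    push_cast
    ring

theorem isOpen_image_polar {O : Set (ℝ × ℝ)} (hO : IsOpen O) : IsOpen (polar '' O) := by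
  have hpi := Real.pi_pos
  have : polar '' O = Complex.exp '' ((fun a : ℂ => (-a.re, a.im / (2 * Real.pi))) ⁻¹' O) := by
    ext v
    constructor
    · rintro ⟨p, hp, rfl⟩
      refine ⟨_, ?_, rfl⟩
      simpa [mul_div_cancel_left₀, hpi.ne'] using hp
    · rintro ⟨a, ha, rfl⟩
      refine ⟨_, ha, ?_⟩
      rw [polar]
      congr 1
      conv_rhs => rw [← Complex.re_add_im a]
      push_cast
      field_simp
  rw [this]
  exact Complex.isOpenMap_exp _ (hO.preimage (by fun_prop))

theorem exists_polar_eq {v : ℂ} (hv : v ≠ 0) : ∃ t : ℝ, 0 ≤ t ∧ t < 1 ∧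
    polar (-Real.log ‖v‖, t) = v := by
  have hpi := Real.pi_pos
  refine ⟨Int.fract (v.arg / (2 * Real.pi)), Int.fract_nonneg _, Int.fract_lt_one _, ?_⟩
  have h1 : polar (-Real.log ‖v‖, v.arg / (2 * Real.pi)) = v := by
    have h2 : Complex.exp (Complex.log v) = v := Complex.exp_log hv
    conv_rhs => rw [← h2, Complex.log]
    rw [polar]
    congr 1
    push_cast
    field_simp
  conv_rhs => rw [← h1]
  rw [polar_eq_polar]
  refine ⟨rfl, -⌊v.arg / (2 * Real.pi)⌋, ?_⟩
  simp only [Int.fract]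
  push_cast
  ring

theorem norm_polar_zero_sub_le (t u : ℝ) : ‖polar (0, t) - polar (0, u)‖ ≤ 7 * |t - u| := by
  have h1 : polar (0, t) - polar (0, u)
      = polar (0, u) * (Complex.exp (Complex.I * ((2 * Real.pi * (t - u) : ℝ) : ℂ)) - 1) := by
    simp only [polar]
    rw [mul_sub, ← Complex.exp_add]
    push_cast
    congr 1
    · congr 1
      ring
    · ring
  rw [h1, norm_mul, norm_polar]
  have h2 := Real.norm_exp_I_mul_ofReal_sub_one_le (x := 2 * Real.pi * (t - u))
  simp only [neg_zero, Real.exp_zero, one_mul]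
  refine h2.trans ?_
  rw [Real.norm_eq_abs, abs_mul, abs_of_pos (by positivity)]
  have := Real.pi_lt_d2
  gcongr
  linarith

/-- Two copies of the plane, embedded in the `ε`-ball around a point `w` and meeting only at `w`,
whose union is a neighbourhood of `w`. -/
structure Petals {X : Type*} [MetricSpace X] (w : X) (ε : ℝ) where
  κ : Bool → ℂ → X
  continuous_κ : ∀ b, Continuous (κ b)
  map_zero : ∀ b, κ b 0 = w
  eq_or_eq : ∀ b b' v v', κ b v = κ b' v' → (b = b' ∧ v = v') ∨ (v = 0 ∧ v' = 0)
  isOpen_image : ∀ b O, IsOpen O → 0 ∉ O → IsOpen (κ b '' O)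
  mem_nhds : ∀ r > 0, (⋃ b, κ b '' ball 0 r) ∈ 𝓝 w
  dist_le : ∀ b v, dist (κ b v) w ≤ ε

@[ext]
structure CellIndex where
  side : Bool
  level : ℕ
  pos : ℕ
  pos_lt : pos < 2 ^ level

namespace CellIndex

/-- The angular size of a cell. -/
noncomputable def size (i : CellIndex) : ℝ := 1 / 2 ^ i.level

theorem size_pos (i : CellIndex) : 0 < i.size := by
  unfold size; positivity

def closedBox (i : CellIndex) : Set (ℝ × ℝ) :=
  Icc (i.level : ℝ) (i.level + 1) ×ˢ Icc (i.pos * i.size) ((i.pos + 1) * i.size)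

def openBox (i : CellIndex) : Set (ℝ × ℝ) :=
  Ioo (i.level - 1 / 4 : ℝ) (i.level + 5 / 4) ×ˢ
    Ioo ((i.pos - 1 / 4) * i.size) ((i.pos + 5 / 4) * i.size)

theorem closedBox_subset (i : CellIndex) : i.closedBox ⊆ i.openBox := by
  have := i.size_pos
  refine prod_mono (Icc_subset_Ioo (by linarith) (by linarith))
    (Icc_subset_Ioo (by nlinarith) (by nlinarith))

theorem level_close {i j : CellIndex} {p q : ℝ × ℝ} (hp : p ∈ i.openBox) (hq : q ∈ j.openBox)
    (h : polar p = polar q) : i.level ≤ j.level + 1 ∧ j.level ≤ i.level + 1 := by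
  obtain ⟨h1, -⟩ := polar_eq_polar.1 h
  simp only [openBox, mem_prod, mem_Ioo] at hp hq
  constructor
  · have : (i.level : ℝ) < j.level + 2 := by linarith [hp.1.1, hq.1.2]
    have : i.level < j.level + 2 := by exact_mod_cast this
    omega
  · have : (j.level : ℝ) < i.level + 2 := by linarith [hp.1.2, hq.1.1]
    have : j.level < i.level + 2 := by exact_mod_cast this
    omega

theorem size_le {i j : CellIndex} (h : i.level ≤ j.level + 1) : j.size ≤ 2 * i.size := by
  have h1 : (2 : ℝ) ^ i.level ≤ 2 ^ (j.level + 1) := pow_le_pow_right₀ (by norm_num) h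
  rw [pow_succ] at h1
  rw [size, size, mul_one_div, div_le_div_iff₀ (by positivity) (by positivity)]
  linarith

theorem size_le_one (i : CellIndex) : i.size ≤ 1 := by
  rw [size, div_le_one (by positivity)]
  exact one_le_pow₀ (by norm_num)

theorem pos_add_one_mul_size_le (i : CellIndex) : (i.pos + 1) * i.size ≤ 1 := by
  rw [size, mul_one_div, div_le_one (by positivity)]
  exact_mod_cast i.pos_lt

/-- Angular comparison of two cells whose enlargements meet. -/
theorem exists_shift {i j : CellIndex} {p q : ℝ × ℝ} (hp : p ∈ i.openBox) (hq : q ∈ j.openBox)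
    (h : polar p = polar q) : ∃ l : ℤ, l ∈ Icc (-1) 1 ∧
      |(j.pos + 1 / 2) * j.size + l - (i.pos + 1 / 2) * i.size| <
        3 / 4 * i.size + 3 / 4 * j.size := by
  obtain ⟨-, l, hl⟩ := polar_eq_polar.1 h
  simp only [openBox, mem_prod, mem_Ioo] at hp hq
  have hi := i.size_pos
  have hj := j.size_pos
  have hi1 := i.size_le_one
  have hj1 := j.size_le_one
  have hip := i.pos_add_one_mul_size_le
  have hjp := j.pos_add_one_mul_size_le
  have hi0 : 0 ≤ i.pos * i.size := by positivity
  have hj0 : 0 ≤ j.pos * j.size := by positivity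
  obtain ⟨-, hp1, hp2⟩ := hp
  obtain ⟨-, hq1, hq2⟩ := hq
  refine ⟨l, ⟨?_, ?_⟩, ?_⟩
  · have : (-2 : ℝ) < l := by linarith
    have : (-2 : ℤ) < l := by exact_mod_cast this
    omega
  · have : (l : ℝ) < 2 := by linarith
    have : l < (2 : ℤ) := by exact_mod_cast this
    omega
  · rw [abs_lt]
    constructor <;> linarith

open Classical in
/-- The cells which may be adjacent to a given one. -/
noncomputable def adj (i : CellIndex) : Finset CellIndex :=
  (Finset.Icc (i.level - 1) (i.level + 1) ×ˢ Finset.Icc (-1 : ℤ) 1 ×ˢ Finset.Icc (-3 : ℤ) 3).image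
    fun t => if h :
        (⌊2 ^ t.1 * ((i.pos + 1 / 2) * i.size - t.2.1 : ℝ) - 1 / 2⌋ + t.2.2).toNat < 2 ^ t.1
      then ⟨i.side, t.1, _, h⟩ else i

theorem card_adj (i : CellIndex) : i.adj.card ≤ 63 := by
  classical
  refine Finset.card_image_le.trans ?_
  rw [Finset.card_product, Finset.card_product]
  simp only [Nat.card_Icc, Int.card_Icc]
  have h1 : i.level + 1 + 1 - (i.level - 1) ≤ 3 := by omega
  calc _ ≤ 3 * (3 * 7) := Nat.mul_le_mul h1 (by decide)
    _ = 63 := by norm_num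

theorem mem_adj {i j : CellIndex} (hs : i.side = j.side) {p q : ℝ × ℝ} (hp : p ∈ i.openBox)
    (hq : q ∈ j.openBox) (h : polar p = polar q) : j ∈ i.adj := by
  obtain ⟨h1, h2⟩ := level_close hp hq h
  obtain ⟨l, hl, hlt⟩ := exists_shift hp hq h
  have hs2 := size_le h2
  have hj := j.size_pos
  have hjs : 2 ^ j.level * j.size = 1 := by
    rw [size]; field_simp
  set c : ℝ := 2 ^ j.level * ((i.pos + 1 / 2) * i.size - l : ℝ) - 1 / 2 with hc
  have hcl : |(j.pos : ℝ) - c| < 9 / 4 := by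
    have h3 : (j.pos : ℝ) - c
        = 2 ^ j.level * ((j.pos + 1 / 2) * j.size + l - (i.pos + 1 / 2) * i.size) := by
      rw [hc]; linear_combination (-(j.pos : ℝ) - 1 / 2) * hjs
    rw [h3, abs_mul, abs_of_pos (by positivity)]
    calc _ < 2 ^ j.level * (3 / 4 * i.size + 3 / 4 * j.size) := by gcongr
      _ ≤ 2 ^ j.level * (9 / 4 * j.size) := by gcongr; linarith
      _ = 9 / 4 := by linear_combination 9 / 4 * hjs
  rw [abs_lt] at hcl
  have hf1 := Int.floor_le c
  have hf2 := Int.lt_floor_add_one c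
  classical
  rw [adj, Finset.mem_image]
  refine ⟨(j.level, l, (j.pos : ℤ) - ⌊c⌋), ?_, ?_⟩
  · simp only [Finset.mem_product, Finset.mem_Icc]
    refine ⟨⟨by omega, by omega⟩, hl, ?_, ?_⟩
    · have : (-4 : ℝ) < ((j.pos - ⌊c⌋ : ℤ) : ℝ) := by push_cast; linarith
      have : (-4 : ℤ) < j.pos - ⌊c⌋ := by exact_mod_cast this
      omega
    · have : ((j.pos - ⌊c⌋ : ℤ) : ℝ) < 4 := by push_cast; linarith
      have : (j.pos - ⌊c⌋ : ℤ) < 4 := by exact_mod_cast this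
      omega
  · have h4 : (⌊c⌋ + ((j.pos : ℤ) - ⌊c⌋)).toNat = j.pos := by simp
    simp only [← hc, h4]
    rw [dif_pos j.pos_lt]
    ext <;> simp [hs]

theorem eq_of_meet {i j : CellIndex} (hs : i.side = j.side) (hl : i.level % 2 = j.level % 2)
    (hk : i.pos % 2 = j.pos % 2) {p q : ℝ × ℝ} (hp : p ∈ i.openBox)
    (hq : q ∈ j.openBox) (h : polar p = polar q) : i = j := by
  obtain ⟨h1, h2⟩ := level_close hp hq h
  obtain ⟨l, hl1, hlt⟩ := exists_shift hp hq h
  have hlev : i.level = j.level := by omega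
  have hsz : i.size = j.size := by rw [size, size, hlev]
  have hjs : 2 ^ j.level * j.size = 1 := by
    rw [size]; field_simp
  have h3 : |((j.pos + l * 2 ^ j.level - i.pos : ℤ) : ℝ)| < 3 / 2 := by
    have h4 : ((j.pos + l * 2 ^ j.level - i.pos : ℤ) : ℝ)
        = 2 ^ j.level * ((j.pos + 1 / 2) * j.size + l - (i.pos + 1 / 2) * i.size) := by
      rw [hsz]; push_cast; linear_combination ((i.pos : ℝ) - j.pos) * hjs
    rw [h4, abs_mul, abs_of_pos (by positivity)]
    calc _ < 2 ^ j.level * (3 / 4 * i.size + 3 / 4 * j.size) := by gcongr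
      _ = 3 / 2 := by rw [hsz]; linear_combination 3 / 2 * hjs
  have h5 : |(j.pos + l * 2 ^ j.level - i.pos : ℤ)| < 2 := by
    have : ((|(j.pos + l * 2 ^ j.level - i.pos : ℤ)| : ℤ) : ℝ) < 2 := by
      rw [Int.cast_abs]; linarith
    exact_mod_cast this
  have hip := i.pos_lt
  have hjp := j.pos_lt
  rw [abs_lt] at h5
  have hpos : i.pos = j.pos := by
    rcases Nat.eq_zero_or_pos j.level with h0 | h0
    · rw [h0] at hjp; rw [hlev, h0] at hip; omega
    · obtain ⟨m, hm⟩ : ∃ m, j.level = m + 1 := ⟨j.level - 1, by omega⟩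
      rw [hlev] at hip
      rw [hm, pow_succ] at hip hjp h5
      have hl3 : l = -1 ∨ l = 0 ∨ l = 1 := by
        obtain ⟨h6, h7⟩ := hl1; omega
      generalize hM : 2 ^ m = M at *
      have hM' : (2 : ℤ) ^ m = M := by rw [← hM]; push_cast; rfl
      rw [hM'] at h5
      rcases hl3 with rfl | rfl | rfl <;> omega
  exact CellIndex.ext hs hlev hpos

end CellIndex

theorem CellIndex.exists_mem_closedBox (b : Bool) {s t : ℝ} (hs : 0 ≤ s) (ht : 0 ≤ t)
    (ht1 : t < 1) :
    ∃ i : CellIndex, i.side = b ∧ i.level = ⌊s⌋₊ ∧ (s, t) ∈ i.closedBox := by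
  have h2 : (0 : ℝ) < 2 ^ ⌊s⌋₊ := by positivity
  have h3 : ⌊t * 2 ^ ⌊s⌋₊⌋₊ < 2 ^ ⌊s⌋₊ := by
    rw [Nat.floor_lt (by positivity)]
    push_cast
    nlinarith
  refine ⟨⟨b, ⌊s⌋₊, ⌊t * 2 ^ ⌊s⌋₊⌋₊, h3⟩, rfl, rfl, ?_⟩
  simp only [closedBox, size, mem_prod, mem_Icc, mul_one_div]
  rw [div_le_iff₀ h2, le_div_iff₀ h2]
  exact ⟨⟨Nat.floor_le hs, (Nat.lt_floor_add_one s).le⟩, Nat.floor_le (by positivity),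
    (Nat.lt_floor_add_one _).le⟩

namespace Petals

variable {X : Type*} [MetricSpace X] {w : X} {ε : ℝ} (P : Petals w ε)

theorem κ_ne {b : Bool} {v : ℂ} (hv : v ≠ 0) : P.κ b v ≠ w := by
  intro h
  rcases P.eq_or_eq _ _ _ _ (h.trans (P.map_zero b).symm) with h | h
  exacts [hv h.2, hv h.1]

theorem κ_eq_iff {b b' : Bool} {v v' : ℂ} (hv : v ≠ 0) :
    P.κ b v = P.κ b' v' ↔ b = b' ∧ v = v' := by
  refine ⟨fun h => (P.eq_or_eq _ _ _ _ h).resolve_right fun h => hv h.1, ?_⟩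
  rintro ⟨rfl, rfl⟩
  rfl

/-- The cells of the punctured petals. -/
noncomputable def cells : CellSystem w CellIndex where
  Q i := (fun p => P.κ i.side (polar p)) '' i.closedBox
  U i := (fun p => P.κ i.side (polar p)) '' i.openBox
  col i := 2 * (i.level % 2) + i.pos % 2 
  z i := polar (0, i.pos * i.size)
  e := CellIndex.size
  adj := CellIndex.adj
  N := 63
  K := 20
  isCompact_Q i := (isCompact_Icc.prod isCompact_Icc).image
    ((P.continuous_κ _).comp continuous_polar)
  isConnected_Q i := by
    have h : (i.pos : ℝ) * i.size ≤ (i.pos + 1) * i.size := by nlinarith [i.size_pos]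
    exact ((isConnected_Icc (by linarith)).prod (isConnected_Icc h)).image _
      ((P.continuous_κ _).comp continuous_polar).continuousOn
  Q_subset i := image_mono i.closedBox_subset
  isOpen_U i := by
    have := P.isOpen_image i.side _ (isOpen_image_polar (isOpen_Ioo.prod isOpen_Ioo :
      IsOpen i.openBox)) (by rintro ⟨p, -, hp⟩; exact polar_ne_zero p hp)
    rwa [image_image] at this
  notMem_U i := by
    rintro ⟨p, -, hp⟩
    exact P.κ_ne (polar_ne_zero p) hp
  col_lt i := by omega
  eq_of_col := by
    rintro i j x hc ⟨p, hp, rfl⟩ ⟨q, hq, hpq⟩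
    obtain ⟨h1, h2⟩ := (P.κ_eq_iff (polar_ne_zero q)).1 hpq
    exact CellIndex.eq_of_meet h1.symm (by omega) (by omega) hp hq h2.symm
  mem_adj := by
    rintro i j x ⟨p, hp, rfl⟩ ⟨q, hq, hpq⟩
    obtain ⟨h1, h2⟩ := (P.κ_eq_iff (polar_ne_zero q)).1 hpq
    exact CellIndex.mem_adj h1.symm hp hq h2.symm
  card_adj := CellIndex.card_adj
  e_pos := CellIndex.size_pos
  one_le_K := by norm_num
  z_le := by
    rintro i j x ⟨p, hp, rfl⟩ ⟨q, hq, hpq⟩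
    obtain ⟨h1, h2⟩ := (P.κ_eq_iff (polar_ne_zero q)).1 hpq
    obtain ⟨l, -, hl⟩ := CellIndex.exists_shift hp hq h2.symm
    have hsz := CellIndex.size_le (CellIndex.level_close hp hq h2.symm).1
    have hi := i.size_pos
    have h3 : polar (0, j.pos * j.size) = polar (0, j.pos * j.size + l) :=
      polar_eq_polar.2 ⟨rfl, -l, by push_cast; ring⟩
    rw [h3]
    refine (norm_polar_zero_sub_le _ _).trans ?_
    have h4 : |j.pos * j.size + l - i.pos * i.size| ≤ 11 / 4 * i.size := by
      rw [abs_lt] at hl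
      rw [abs_le]
      have := j.size_pos
      constructor <;> linarith
    linarith
  e_le := by
    rintro i j x ⟨p, hp, rfl⟩ ⟨q, hq, hpq⟩
    obtain ⟨h1, h2⟩ := (P.κ_eq_iff (polar_ne_zero q)).1 hpq
    have hsz := CellIndex.size_le (CellIndex.level_close hp hq h2.symm).1
    linarith [i.size_pos]
  finite_far := by
    intro r hr
    obtain ⟨δ, hδ, h1⟩ : ∃ δ > 0, ∀ b v, ‖v‖ < δ → P.κ b v ∈ ball w r := by
      have h2 : ∀ b, ∃ δ > 0, ∀ v, ‖v‖ < δ → P.κ b v ∈ ball w r := fun b => by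
        have := (P.continuous_κ b).tendsto 0
        rw [P.map_zero] at this
        obtain ⟨δ, hδ, h3⟩ := Metric.mem_nhds_iff.1 (this (ball_mem_nhds w hr))
        exact ⟨δ, hδ, fun v hv => h3 (by simpa using hv)⟩
      choose δ hδ h3 using h2
      refine ⟨min (δ false) (δ true), lt_min (hδ _) (hδ _), fun b v hv => ?_⟩
      cases b
      · exact h3 _ _ (hv.trans_le (min_le_left _ _))
      · exact h3 _ _ (hv.trans_le (min_le_right _ _))
    obtain ⟨n₀, hn₀⟩ := exists_nat_gt (-Real.log δ + 1)
    have hfin : (range fun t : Bool × (n : Fin n₀) × Fin (2 ^ (n : ℕ)) =>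
      (⟨t.1, t.2.1, t.2.2, t.2.2.2⟩ : CellIndex)).Finite := finite_range _
    refine hfin.subset fun i hi => ?_
    by_cases hlt : i.level < n₀
    · exact ⟨(i.side, ⟨⟨i.level, hlt⟩, ⟨i.pos, i.pos_lt⟩⟩), rfl⟩
    · refine absurd ?_ hi
      rintro x ⟨p, hp, rfl⟩
      refine h1 _ _ ?_
      rw [norm_polar, ← Real.lt_log_iff_exp_lt hδ]
      have : (n₀ : ℝ) ≤ i.level := by exact_mod_cast not_lt.1 hlt
      linarith [hp.1.1]
  covered := by
    intro j
    rcases Nat.eq_zero_or_pos j.level with h0 | h0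
    · right
      rw [norm_polar]
      simp [CellIndex.size, h0]
    · left
      rintro x ⟨p, hp, rfl⟩
      have hp0 : 0 ≤ p.1 := by
        have : (1 : ℝ) ≤ j.level := by exact_mod_cast h0
        linarith [hp.1.1]
      obtain ⟨i, hi, -, hmem⟩ := CellIndex.exists_mem_closedBox j.side hp0 (Int.fract_nonneg p.2)
        (Int.fract_lt_one p.2)
      refine mem_iUnion.2 ⟨i, _, hmem, ?_⟩
      simp only [hi]
      congr 1
      refine polar_eq_polar.2 ⟨rfl, -⌊p.2⌋, ?_⟩
      simp only [Int.fract]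
      push_cast
      ring

theorem U_subset (i : CellIndex) : P.cells.U i ⊆ closedBall w ε := by
  rintro x ⟨p, -, rfl⟩
  exact P.dist_le _ _

end Petals

/-! ### Replacing the common point of two petals by a circle -/

/-- The unit vector in the direction of `v`, shrunk by the factor `1 - ‖v‖`. -/
noncomputable def shrink (v : ℂ) : ℂ := ((max 0 (1 - ‖v‖) / ‖v‖ : ℝ) : ℂ) * v

theorem norm_shrink {v : ℂ} (hv : v ≠ 0) : ‖shrink v‖ = max 0 (1 - ‖v‖) := by
  have := norm_pos_iff.2 hv
  rw [shrink, norm_mul, Complex.norm_real, Real.norm_of_nonneg (by positivity)]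
  field_simp

theorem continuousAt_shrink {v : ℂ} (hv : v ≠ 0) : ContinuousAt shrink v := by
  have := (norm_pos_iff.2 hv).ne'
  unfold shrink
  fun_prop (disch := assumption)

theorem polar_eq_mul (s t : ℝ) : polar (s, t) = (Real.exp (-s) : ℂ) * polar (0, t) := by
  simp only [polar, Complex.ofReal_exp, ← Complex.exp_add]
  congr 1
  push_cast
  ring

theorem shrink_polar {s : ℝ} (hs : 0 ≤ s) (t : ℝ) :
    shrink (polar (s, t)) = ((1 - Real.exp (-s) : ℝ) : ℂ) * polar (0, t) := by
  have h0 := Real.exp_pos (-s)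
  have h1 : Real.exp (-s) ≤ 1 := Real.exp_le_one_iff.2 (by linarith)
  rw [shrink, norm_polar, max_eq_right (by linarith), polar_eq_mul s t, ← mul_assoc,
    ← Complex.ofReal_mul]
  congr 2
  field_simp

namespace Petals

variable {X : Type*} [MetricSpace X] {w : X} {ε : ℝ} (P : Petals w ε)

open Classical in
/-- The map given by `shrink` in the petals, and vanishing elsewhere. -/
noncomputable def dir (x : X) : ℂ :=
  if h : ∃ (b : Bool) (v : ℂ), v ≠ 0 ∧ P.κ b v = x then shrink h.choose_spec.choose else 0

theorem dir_κ {b : Bool} {v : ℂ} (hv : v ≠ 0) : P.dir (P.κ b v) = shrink v := by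
  have h : ∃ (b' : Bool) (v' : ℂ), v' ≠ 0 ∧ P.κ b' v' = P.κ b v := ⟨b, v, hv, rfl⟩
  rw [dir, dif_pos h, ((P.κ_eq_iff h.choose_spec.choose_spec.1).1
    h.choose_spec.choose_spec.2).2]

theorem dir_eq_zero {x : X} (h : ∀ b, x ∉ P.κ b '' ball 0 1) : P.dir x = 0 := by
  by_cases h' : ∃ (b : Bool) (v : ℂ), v ≠ 0 ∧ P.κ b v = x
  · obtain ⟨b, v, hv, rfl⟩ := h'
    have h1 : 1 ≤ ‖v‖ := by
      by_contra h2
      exact h b ⟨v, by simpa using h2, rfl⟩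
    rw [P.dir_κ hv, shrink, max_eq_left (by linarith)]
    simp
  · rw [dir, dif_neg h']

theorem isClosed_image_closedBall (b : Bool) (r : ℝ) : IsClosed (P.κ b '' closedBall 0 r) :=
  ((isCompact_closedBall _ _).image (P.continuous_κ b)).isClosed

theorem image_mem_nhds {b : Bool} {v : ℂ} (hv : v ≠ 0) {t : Set ℂ} (ht : t ∈ 𝓝 v) :
    P.κ b '' t ∈ 𝓝 (P.κ b v) := by
  have h1 : t ∩ {0}ᶜ ∈ 𝓝 v := inter_mem ht (isOpen_compl_singleton.mem_nhds hv)
  obtain ⟨O, hO, hOo, hv'⟩ := _root_.mem_nhds_iff.1 h1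
  exact mem_of_superset ((P.isOpen_image b O hOo fun h => (hO h).2 rfl).mem_nhds ⟨v, hv', rfl⟩)
    (image_mono (hO.trans inter_subset_left))

theorem continuousAt_dir {x : X} (hx : x ≠ w) : ContinuousAt P.dir x := by
  by_cases h : ∃ (b : Bool) (v : ℂ), v ≠ 0 ∧ P.κ b v = x
  · obtain ⟨b, v, hv, rfl⟩ := h
    intro s hs
    rw [P.dir_κ hv] at hs
    have h1 := inter_mem (mem_map.1 ((continuousAt_shrink hv) hs))
      (isOpen_compl_singleton.mem_nhds hv)
    rw [mem_map]
    refine mem_of_superset (P.image_mem_nhds (b := b) hv h1) ?_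
    rintro _ ⟨u, ⟨hu, hu0⟩, rfl⟩
    rw [mem_preimage, P.dir_κ hu0]
    exact hu
  · have h1 : ∀ b, x ∉ P.κ b '' closedBall 0 1 := by
      rintro b ⟨v, -, rfl⟩
      exact h ⟨b, v, fun h0 => hx (by rw [h0, P.map_zero]), rfl⟩
    have h2 : ∀ᶠ y in 𝓝 x, P.dir y = 0 := by
      have h3 : ∀ᶠ y in 𝓝 x, ∀ b, y ∉ P.κ b '' closedBall 0 1 := by
        rw [eventually_all]
        exact fun b => (P.isClosed_image_closedBall b 1).isOpen_compl.mem_nhds (h1 b)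
      exact h3.mono fun y hy => P.dir_eq_zero fun b hb =>
        hy b (image_mono ball_subset_closedBall hb)
    rw [ContinuousAt, h2.self_of_nhds]
    exact tendsto_const_nhds.congr' (h2.mono fun y hy => hy.symm)

/-- The space obtained by replacing the common point of the petals by a circle of directions. -/
def blowup : Set (X × ℂ) := {p | (p.1 ≠ w ∧ p.2 = P.dir p.1) ∨ (p.1 = w ∧ ‖p.2‖ = 1)}

theorem norm_snd_sub_one_lt {p : X × ℂ} (hp : p ∈ P.blowup) {r : ℝ} (hr : 0 < r) (hr1 : r ≤ 1)
    (h : p.1 ∈ ⋃ b, P.κ b '' ball 0 r) : |‖p.2‖ - 1| < r := by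
  rcases hp with ⟨h1, h2⟩ | ⟨-, h2⟩
  · obtain ⟨b, v, hv, h3⟩ := mem_iUnion.1 h
    have hv0 : v ≠ 0 := by
      rintro rfl
      exact h1 (by rw [← h3, P.map_zero])
    have hv1 : ‖v‖ < r := by simpa using hv
    rw [h2, ← h3, P.dir_κ hv0, norm_shrink hv0, max_eq_right (by linarith)]
    have := norm_pos_iff.2 hv0
    rw [abs_lt]
    constructor <;> linarith
  · rw [h2]; simpa using hr

theorem isClosed_blowup : IsClosed P.blowup := by
  refine isClosed_of_closure_subset ?_
  rintro ⟨x, u⟩ hp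
  have : (𝓝[P.blowup] (x, u)).NeBot := mem_closure_iff_nhdsWithin_neBot.1 hp
  have hfst : Tendsto Prod.fst (𝓝[P.blowup] (x, u)) (𝓝 x) :=
    (continuous_fst.tendsto (x, u)).mono_left nhdsWithin_le_nhds
  have hsnd : Tendsto Prod.snd (𝓝[P.blowup] (x, u)) (𝓝 u) :=
    (continuous_snd.tendsto (x, u)).mono_left nhdsWithin_le_nhds
  by_cases hx : x = w
  · right
    refine ⟨hx, tendsto_nhds_unique hsnd.norm ?_⟩
    rw [Metric.tendsto_nhds]
    intro η hη
    have h1 : Tendsto Prod.fst (𝓝[P.blowup] (x, u)) (𝓝 w) := by rwa [hx] at hfst ⊢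
    have h1 := h1 (P.mem_nhds (min η 1) (by positivity))
    filter_upwards [h1, self_mem_nhdsWithin] with p hp1 hp2
    exact (P.norm_snd_sub_one_lt hp2 (by positivity) (min_le_right _ _) hp1).trans_le
      (min_le_left _ _)
  · left
    refine ⟨hx, tendsto_nhds_unique hsnd (((P.continuousAt_dir hx).tendsto.comp hfst).congr' ?_)⟩
    filter_upwards [hfst (isOpen_compl_singleton.mem_nhds hx), self_mem_nhdsWithin] with p hp1 hp2
    exact (hp2.resolve_right fun h => hp1 h.1).2.symm

theorem norm_dir_le (x : X) : ‖P.dir x‖ ≤ 1 := by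
  by_cases h' : ∃ b, x ∈ P.κ b '' ball 0 1
  · obtain ⟨b, v, hv, rfl⟩ := h'
    rcases eq_or_ne v 0 with rfl | hv0
    · by_cases h : ∃ (b' : Bool) (v' : ℂ), v' ≠ 0 ∧ P.κ b' v' = P.κ b 0
      · obtain ⟨b', v', h1, h2⟩ := h
        exact absurd h2 (by rw [P.map_zero]; exact P.κ_ne h1)
      · rw [dir, dif_neg h]; simp
    · rw [P.dir_κ hv0, norm_shrink hv0]
      exact max_le zero_le_one (by linarith [norm_nonneg v])
  · rw [P.dir_eq_zero (by simpa using h')]; simp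

instance [CompactSpace X] : CompactSpace P.blowup := by
  rw [← isCompact_iff_compactSpace]
  refine (isCompact_univ.prod (isCompact_closedBall (0 : ℂ) 1)).of_isClosed_subset
    P.isClosed_blowup fun p hp => ⟨mem_univ _, ?_⟩
  rw [mem_closedBall_zero_iff]
  rcases hp with ⟨-, h⟩ | ⟨-, h⟩
  · rw [h]; exact P.norm_dir_le _
  · exact h.le

/-- A point of the circle of directions. -/
def rim (u : Circle) : P.blowup := ⟨(w, u), Or.inr ⟨rfl, u.norm_coe⟩⟩

open Classical in
/-- The inclusion in the blowup, away from the common point. -/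
noncomputable def lift (x : X) : P.blowup :=
  if h : x = w then P.rim 1 else ⟨(x, P.dir x), Or.inl ⟨h, rfl⟩⟩

theorem lift_val {x : X} (hx : x ≠ w) : (P.lift x).1 = (x, P.dir x) := by
  rw [lift, dif_neg hx]

theorem lift_fst (x : X) : (P.lift x).1.1 = x := by
  rcases eq_or_ne x w with rfl | h
  · simp [lift, rim]
  · rw [P.lift_val h]

theorem eq_lift {p : P.blowup} (hp : p.1.1 ≠ w) : p = P.lift p.1.1 := by
  apply Subtype.ext
  rw [P.lift_val hp]
  exact Prod.ext rfl (p.2.resolve_right fun h => hp h.1).2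

theorem exists_eq_rim {p : P.blowup} (hp : p.1.1 = w) : ∃ u, p = P.rim u := by
  have h := (p.2.resolve_left fun h => h.1 hp).2
  refine ⟨⟨p.1.2, mem_sphere_zero_iff_norm.2 h⟩, Subtype.ext (Prod.ext hp rfl)⟩

theorem continuousOn_lift : ContinuousOn P.lift {w}ᶜ := by
  rw [Topology.IsInducing.subtypeVal.continuousOn_iff]
  have h : ContinuousOn (fun x => (x, P.dir x)) {w}ᶜ := fun x hx =>
    (continuousAt_id.prodMk (P.continuousAt_dir hx)).continuousWithinAt
  exact h.congr fun x hx => P.lift_val hx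

/-- The unit complex number at angle `t`, in turns. -/
noncomputable def turn (t : ℝ) : Circle :=
  ⟨polar (0, t), by simp [Submonoid.unitSphere, norm_polar]⟩

theorem coe_turn (t : ℝ) : (turn t : ℂ) = polar (0, t) := rfl

theorem exists_turn_eq (u : Circle) : ∃ t, u = turn t := by
  obtain ⟨t, -, -, ht⟩ := exists_polar_eq u.coe_ne_zero
  refine ⟨t, Circle.ext ?_⟩
  rw [Circle.norm_coe, Real.log_one, neg_zero] at ht
  exact ht.symm

end Petals

namespace Petals

variable {X : Type*} [MetricSpace X] {w : X} {ε : ℝ} (P : Petals w ε)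

theorem exists_cell (b : Bool) (m : ℕ) (k : ℤ) : ∃ i : CellIndex, i.size = 1 / 2 ^ m ∧
    ∀ s ∈ Icc (m : ℝ) (m + 1), ∀ t ∈ Icc (k / 2 ^ m : ℝ) ((k + 1) / 2 ^ m),
      P.κ b (polar (s, t)) ∈ P.cells.Q i := by
  have h2 : (0 : ℤ) < 2 ^ m := by positivity
  have h0 := Int.emod_nonneg k h2.ne'
  have hlt : (k % 2 ^ m).toNat < 2 ^ m := by
    have h1 := Int.emod_lt_of_pos k h2
    zify
    rw [Int.toNat_of_nonneg h0]
    exact h1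
  refine ⟨⟨b, m, (k % 2 ^ m).toNat, hlt⟩, rfl, fun s hs t ht => ⟨(s, t - (k / 2 ^ m : ℤ)), ?_, ?_⟩⟩
  · have h4 : (k : ℝ) = (2 ^ m : ℝ) * (k / 2 ^ m : ℤ) + (k % 2 ^ m : ℤ) := by
      exact_mod_cast (Int.mul_ediv_add_emod k (2 ^ m)).symm
    have h5 : (((k % 2 ^ m).toNat : ℕ) : ℝ) = (k % 2 ^ m : ℤ) := by
      exact_mod_cast Int.toNat_of_nonneg h0
    have h3 : (0 : ℝ) < 2 ^ m := by positivity
    obtain ⟨h6, h7⟩ := ht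
    rw [div_le_iff₀ h3] at h6
    rw [le_div_iff₀ h3] at h7
    refine ⟨hs, ?_⟩
    simp only [CellIndex.size, h5, mem_Icc, mul_one_div]
    rw [div_le_iff₀ h3, le_div_iff₀ h3]
    constructor <;> linarith
  · dsimp only
    congr 1
    exact polar_eq_polar.2 ⟨rfl, -(k / 2 ^ m), by push_cast; ring⟩

theorem exists_cell_of_angle (b : Bool) (m : ℕ) (t : ℝ) : ∃ i : CellIndex, i.size = 1 / 2 ^ m ∧
    ∀ s ∈ Icc (m : ℝ) (m + 1), P.κ b (polar (s, t)) ∈ P.cells.Q i := by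
  obtain ⟨i, h1, h2⟩ := P.exists_cell b m ⌊t * 2 ^ m⌋
  refine ⟨i, h1, fun s hs => h2 s hs t ?_⟩
  rw [mem_Icc, div_le_iff₀ (by positivity), le_div_iff₀ (by positivity)]
  exact ⟨Int.floor_le _, (Int.lt_floor_add_one _).le⟩

/-- The distance in the space where the `ε`-ball around `w` is collapsed, as a continuous
function of the second point. -/
noncomputable def collapsed (w : X) (ε : ℝ) (x : X) : C(X, ℝ) where
  toFun a := min (dist x a) (max 0 (dist x w - ε) + max 0 (dist a w - ε))
  continuous_toFun := by fun_prop

theorem collapsed_eq {x y : X} (hx : dist x w ≤ ε) (hy : dist y w ≤ ε) :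
    collapsed w ε x = collapsed w ε y := by
  have h : ∀ z a : X, dist z w ≤ ε → collapsed w ε z a = max 0 (dist a w - ε) := by
    intro z a hz
    simp only [collapsed, ContinuousMap.coe_mk]
    rw [max_eq_left (by linarith : dist z w - ε ≤ 0), zero_add, min_eq_right]
    refine max_le dist_nonneg ?_
    linarith [dist_triangle_left a w z]
  ext a
  rw [h x a hx, h y a hy]

variable [CompactSpace X]

/-- Coordinates on the space, away from the common point of the petals, for which the cells are
small. -/
structure Coord where
  Φ : X → ℂ
  f : X → C(X, ℝ)
  B : ℝ
  locallyLipschitz_Φ : ∀ x, x ≠ w → ∃ k, ∃ t ∈ 𝓝 x, LipschitzOnWith k Φ t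
  lipschitz_f : ∃ k, LipschitzWith k f
  injective_f : Function.Injective f
  B_nonneg : 0 ≤ B
  norm_Φ_sub_le : ∀ i, ∀ x ∈ P.cells.Q i, ‖Φ x - P.cells.z i‖ ≤ P.cells.K * P.cells.e i
  joined : ∀ i, ∀ x ∈ P.cells.Q i, ∀ y ∈ P.cells.Q i, JoinedWithin (fun x => (Φ x, f x))
    (⋃ i, P.cells.U i) x y (ENNReal.ofReal (B * P.cells.e i))

theorem nonempty_coord (hX : HasShortPaths X) : Nonempty P.Coord := by
  have : Nonempty CellIndex := ⟨⟨true, 0, 0, by norm_num⟩⟩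
  obtain ⟨Φ, f, B, h1, h2, h3, h4, h5, h6⟩ := P.cells.exists_coord hX
  exact ⟨⟨Φ, f, B, h1, h2, h3, h4, h5, h6⟩⟩

theorem dist_collapsed_le (x y : X) :
    dist (collapsed w ε x) (collapsed w ε y) ≤ dist x y := by
  rw [ContinuousMap.dist_le dist_nonneg]
  intro a
  simp only [collapsed, ContinuousMap.coe_mk, Real.dist_eq]
  refine (abs_min_sub_min_le_max _ _ _ _).trans (max_le (abs_dist_sub_le x y a) ?_)
  rw [add_sub_add_right_eq_sub]
  refine (abs_max_sub_max_le_max _ _ _ _).trans (max_le (by simp) ?_)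
  rw [sub_sub_sub_cancel_right]
  exact abs_dist_sub_le x y w

theorem le_dist_collapsed (hε : 0 ≤ ε) (x y : X) :
    dist x y - 2 * ε ≤ dist (collapsed w ε x) (collapsed w ε y) := by
  refine le_trans ?_ (ContinuousMap.dist_apply_le_dist y)
  simp only [collapsed, ContinuousMap.coe_mk, Real.dist_eq, dist_self]
  have h0 : min 0 (max 0 (dist y w - ε) + max 0 (dist y w - ε)) = 0 := min_eq_left (by positivity)
  rw [h0, sub_zero]
  refine le_trans (le_min (by linarith) ?_) (le_abs_self _)
  have := dist_triangle_right x y w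
  linarith [le_max_right 0 (dist x w - ε), le_max_right 0 (dist y w - ε)]

namespace Coord

variable {P} (C : P.Coord)

open Classical in
/-- The extension of the planar coordinate to the blowup. -/
noncomputable def ext (p : P.blowup) : ℂ := if p.1.1 = w then p.1.2 else C.Φ p.1.1

theorem ext_lift {x : X} (hx : x ≠ w) : C.ext (P.lift x) = C.Φ x := by
  rw [ext, lift_fst, if_neg hx]

theorem norm_Φ_sub_dir_le (b : Bool) {s : ℝ} (hs : 0 ≤ s) (t : ℝ) :
    ‖C.Φ (P.κ b (polar (s, t))) - P.dir (P.κ b (polar (s, t)))‖ ≤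
      27 / 2 ^ ⌊s⌋₊ + Real.exp (-s) := by
  obtain ⟨k, hk⟩ : ∃ k : ℤ, t ∈ Icc (k / 2 ^ ⌊s⌋₊ : ℝ) ((k + 1) / 2 ^ ⌊s⌋₊) := by
    refine ⟨⌊t * 2 ^ ⌊s⌋₊⌋, ?_⟩
    rw [mem_Icc, div_le_iff₀ (by positivity), le_div_iff₀ (by positivity)]
    exact ⟨Int.floor_le _, (Int.lt_floor_add_one _).le⟩
  obtain ⟨i, h1, h2⟩ := P.exists_cell b ⌊s⌋₊ k
  have hq := h2 s ⟨Nat.floor_le hs, (Nat.lt_floor_add_one s).le⟩ t hk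
  have h3 := C.norm_Φ_sub_le i _ hq
  obtain ⟨⟨s', t'⟩, ⟨-, hp⟩, hpq⟩ := hq
  obtain ⟨-, hpol⟩ := (P.κ_eq_iff (polar_ne_zero _)).1 hpq
  obtain ⟨hs', l, hl⟩ := polar_eq_polar.1 hpol
  have h4 : ‖P.cells.z i - polar (0, t)‖ ≤ 7 * i.size := by
    have h5 : polar (0, t) = polar (0, t') := polar_eq_polar.2 ⟨rfl, -l, by
      simp only at hl; rw [hl]; push_cast; ring⟩
    rw [h5]
    refine (norm_polar_zero_sub_le (i.pos * i.size) t').trans ?_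
    simp only [mem_Icc] at hp
    gcongr
    rw [abs_le]
    constructor <;> linarith [i.size_pos]
  have h6 : ‖polar (0, t) - P.dir (P.κ b (polar (s, t)))‖ ≤ Real.exp (-s) := by
    rw [P.dir_κ (polar_ne_zero _), shrink_polar hs]
    have : polar (0, t) - ((1 - Real.exp (-s) : ℝ) : ℂ) * polar (0, t) = polar (s, t) := by
      rw [polar_eq_mul s]; push_cast; ring
    rw [this, norm_polar]
  have h7 : P.cells.K * P.cells.e i = 20 * i.size := rfl
  calc _ = ‖(C.Φ (P.κ b (polar (s, t))) - P.cells.z i) + (P.cells.z i - polar (0, t)) +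
        (polar (0, t) - P.dir (P.κ b (polar (s, t))))‖ := by congr 1; ring
    _ ≤ 20 * i.size + 7 * i.size + Real.exp (-s) :=
        norm_add₃_le.trans (by rw [← h7]; gcongr)
    _ = _ := by rw [h1]; ring

theorem continuous_ext : Continuous C.ext := by
  rw [continuous_iff_continuousAt]
  intro p
  have hfst : Continuous fun q : P.blowup => q.1.1 := by fun_prop
  by_cases hp : p.1.1 = w
  · rw [ContinuousAt]
    have h0 : C.ext p = p.1.2 := by rw [ext, if_pos hp]
    have hs : Tendsto (fun q : P.blowup => q.1.2) (𝓝 p) (𝓝 (C.ext p)) := by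
      rw [h0]; exact (by fun_prop : Continuous fun q : P.blowup => q.1.2).tendsto p
    have hdiff : Tendsto (fun q : P.blowup => C.ext q - q.1.2) (𝓝 p) (𝓝 0) := by
      rw [Metric.tendsto_nhds]
      intro η hη
      have hlim : Tendsto (fun n : ℕ => (28 : ℝ) * (1 / 2) ^ n) atTop (𝓝 (28 * 0)) :=
        (tendsto_pow_atTop_nhds_zero_of_lt_one (by norm_num) (by norm_num)).const_mul _
      rw [mul_zero] at hlim
      obtain ⟨n, hn⟩ := (hlim.eventually_lt_const hη).exists
      have h1 := (hfst.tendsto p)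
      rw [hp] at h1
      filter_upwards [h1 (P.mem_nhds (Real.exp (-n)) (Real.exp_pos _))] with q hq
      rw [dist_zero_right]
      by_cases hqw : q.1.1 = w
      · rw [ext, if_pos hqw, sub_self, norm_zero]; exact hη
      · have hq2 := (q.2.resolve_right fun h => hqw h.1).2
        rw [ext, if_neg hqw, hq2]
        obtain ⟨b, v, hv, hqv : P.κ b v = q.1.1⟩ := mem_iUnion.1 hq
        have hv0 : v ≠ 0 := by
          rintro rfl
          exact hqw (by rw [← hqv, P.map_zero])
        obtain ⟨t, -, -, ht⟩ := exists_polar_eq hv0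
        have hv1 : ‖v‖ < Real.exp (-n) := by simpa using hv
        set s := -Real.log ‖v‖ with hsdef
        have hsn : (n : ℝ) ≤ s := by

          have h3 := Real.log_le_log (norm_pos_iff.2 hv0) hv1.le
          rw [Real.log_exp] at h3
          linarith
        have hs0 : 0 ≤ s := (Nat.cast_nonneg n).trans hsn
        rw [← hqv, ← ht]
        refine (C.norm_Φ_sub_dir_le b hs0 t).trans_lt (lt_of_le_of_lt ?_ hn)
        have h4 : (1 : ℝ) / 2 ^ ⌊s⌋₊ ≤ (1 / 2) ^ n := by
          rw [one_div_pow]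
          exact one_div_le_one_div_of_le (by positivity)
            (pow_le_pow_right₀ (by norm_num) (Nat.le_floor hsn))
        have h5 : Real.exp (-s) ≤ (1 / 2) ^ n := by
          calc Real.exp (-s) ≤ Real.exp (-n) := Real.exp_le_exp.2 (by linarith)
            _ = (Real.exp (-1)) ^ n := by rw [← Real.exp_nat_mul]; congr 1; ring
            _ ≤ (1 / 2) ^ n := by
              gcongr
              have := Real.exp_neg_one_lt_d9
              linarith
        calc _ = 27 * (1 / 2 ^ ⌊s⌋₊) + Real.exp (-s) := by ring
          _ ≤ 27 * (1 / 2) ^ n + (1 / 2) ^ n := by gcongr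
          _ = _ := by ring
    simpa using hdiff.add hs
  · obtain ⟨k, t, ht, hk⟩ := C.locallyLipschitz_Φ _ hp
    have h1 : ContinuousAt C.Φ p.1.1 := hk.continuousOn.continuousAt ht
    have h2 : ContinuousAt (fun q : P.blowup => C.Φ q.1.1) p :=
      h1.comp_of_eq hfst.continuousAt rfl
    refine h2.congr ?_
    filter_upwards [hfst.continuousAt (isOpen_compl_singleton.mem_nhds hp)] with q hq
    exact (if_neg hq).symm

/-- The map inducing the metric of the blowup. -/
noncomputable def embed (lam : ℝ) (p : P.blowup) : C(X, ℝ) × ℂ × C(X, ℝ) :=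
  (collapsed w ε p.1.1, lam • C.ext p, lam • C.f p.1.1)

variable {lam : ℝ}

theorem injective_embed (hlam : 0 < lam) : Function.Injective (C.embed lam) := by
  intro p q h
  simp only [embed, Prod.mk.injEq] at h
  obtain ⟨-, h1, h2⟩ := h
  have h3 : p.1.1 = q.1.1 := C.injective_f (smul_right_injective _ hlam.ne' h2)
  have h4 : C.ext p = C.ext q := smul_right_injective _ hlam.ne' h1
  by_cases hp : p.1.1 = w
  · refine Subtype.ext (Prod.ext h3 ?_)
    rwa [ext, ext, if_pos hp, if_pos (h3 ▸ hp)] at h4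
  · rw [P.eq_lift hp, P.eq_lift (p := q) (h3 ▸ hp), h3]

theorem isClosedEmbedding_embed (hlam : 0 < lam) :
    Topology.IsClosedEmbedding (C.embed lam) := by
  have h1 : Continuous (collapsed w ε) :=
    (LipschitzWith.of_dist_le_mul (K := 1) fun x y => by
      simpa using dist_collapsed_le (w := w) (ε := ε) x y).continuous
  have h2 : Continuous C.f := C.lipschitz_f.choose_spec.continuous
  have h3 := C.continuous_ext
  refine Continuous.isClosedEmbedding ?_ (C.injective_embed hlam)
  unfold embed
  fun_prop

theorem dist_embed_lift_le (hlam : 0 ≤ lam) {k : ℝ} {x y : X} (hx : x ≠ w) (hy : y ≠ w)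
    (hk : 0 ≤ k) (hΦ : ‖C.Φ x - C.Φ y‖ ≤ k * dist x y) (hf : dist (C.f x) (C.f y) ≤ k * dist x y) :
    dist (C.embed lam (P.lift x)) (C.embed lam (P.lift y)) ≤ (1 + lam * k) * dist x y := by
  have hxy := dist_nonneg (x := x) (y := y)
  have h0 : 0 ≤ lam * k * dist x y := by positivity
  simp only [embed, Prod.dist_eq, P.lift_fst, C.ext_lift hx, C.ext_lift hy, dist_smul₀,
    Real.norm_of_nonneg hlam]
  refine max_le ?_ (max_le ?_ ?_)
  · have := dist_collapsed_le (w := w) (ε := ε) x y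
    linarith
  · rw [dist_eq_norm]
    have := mul_le_mul_of_nonneg_left hΦ hlam
    linarith
  · have := mul_le_mul_of_nonneg_left hf hlam
    rw [dist_eq_norm, ← smul_sub, norm_smul, Real.norm_of_nonneg hlam, ← dist_eq_norm]
    linarith

end Coord

end Petals

namespace Petals.Coord

variable {X : Type*} [MetricSpace X] [CompactSpace X] {w : X} {ε : ℝ} {P : Petals w ε}
  (C : P.Coord) {lam : ℝ}

theorem joined_cell (hlam : 0 ≤ lam) {i : CellIndex} {x y : X} (hx : x ∈ P.cells.Q i)
    (hy : y ∈ P.cells.Q i) :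
    JoinedWithin (C.embed lam) univ (P.lift x) (P.lift y)
      (ENNReal.ofReal (lam * C.B * i.size)) := by
  have hne : ∀ u ∈ ⋃ i, P.cells.U i, u ≠ w := by
    rintro u hu rfl
    obtain ⟨i, hi⟩ := mem_iUnion.1 hu
    exact P.cells.notMem_U i hi
  have hball : ∀ u ∈ ⋃ i, P.cells.U i, dist u w ≤ ε := by
    intro u hu
    obtain ⟨i, hi⟩ := mem_iUnion.1 hu
    exact P.U_subset i hi
  have h := (C.joined i x hx y hy).map (j' := C.embed lam) (g := P.lift)
    (K := ENNReal.ofReal lam) (P.continuousOn_lift.mono fun u hu => hne u hu) ?_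
  · rw [← ENNReal.ofReal_mul hlam, ← mul_assoc] at h
    exact h.mono (subset_univ _) le_rfl
  · intro u hu v hv
    rw [edist_dist, edist_dist, ← ENNReal.ofReal_mul hlam]
    apply ENNReal.ofReal_le_ofReal
    simp only [embed, Prod.dist_eq, P.lift_fst, C.ext_lift (hne u hu), C.ext_lift (hne v hv),
      collapsed_eq (hball u hu) (hball v hv), dist_self]
    rw [dist_eq_norm (lam • C.f u), ← smul_sub, norm_smul, ← dist_eq_norm, dist_smul₀,
      Real.norm_of_nonneg hlam, mul_max_of_nonneg _ _ hlam]
    exact max_le (le_max_of_le_left (by positivity)) le_rfl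

/-- The point of the blowup with given polar coordinates. -/
noncomputable def pt (P : Petals w ε) (b : Bool) (s t : ℝ) : P.blowup :=
  P.lift (P.κ b (polar (s, t)))

theorem joined_pt_rim (hlam : 0 < lam) (b : Bool) (n : ℕ) (t : ℝ) :
    JoinedWithin (C.embed lam) univ (pt P b n t) (P.rim (turn t))
      (ENNReal.ofReal (lam * C.B * (2 / 2 ^ n))) := by
  have hB := C.B_nonneg
  have hsum : HasSum (fun k : ℕ => lam * C.B * (1 / 2 ^ (n + k))) (lam * C.B * (2 / 2 ^ n)) := by
    have h := (hasSum_geometric_two.mul_left (lam * C.B * (1 / 2 ^ n)))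
    have h1 : (fun k : ℕ => lam * C.B * (1 / 2 ^ n) * (1 / 2 : ℝ) ^ k)
        = fun k : ℕ => lam * C.B * (1 / 2 ^ (n + k)) := by
      ext k
      rw [pow_add, one_div_pow]
      field_simp
    rw [h1] at h
    have h2 : lam * C.B * (1 / 2 ^ n) * 2 = lam * C.B * (2 / 2 ^ n) := by ring
    rwa [h2] at h
  have htsum : ∑' k : ℕ, ENNReal.ofReal (lam * C.B * (1 / 2 ^ (n + k)))
      = ENNReal.ofReal (lam * C.B * (2 / 2 ^ n)) := by
    rw [← ENNReal.ofReal_tsum_of_nonneg (fun k => by positivity) hsum.summable, hsum.tsum_eq]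
  rw [← htsum]
  have h0 : pt P b n t = pt P b ((n + 0 : ℕ) : ℝ) t := by simp
  rw [h0]
  refine JoinedWithin.infinite_concat (x := fun k => pt P b ((n + k : ℕ) : ℝ) t)
    (C.isClosedEmbedding_embed hlam) ?_ ?_ ?_
  · rw [tendsto_subtype_rng]
    have hexp : Tendsto (fun k : ℕ => Real.exp (-((n + k : ℕ) : ℝ))) atTop (𝓝 0) := by
      refine Real.tendsto_exp_neg_atTop_nhds_zero.comp (tendsto_natCast_atTop_atTop.comp ?_)
      simpa [add_comm] using tendsto_add_atTop_nat n
    have hexp' : Tendsto (fun k : ℕ => ((Real.exp (-((n + k : ℕ) : ℝ)) : ℝ) : ℂ)) atTop (𝓝 0) := by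
      exact (Complex.continuous_ofReal.tendsto 0).comp hexp
    have h1 : Tendsto (fun k : ℕ => polar (((n + k : ℕ) : ℝ), t)) atTop (𝓝 0) := by
      have := hexp'.mul_const (polar (0, t))
      rw [zero_mul] at this
      exact this.congr fun k => (polar_eq_mul _ t).symm
    have h2 : Tendsto (fun k : ℕ => shrink (polar (((n + k : ℕ) : ℝ), t))) atTop
        (𝓝 (polar (0, t))) := by
      have := (hexp'.const_sub 1).mul_const (polar (0, t))
      rw [sub_zero, one_mul] at this
      refine this.congr fun k => ?_
      rw [shrink_polar (Nat.cast_nonneg _)]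
      push_cast
      rfl
    have h3 := ((P.continuous_κ b).tendsto 0).comp h1
    rw [P.map_zero] at h3
    refine (h3.prodMk_nhds h2).congr fun k => ?_
    rw [pt, P.lift_val (P.κ_ne (polar_ne_zero _)), P.dir_κ (polar_ne_zero _)]
    rfl
  · intro k
    obtain ⟨i, hi, hQ⟩ := P.exists_cell_of_angle b (n + k) t
    have := C.joined_cell hlam.le (hQ ((n + k : ℕ) : ℝ) ⟨le_rfl, by linarith⟩)
      (hQ ((n + k : ℕ) + 1 : ℝ) ⟨by linarith, le_rfl⟩)
    rw [hi] at this
    have hcast : ((n + (k + 1) : ℕ) : ℝ) = (n + k : ℕ) + 1 := by push_cast; ring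
    simpa only [pt, hcast] using this
  · rw [htsum]
    exact ENNReal.ofReal_ne_top

theorem joined_pt_rim_floor (hlam : 0 < lam) (b : Bool) {s : ℝ} {n : ℕ} (hs : n ≤ s) (t : ℝ) :
    JoinedWithin (C.embed lam) univ (pt P b s t) (P.rim (turn t))
      (ENNReal.ofReal (lam * C.B * (3 / 2 ^ n))) := by
  have hB := C.B_nonneg
  have hs0 : 0 ≤ s := (Nat.cast_nonneg n).trans hs
  obtain ⟨i, hi, hQ⟩ := P.exists_cell_of_angle b ⌊s⌋₊ t
  have h1 := C.joined_cell hlam.le (hQ s ⟨Nat.floor_le hs0, (Nat.lt_floor_add_one s).le⟩)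
    (hQ ⌊s⌋₊ ⟨le_rfl, by linarith⟩)
  refine (h1.trans (C.joined_pt_rim hlam b ⌊s⌋₊ t)).mono (subset_univ _) ?_
  rw [← ENNReal.ofReal_add (by have := i.size_pos; positivity) (by positivity), hi, ← mul_add]
  apply ENNReal.ofReal_le_ofReal
  have h2 : (2 : ℝ) ^ n ≤ 2 ^ ⌊s⌋₊ := pow_le_pow_right₀ (by norm_num) (Nat.le_floor hs)
  rw [← add_div]
  gcongr
  norm_num

theorem joined_rim_rim_of_mem (hlam : 0 < lam) {n : ℕ} {k : ℤ} {t t' : ℝ}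
    (ht : t ∈ Icc (k / 2 ^ n : ℝ) ((k + 1) / 2 ^ n))
    (ht' : t' ∈ Icc (k / 2 ^ n : ℝ) ((k + 1) / 2 ^ n)) :
    JoinedWithin (C.embed lam) univ (P.rim (turn t)) (P.rim (turn t'))
      (ENNReal.ofReal (lam * C.B * (5 / 2 ^ n))) := by
  have hB := C.B_nonneg
  obtain ⟨i, hi, hQ⟩ := P.exists_cell true n k
  have h1 := C.joined_cell hlam.le (hQ n ⟨le_rfl, by linarith⟩ t ht)
    (hQ n ⟨le_rfl, by linarith⟩ t' ht')
  refine (((C.joined_pt_rim hlam true n t).symm.trans h1).trans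
    (C.joined_pt_rim hlam true n t')).mono (subset_univ _) (le_of_eq ?_)
  rw [hi, ← ENNReal.ofReal_add (by positivity) (by positivity),
    ← ENNReal.ofReal_add (by positivity) (by positivity)]
  congr 1
  ring

theorem joined_rim_rim (hlam : 0 < lam) {n : ℕ} {t t' : ℝ} (h : |t' - t| ≤ 1 / 2 ^ n) :
    JoinedWithin (C.embed lam) univ (P.rim (turn t)) (P.rim (turn t'))
      (ENNReal.ofReal (lam * C.B * (10 / 2 ^ n))) := by
  have hB := C.B_nonneg
  wlog htt : t ≤ t' generalizing t t'
  · exact (this (by rwa [abs_sub_comm]) (not_le.1 htt).le).symm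
  rw [abs_of_nonneg (by linarith)] at h
  have h2 : (0 : ℝ) < 2 ^ n := by positivity
  have hk1 := Int.floor_le (t * 2 ^ n)
  have hk2 := (Int.lt_floor_add_one (t * 2 ^ n)).le
  set k := ⌊t * 2 ^ n⌋ with hk
  have ht : t ∈ Icc (k / 2 ^ n : ℝ) ((k + 1) / 2 ^ n) := by
    rw [mem_Icc, div_le_iff₀ h2, le_div_iff₀ h2]
    exact ⟨hk1, hk2⟩
  rcases le_total t' ((k + 1) / 2 ^ n) with h3 | h3
  · refine (C.joined_rim_rim_of_mem hlam ht ⟨ht.1.trans htt, h3⟩).mono (subset_univ _)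
      (ENNReal.ofReal_le_ofReal ?_)
    gcongr
    norm_num
  · have h4 : ((k + 1) / 2 ^ n : ℝ) ∈ Icc (k / 2 ^ n : ℝ) ((k + 1) / 2 ^ n) :=
      ⟨by gcongr; linarith, le_rfl⟩
    have h5 : ((k + 1) / 2 ^ n : ℝ) ∈ Icc ((k + 1 : ℤ) / 2 ^ n : ℝ)
        (((k + 1 : ℤ) + 1) / 2 ^ n) := by
      push_cast
      exact ⟨le_rfl, by gcongr; linarith⟩
    have h6 : t' ∈ Icc ((k + 1 : ℤ) / 2 ^ n : ℝ) (((k + 1 : ℤ) + 1) / 2 ^ n) := by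
      push_cast
      refine ⟨h3, ?_⟩
      have h7 := ht.2
      calc t' ≤ (k + 1) / 2 ^ n + 1 / 2 ^ n := by linarith
        _ = _ := by ring
    refine ((C.joined_rim_rim_of_mem hlam ht h4).trans
      (C.joined_rim_rim_of_mem hlam h5 h6)).mono (subset_univ _) (le_of_eq ?_)
    rw [← ENNReal.ofReal_add (by positivity) (by positivity)]
    congr 1
    ring

/-- The points over the closed unit balls of the petals are at bounded distance. -/
theorem joined_core (hlam : 0 < lam) {p q : P.blowup}
    (hp : p.1.1 ∈ ⋃ b, P.κ b '' closedBall 0 1) (hq : q.1.1 ∈ ⋃ b, P.κ b '' closedBall 0 1) :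
    JoinedWithin (C.embed lam) univ p q (ENNReal.ofReal (lam * (16 * C.B))) := by
  have hB := C.B_nonneg
  have key : ∀ p : P.blowup, p.1.1 ∈ ⋃ b, P.κ b '' closedBall 0 1 → ∃ t ∈ Ico (0 : ℝ) 1,
      JoinedWithin (C.embed lam) univ p (P.rim (turn t)) (ENNReal.ofReal (lam * C.B * 3)) := by
    intro p hp
    by_cases hpw : p.1.1 = w
    · obtain ⟨u, rfl⟩ := P.exists_eq_rim hpw
      obtain ⟨t, ht⟩ := exists_turn_eq u
      refine ⟨Int.fract t, ⟨Int.fract_nonneg _, Int.fract_lt_one _⟩, ?_⟩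
      have : turn (Int.fract t) = u := by
        rw [ht]
        exact Circle.ext (polar_eq_polar.2 ⟨rfl, -⌊t⌋, by simp [Int.fract, sub_eq_add_neg]⟩)
      rw [this]
      exact (JoinedWithin.refl (mem_univ _)).mono (subset_univ _) zero_le
    · obtain ⟨b, v, hv, hpv⟩ := mem_iUnion.1 hp
      have hv0 : v ≠ 0 := by
        rintro rfl
        exact hpw (by rw [← hpv, P.map_zero])
      obtain ⟨t, ht0, ht1, ht⟩ := exists_polar_eq hv0
      refine ⟨t, ⟨ht0, ht1⟩, ?_⟩
      have hs : ((0 : ℕ) : ℝ) ≤ -Real.log ‖v‖ := by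
        have := Real.log_nonpos (norm_nonneg v) (by simpa using hv)
        simpa using this
      have h1 := C.joined_pt_rim_floor hlam b hs t
      rw [pt, ht, hpv, ← P.eq_lift hpw] at h1
      simpa using h1
  obtain ⟨t, ht, h1⟩ := key p hp
  obtain ⟨t', ht', h2⟩ := key q hq
  have h3 := C.joined_rim_rim (n := 0) hlam (t := t) (t' := t')
    (by rw [pow_zero, div_one, abs_le]; constructor <;> linarith [ht.1, ht.2, ht'.1, ht'.2])
  refine ((h1.trans h3).trans h2.symm).mono (subset_univ _) (le_of_eq ?_)
  rw [← ENNReal.ofReal_add (by positivity) (by positivity),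
    ← ENNReal.ofReal_add (by positivity) (by positivity)]
  congr 1
  ring

theorem eventually_inducedLength_rim_lt (hlam : 0 < lam) (u : Circle) {η : ℝ≥0∞} (hη : 0 < η) :
    ∀ᶠ q in 𝓝 (P.rim u), inducedLength (C.embed lam) (P.rim u) q < η := by
  have hB := C.B_nonneg
  obtain ⟨n, hn⟩ : ∃ n : ℕ, ENNReal.ofReal (lam * C.B * (13 / 2 ^ n)) < η := by
    have h1 : Tendsto (fun n : ℕ => ENNReal.ofReal (lam * C.B * 13 * (1 / 2) ^ n)) atTop
        (𝓝 (ENNReal.ofReal (lam * C.B * 13 * 0))) :=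
      ENNReal.tendsto_ofReal
        ((tendsto_pow_atTop_nhds_zero_of_lt_one (by norm_num) (by norm_num)).const_mul _)
    rw [mul_zero, ENNReal.ofReal_zero] at h1
    obtain ⟨n, hn⟩ := (h1.eventually_lt_const hη).exists
    refine ⟨n, ?_⟩
    convert hn using 2
    rw [one_div_pow]
    ring
  obtain ⟨t, rfl⟩ := exists_turn_eq u
  have hfst : Continuous fun q : P.blowup => q.1.1 := by fun_prop
  have hsnd : Continuous fun q : P.blowup => q.1.2 := by fun_prop
  have hδ : (0 : ℝ) < 1 / 2 ^ n := by positivity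
  have hO : polar '' (univ ×ˢ Ioo (t - 1 / 2 ^ n) (t + 1 / 2 ^ n)) ∈ 𝓝 (polar (0, t)) :=
    (isOpen_image_polar (isOpen_univ.prod isOpen_Ioo)).mem_nhds
      ⟨(0, t), ⟨mem_univ _, by linarith, by linarith⟩, rfl⟩

  have hrim : ∀ t', |t' - t| < 1 / 2 ^ n → JoinedWithin (C.embed lam) univ (P.rim (turn t))
      (P.rim (turn t')) (ENNReal.ofReal (lam * C.B * (10 / 2 ^ n))) := fun t' ht' =>
    C.joined_rim_rim hlam ht'.le
  have hle : ENNReal.ofReal (lam * C.B * (10 / 2 ^ n)) ≤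
      ENNReal.ofReal (lam * C.B * (13 / 2 ^ n)) := by
    apply ENNReal.ofReal_le_ofReal
    gcongr
    norm_num
  have hfst' : Tendsto (fun q : P.blowup => q.1.1) (𝓝 (P.rim (turn t))) (𝓝 w) := hfst.tendsto _
  have hsnd' : Tendsto (fun q : P.blowup => q.1.2) (𝓝 (P.rim (turn t))) (𝓝 (polar (0, t))) :=
    hsnd.tendsto _
  filter_upwards [hsnd' hO, hfst' (P.mem_nhds (Real.exp (-n)) (Real.exp_pos _))] with q hq2 hq1
  obtain ⟨⟨s', t'⟩, ⟨-, ht'1, ht'2⟩, hpol : polar (s', t') = q.1.2⟩ := hq2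
  have ht' : |t' - t| < 1 / 2 ^ n := by
    dsimp only at ht'1 ht'2
    rw [abs_lt]; constructor <;> linarith
  refine lt_of_le_of_lt ?_ hn
  by_cases hqw : q.1.1 = w
  · have : q = P.rim (turn t') := by
      obtain ⟨u, rfl⟩ := P.exists_eq_rim hqw
      congr 1
      apply Circle.ext
      have h3 : polar (s', t') = u := hpol
      have h4 : Real.exp (-s') = 1 := by
        have := norm_polar (s', t')
        rw [h3, Circle.norm_coe] at this
        exact this.symm
      rw [← h3, polar_eq_mul, h4, coe_turn]
      simp
    rw [this]
    exact (hrim t' ht').inducedLength_le.trans hle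
  · obtain ⟨b, v, hv, hqv : P.κ b v = q.1.1⟩ := mem_iUnion.1 hq1
    have hv0 : v ≠ 0 := by
      rintro rfl
      exact hqw (by rw [← hqv, P.map_zero])
    obtain ⟨t₁, -, -, ht₁⟩ := exists_polar_eq hv0
    have hv1 : ‖v‖ < Real.exp (-n) := by simpa using hv
    set s := -Real.log ‖v‖ with hsdef
    have hsn : (n : ℝ) < s := by
      have h3 := Real.log_lt_log (norm_pos_iff.2 hv0) hv1
      rw [Real.log_exp] at h3
      linarith
    have hs0 : 0 < s := (Nat.cast_nonneg n).trans_lt hsn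
    have hpt : q = pt P b s t₁ := by rw [pt, ht₁, hqv, ← P.eq_lift hqw]
    have hturn : turn t₁ = turn t' := by
      have h3 : q.1.2 = ((1 - Real.exp (-s) : ℝ) : ℂ) * polar (0, t₁) := by
        rw [hpt, pt, P.lift_val (P.κ_ne (polar_ne_zero _)), P.dir_κ (polar_ne_zero _),
          shrink_polar hs0.le]
      have hpos : 0 < 1 - Real.exp (-s) := by
        have : Real.exp (-s) < 1 := Real.exp_lt_one_iff.2 (by linarith)
        linarith
      have h4 : polar (s', t') = polar (-Real.log (1 - Real.exp (-s)), t₁) := by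
        rw [hpol, h3, polar_eq_mul (-Real.log (1 - Real.exp (-s))),
          neg_neg (Real.log (1 - _)), Real.exp_log hpos]
      obtain ⟨-, l, hl⟩ := polar_eq_polar.1 h4
      exact Circle.ext (polar_eq_polar.2 ⟨rfl, -l, by simp only at hl; rw [hl]; push_cast; ring⟩)
    have h5 := (C.joined_pt_rim_floor hlam b hsn.le t₁).symm
    rw [hturn, ← hpt] at h5
    refine ((hrim t' ht').trans h5).inducedLength_le.trans (le_of_eq ?_)
    rw [← ENNReal.ofReal_add (by positivity) (by positivity)]
    congr 1
    ring

end Petals.Coord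

namespace Petals

variable {X : Type*} [MetricSpace X] {w : X} {ε : ℝ} (P : Petals w ε)

/-- The union of the closed unit balls of the petals. -/
def core : Set X := ⋃ b, P.κ b '' closedBall 0 1

/-- The complement of the open unit balls of the petals. -/
def outer : Set X := (⋃ b, P.κ b '' ball 0 1)ᶜ

theorem isClosed_core : IsClosed P.core :=
  isClosed_iUnion_of_finite fun b => P.isClosed_image_closedBall b 1

theorem isClosed_outer : IsClosed P.outer := by
  rw [outer, isClosed_compl_iff, isOpen_iff_mem_nhds]
  intro x hx
  by_cases hxw : x = w
  · subst hxw
    exact P.mem_nhds 1 one_pos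
  · obtain ⟨b, v, hv, rfl⟩ := mem_iUnion.1 hx
    have hv0 : v ≠ 0 := by
      rintro rfl
      exact hxw (P.map_zero b)
    exact mem_of_superset (P.image_mem_nhds hv0 (isOpen_ball.mem_nhds hv))
      (subset_iUnion (fun b => P.κ b '' ball 0 1) b)

theorem mem_outer_of_notMem_core {x : X} (h : x ∉ P.core) : x ∈ P.outer :=
  fun h' => h (iUnion_mono (fun _ => image_mono ball_subset_closedBall) h')

theorem ne_of_mem_outer {x : X} (h : x ∈ P.outer) : x ≠ w := by
  rintro rfl
  exact h (mem_iUnion.2 ⟨true, 0, mem_ball_self one_pos, P.map_zero true⟩)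

end Petals

namespace Petals.Coord

variable {X : Type*} [MetricSpace X] [CompactSpace X] {w : X} {ε : ℝ} {P : Petals w ε}
  (C : P.Coord) {lam : ℝ}

theorem exists_lipschitzOn_outer :
    ∃ k : NNReal, LipschitzOnWith k C.Φ P.outer ∧ LipschitzWith k C.f := by
  obtain ⟨k₁, h₁⟩ := LocallyLipschitzOn.exists_lipschitzOnWith_of_compact (f := C.Φ)
    P.isClosed_outer.isCompact fun x hx => by
      obtain ⟨k, t, ht, hk⟩ := C.locallyLipschitz_Φ x (P.ne_of_mem_outer hx)
      exact ⟨k, t, mem_nhdsWithin_of_mem_nhds ht, hk⟩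
  obtain ⟨k₂, h₂⟩ := C.lipschitz_f
  exact ⟨max k₁ k₂, h₁.weaken (le_max_left _ _), h₂.weaken (le_max_right _ _)⟩

theorem joined_lift (hlam : 0 ≤ lam) {Ω : Set X} (hΩ : w ∉ Ω) {k : NNReal}
    (hΦ : LipschitzOnWith k C.Φ Ω) (hf : LipschitzWith k C.f) {x y : X} {ℓ : ℝ≥0∞}
    (h : JoinedWithin id Ω x y ℓ) : JoinedWithin (C.embed lam) univ (P.lift x) (P.lift y)
      (ENNReal.ofReal (1 + lam * k) * ℓ) := by
  have hne : ∀ u ∈ Ω, u ≠ w := fun u hu hw => hΩ (hw ▸ hu)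
  refine (h.map (P.continuousOn_lift.mono fun u hu => hne u hu) ?_).mono (subset_univ _) le_rfl
  intro u hu v hv
  rw [edist_dist, edist_dist, ← ENNReal.ofReal_mul (by positivity)]
  apply ENNReal.ofReal_le_ofReal
  refine C.dist_embed_lift_le hlam (hne u hu) (hne v hv) k.2 ?_ (hf.dist_le_mul u v)
  rw [← dist_eq_norm]
  exact hΦ.dist_le_mul u hu v hv

theorem eventually_inducedLength_lt (hX : HasShortPaths X) (hlam : 0 < lam) (p : P.blowup)
    {η : ℝ≥0∞} (hη : 0 < η) : ∀ᶠ q in 𝓝 p, inducedLength (C.embed lam) p q < η := by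
  by_cases hp : p.1.1 = w
  · obtain ⟨u, rfl⟩ := P.exists_eq_rim hp
    exact C.eventually_inducedLength_rim_lt hlam u hη
  obtain ⟨k₁, t, ht, h₁⟩ := C.locallyLipschitz_Φ _ hp
  obtain ⟨k₂, h₂⟩ := C.lipschitz_f
  set k := max k₁ k₂ with hk
  obtain ⟨r, hr, hrt⟩ := Metric.mem_nhds_iff.1
    (inter_mem ht (isOpen_compl_singleton.mem_nhds hp))
  obtain ⟨ρ, hρ0, hρr, hρ⟩ : ∃ ρ : ℝ, 0 < ρ ∧ ρ ≤ r ∧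
      ENNReal.ofReal (1 + lam * k) * ENNReal.ofReal ρ < η := by
    have h3 : Tendsto (fun ρ : ℝ => ENNReal.ofReal ((1 + lam * k) * ρ)) (𝓝[>] 0)
        (𝓝 (ENNReal.ofReal ((1 + lam * k) * 0))) :=
      ENNReal.tendsto_ofReal (((continuous_const.mul continuous_id).tendsto 0).mono_left
        nhdsWithin_le_nhds)
    rw [mul_zero, ENNReal.ofReal_zero] at h3
    obtain ⟨ρ, h4, h5⟩ := ((h3.eventually_lt_const hη).and (Ioo_mem_nhdsGT hr)).exists
    refine ⟨ρ, h5.1, h5.2.le, ?_⟩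
    rwa [← ENNReal.ofReal_mul (by positivity)]
  have hfst : Continuous fun q : P.blowup => q.1.1 := by fun_prop
  filter_upwards [hfst.continuousAt (ball_mem_nhds p.1.1 hρ0)] with q hq
  have hq' : q.1.1 ∈ ball p.1.1 ρ := hq
  have hsub : ball p.1.1 ρ ⊆ t ∩ {w}ᶜ := (ball_subset_ball hρr).trans hrt
  have h6 : JoinedWithin id (ball p.1.1 ρ) p.1.1 q.1.1 (ENNReal.ofReal ρ) :=
    hX.joinedWithin_ball (by rwa [dist_comm])
  have h7 := C.joined_lift hlam.le (fun hw => (hsub hw).2 rfl)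
    ((h₁.mono (hsub.trans inter_subset_left)).weaken (le_max_left _ k₂))
    (h₂.weaken (le_max_right k₁ _)) h6
  rw [← P.eq_lift hp, ← P.eq_lift (hsub hq').2] at h7
  exact h7.inducedLength_le.trans_lt hρ

theorem joined_of_dist_lt (hX : HasShortPaths X) (hlam : 0 < lam) {k : NNReal}
    (hΦ : LipschitzOnWith k C.Φ P.outer) (hf : LipschitzWith k C.f) {p q : P.blowup} {ℓ : ℝ}
    (h : dist p.1.1 q.1.1 < ℓ) : JoinedWithin (C.embed lam) univ p q
      (ENNReal.ofReal ((1 + lam * k) * ℓ + lam * (16 * C.B))) := by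
  have hB := C.B_nonneg
  have hℓ : 0 ≤ ℓ := dist_nonneg.trans h.le
  obtain ⟨γ, -, hγ⟩ := hX _ _ _ h
  have hw : w ∉ P.outer := fun h => P.ne_of_mem_outer h rfl
  have hseg : ∀ a b : I, a ≤ b → (∀ t ∈ Icc a b, γ t ∈ P.outer) →
      JoinedWithin (C.embed lam) univ (P.lift (γ a)) (P.lift (γ b))
        (ENNReal.ofReal (1 + lam * k) * eVariationOn (id ∘ γ) (Icc a b)) := fun a b hab hT =>
    C.joined_lift hlam.le hw hΦ hf ((JoinedWithin.of_subpath id γ hab).mono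
      (image_subset_iff.2 hT) le_rfl)
  rw [ENNReal.ofReal_add (by positivity) (by positivity), ENNReal.ofReal_mul (by positivity)]
  have hH : IsClosed (γ ⁻¹' P.core) := P.isClosed_core.preimage γ.continuous
  have hT : IsClosed (γ ⁻¹' P.outer) := P.isClosed_outer.preimage γ.continuous
  have hlift : ∀ r : P.blowup, r.1.1 ∉ P.core → P.lift r.1.1 = r := fun r hr =>
    (P.eq_lift (P.ne_of_mem_outer (P.mem_outer_of_notMem_core hr))).symm
  rcases (γ ⁻¹' P.core).eq_empty_or_nonempty with hemp | hne
  · have hno : ∀ t, γ t ∉ P.core := fun t ht => by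
      have : t ∈ γ ⁻¹' P.core := ht
      rw [hemp] at this
      exact this
    have h1 := hseg 0 1 zero_le_one fun t _ => P.mem_outer_of_notMem_core (hno t)
    have hp := hno 0
    have hq := hno 1
    rw [γ.source] at h1 hp
    rw [γ.target] at h1 hq
    rw [hlift p hp, hlift q hq] at h1
    refine h1.mono (subset_univ _) (le_add_right (mul_le_mul_right ?_ _))
    exact (eVariationOn.mono _ (subset_univ _)).trans hγ
  · obtain ⟨a, ha⟩ := hH.isCompact.exists_isLeast hne
    obtain ⟨b, hb⟩ := hH.isCompact.exists_isGreatest hne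
    have hab : a ≤ b := ha.2 hb.1
    obtain ⟨p', hp', h1⟩ : ∃ p' : P.blowup, p'.1.1 ∈ P.core ∧ JoinedWithin (C.embed lam) univ p p'
        (ENNReal.ofReal (1 + lam * k) * eVariationOn (id ∘ γ) (Icc 0 a)) := by
      rcases (unitInterval.nonneg' : 0 ≤ a).eq_or_lt with h0 | h0
      · refine ⟨p, ?_, (JoinedWithin.refl (mem_univ _)).mono (subset_univ _) zero_le⟩
        have := ha.1
        rwa [← h0, mem_preimage, γ.source] at this
      · refine ⟨P.lift (γ a), by rw [P.lift_fst]; exact ha.1, ?_⟩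
        have hout : ∀ t < a, γ t ∉ P.core := fun t ht h => not_lt.2 (ha.2 h) ht
        have h2 : Icc 0 a ⊆ γ ⁻¹' P.outer := by
          rw [← closure_Ico h0.ne]
          exact hT.closure_subset_iff.2 fun t ht => P.mem_outer_of_notMem_core (hout t ht.2)
        have h3 := hseg 0 a h0.le h2
        have hp := hout 0 h0
        rw [γ.source] at h3 hp
        rwa [hlift p hp] at h3
    obtain ⟨q', hq', h2⟩ : ∃ q' : P.blowup, q'.1.1 ∈ P.core ∧ JoinedWithin (C.embed lam) univ q' q
        (ENNReal.ofReal (1 + lam * k) * eVariationOn (id ∘ γ) (Icc b 1)) := by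
      rcases (unitInterval.le_one' : b ≤ 1).eq_or_lt with h0 | h0
      · refine ⟨q, ?_, (JoinedWithin.refl (mem_univ _)).mono (subset_univ _) zero_le⟩
        have := hb.1
        rwa [h0, mem_preimage, γ.target] at this
      · refine ⟨P.lift (γ b), by rw [P.lift_fst]; exact hb.1, ?_⟩
        have hout : ∀ t, b < t → γ t ∉ P.core := fun t ht h => not_lt.2 (hb.2 h) ht
        have h2 : Icc b 1 ⊆ γ ⁻¹' P.outer := by
          rw [← closure_Ioc h0.ne]
          exact hT.closure_subset_iff.2 fun t ht => P.mem_outer_of_notMem_core (hout t ht.1)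
        have h3 := hseg b 1 h0.le h2
        have hq := hout 1 h0
        rw [γ.target] at h3 hq
        rwa [hlift q hq] at h3
    refine ((h1.trans (C.joined_core hlam hp' hq')).trans h2).mono (subset_univ _) ?_
    rw [add_right_comm, ← mul_add]
    gcongr
    refine (eVariationOn.add_le_union _ fun s hs t ht => ?_).trans
      ((eVariationOn.mono _ (subset_univ _)).trans hγ)
    exact hs.2.trans (hab.trans ht.1)

end Petals.Coord

namespace Petals

/-- The blowup carries length metrics which are arbitrarily close to the metric of the space, up
to the size of the petals. -/
theorem exists_metric_blowup {X : Type} [MetricSpace X] [CompactSpace X] {w : X} {ε : ℝ}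
    (P : Petals w ε) (hε : 0 < ε) (hX : HasShortPaths X) :
    ∃ m : MetricSpace P.blowup,
      m.toPseudoMetricSpace.toUniformSpace.toTopologicalSpace = instTopologicalSpaceSubtype ∧
      @IsLengthSpace P.blowup m ∧
      ∀ p q : P.blowup, |m.dist p q - dist p.1.1 q.1.1| ≤ 2 * ε := by
  obtain ⟨C⟩ := P.nonempty_coord hX
  obtain ⟨k, hΦ, hf⟩ := C.exists_lipschitzOn_outer
  have hB := C.B_nonneg
  set D := Metric.diam (univ : Set X) with hD
  have hD0 : 0 ≤ D := Metric.diam_nonneg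
  set lam : ℝ := ε / (k * D + 16 * C.B + 1) with hlamdef
  have hden : (0 : ℝ) < k * D + 16 * C.B + 1 := by positivity
  have hlam : 0 < lam := by positivity
  have hlamle : lam * k * D + lam * (16 * C.B) ≤ ε := by
    have : lam * (k * D + 16 * C.B + 1) = ε := by rw [hlamdef]; field_simp
    nlinarith
  obtain ⟨m, hm, hlen, hdist⟩ := exists_length_metric (j := C.embed lam)
    (C.injective_embed hlam)
    (fun p q => ((C.joined_of_dist_lt hX hlam hΦ hf (lt_add_one _)).inducedLength_le.trans_lt
      ENNReal.ofReal_lt_top).ne)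
    (fun p η hη => C.eventually_inducedLength_lt hX hlam p hη)
  refine ⟨m, hm, hlen, fun p q => ?_⟩
  have hd := hdist p q
  rw [@edist_dist _ m.toPseudoMetricSpace p q] at hd
  have hnn : 0 ≤ m.dist p q := @dist_nonneg _ m.toPseudoMetricSpace p q
  have hupper : m.dist p q ≤ dist p.1.1 q.1.1 + ε := by
    have h1 : ∀ ℓ : ℝ, dist p.1.1 q.1.1 < ℓ →
        m.dist p q ≤ (1 + lam * k) * ℓ + lam * (16 * C.B) := by
      intro ℓ hℓ
      have h2 := (C.joined_of_dist_lt hX hlam hΦ hf hℓ).inducedLength_le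
      rw [← hd] at h2
      have hℓ0 : 0 ≤ ℓ := dist_nonneg.trans hℓ.le
      exact (ENNReal.ofReal_le_ofReal_iff (by positivity)).1 h2
    have h3 : m.dist p q ≤ (1 + lam * k) * dist p.1.1 q.1.1 + lam * (16 * C.B) := by
      have h4 : Tendsto (fun ℓ : ℝ => (1 + lam * k) * ℓ + lam * (16 * C.B))
          (𝓝[>] (dist p.1.1 q.1.1)) (𝓝 ((1 + lam * k) * dist p.1.1 q.1.1 + lam * (16 * C.B))) :=
        (Continuous.tendsto (by fun_prop) _).mono_left nhdsWithin_le_nhds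
      exact ge_of_tendsto h4 (eventually_mem_nhdsWithin.mono fun ℓ hℓ => h1 ℓ hℓ)
    have h5 : dist p.1.1 q.1.1 ≤ D :=
      Metric.dist_le_diam_of_mem isCompact_univ.isBounded (mem_univ _) (mem_univ _)
    have h6 : lam * k * dist p.1.1 q.1.1 ≤ lam * k * D := by gcongr
    linarith
  have hlower : dist p.1.1 q.1.1 - 2 * ε ≤ m.dist p q := by
    refine (le_dist_collapsed (w := w) hε.le p.1.1 q.1.1).trans ?_
    have h1 := edist_le_inducedLength (j := C.embed lam) p q
    rw [← hd, edist_dist] at h1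
    refine le_trans ?_ ((ENNReal.ofReal_le_ofReal_iff hnn).1 h1)
    exact le_max_left _ _
  rw [abs_le]
  constructor <;> linarith

end Petals

theorem dist_toGHSpace_le {Z X : Type} [MetricSpace Z] [CompactSpace Z] [Nonempty Z]
    [MetricSpace X] [CompactSpace X] [Nonempty X] {f : Z → X} (hf : Function.Surjective f) {ε : ℝ}
    (h : ∀ p q, |dist p q - dist (f p) (f q)| ≤ 2 * ε) :
    dist (toGHSpace Z) (toGHSpace X) ≤ ε := by
  have h1 := ghDist_le_of_approx_subsets (X := Z) (Y := X) (s := univ)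
    (fun p => f p.1) (ε₁ := 0) (ε₂ := 2 * ε) (ε₃ := 0) (fun p => ⟨p, mem_univ _, by simp⟩)
    (fun x => by obtain ⟨z, rfl⟩ := hf x; exact ⟨⟨z, mem_univ _⟩, by simp⟩)
    fun p q => h p.1 q.1
  have h2 : ghDist Z X = dist (toGHSpace Z) (toGHSpace X) := rfl
  linarith

/-! ### The topology of the blowup -/

/-- Multiplication by `h ‖v‖ / ‖v‖`, which moves a vector to the radius `h ‖v‖`. -/
noncomputable def radial (h : ℝ → ℝ) (v : ℂ) : ℂ := ((h ‖v‖ / ‖v‖ : ℝ) : ℂ) * v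

theorem norm_radial {h : ℝ → ℝ} {v : ℂ} (hv : v ≠ 0) (h0 : 0 ≤ h ‖v‖) : ‖radial h v‖ = h ‖v‖ := by
  have := norm_pos_iff.2 hv
  rw [radial, norm_mul, Complex.norm_real, Real.norm_of_nonneg (by positivity)]
  field_simp

theorem radial_eq_self {h : ℝ → ℝ} {v : ℂ} (hv : v ≠ 0) (h0 : h ‖v‖ = ‖v‖) : radial h v = v := by
  rw [radial, h0, div_self (norm_ne_zero_iff.2 hv), Complex.ofReal_one, one_mul]

theorem radial_radial {g h : ℝ → ℝ} {v : ℂ} (hv : v ≠ 0) (h0 : 0 < h ‖v‖) :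
    radial g (radial h v) = radial (g ∘ h) v := by
  have := norm_pos_iff.2 hv
  rw [radial, norm_radial hv h0.le, radial, radial, ← mul_assoc, ← Complex.ofReal_mul]
  congr 2
  rw [Function.comp_apply]
  field_simp

theorem continuousAt_radial {h : ℝ → ℝ} (hh : Continuous h) {v : ℂ} (hv : v ≠ 0) :
    ContinuousAt (radial h) v := by
  have := (norm_pos_iff.2 hv).ne'
  unfold radial
  fun_prop (disch := assumption)

/-- A piecewise affine map sending `[1, ∞)` to `[0, ∞)`. -/
def contraction (r : ℝ) : ℝ := min (2 * (r - 1)) r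

/-- The inverse of `contraction`. -/
noncomputable def expansion (s : ℝ) : ℝ := max (1 + s / 2) s

theorem continuous_contraction : Continuous contraction := by
  unfold contraction; fun_prop

theorem expansion_contraction (r : ℝ) : expansion (contraction r) = r := by
  unfold expansion contraction
  rcases le_total (2 * (r - 1)) r with h | h
  · rw [min_eq_left h, max_eq_left (by linarith)]; ring
  · rw [min_eq_right h, max_eq_right (by linarith)]

theorem contraction_expansion (s : ℝ) : contraction (expansion s) = s := by
  unfold expansion contraction
  rcases le_total (1 + s / 2) s with h | h
  · rw [max_eq_right h, min_eq_right (by linarith)]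
  · rw [max_eq_left h, min_eq_left (by linarith)]; ring

theorem contraction_nonneg {r : ℝ} (hr : 1 ≤ r) : 0 ≤ contraction r :=
  le_min (by linarith) (by linarith)

theorem contraction_pos {r : ℝ} (hr : 1 < r) : 0 < contraction r :=
  lt_min (by linarith) (by linarith)

theorem contraction_of_two_le {r : ℝ} (hr : 2 ≤ r) : contraction r = r :=
  min_eq_right (by linarith)

theorem contraction_one : contraction 1 = 0 := by norm_num [contraction]

theorem shrink_eq_radial (v : ℂ) : shrink v = radial (fun r => max 0 (1 - r)) v := rfl

section OpenDisc

variable {X S : Type*} {i : S → X} {k : ℂ → S}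

open Classical in
/-- The parametrization of one half of the blowup by the complement of a disc. -/
noncomputable def openDisc (i : S → X) (k : ℂ → S) (y : S) : X × ℂ :=
  if h : ∃ v, k v = y then
    (i (k (radial contraction h.choose)),
      radial (fun r => max 0 (1 - contraction r)) h.choose)
  else (i y, 0)

theorem openDisc_apply (hk : Function.Injective k) (v : ℂ) :
    openDisc i k (k v) = (i (k (radial contraction v)),
      radial (fun r => max 0 (1 - contraction r)) v) := by
  have h : ∃ v', k v' = k v := ⟨v, rfl⟩
  rw [openDisc, dif_pos h, hk h.choose_spec]

theorem openDisc_of_notMem_range {y : S} (hy : y ∉ range k) : openDisc i k y = (i y, 0) :=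
  dif_neg hy

theorem openDisc_of_notMem (hk : Function.Injective k) {y : S} (hy : y ∉ k '' ball 0 2) :
    openDisc i k y = (i y, 0) := by
  by_cases h : y ∈ range k
  · obtain ⟨v, rfl⟩ := h
    have hv : 2 ≤ ‖v‖ := by
      by_contra h
      exact hy ⟨v, by simpa using h, rfl⟩
    have hv0 : v ≠ 0 := by rintro rfl; norm_num at hv
    rw [openDisc_apply hk, radial_eq_self hv0 (contraction_of_two_le hv), radial,
      contraction_of_two_le hv, max_eq_left (by linarith)]
    simp
  · exact openDisc_of_notMem_range h

theorem one_le_norm_of_notMem {v : ℂ} (hv : k v ∉ k '' ball 0 1) : 1 ≤ ‖v‖ := by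
  by_contra h
  exact hv ⟨v, by simpa using h, rfl⟩

theorem openDisc_injOn (hi : Function.Injective i) (hk : Function.Injective k) :
    InjOn (openDisc i k) (k '' ball 0 1)ᶜ := by
  have key : ∀ v y, k v ∉ k '' ball 0 1 → y ∉ range k → openDisc i k (k v) ≠ openDisc i k y := by
    intro v y hv hy h
    rw [openDisc_apply hk, openDisc_of_notMem_range hy] at h
    exact hy ⟨_, hi (congrArg Prod.fst h)⟩
  intro y hy y' hy' h
  by_cases hr : y ∈ range k <;> by_cases hr' : y' ∈ range k
  · obtain ⟨v, rfl⟩ := hr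
    obtain ⟨v', rfl⟩ := hr'
    have hv := one_le_norm_of_notMem hy
    have hv' := one_le_norm_of_notMem hy'
    have hv0 : v ≠ 0 := by rintro rfl; norm_num at hv
    have hv0' : v' ≠ 0 := by rintro rfl; norm_num at hv'
    rw [openDisc_apply hk, openDisc_apply hk, Prod.mk.injEq] at h
    have h1 := hk (hi h.1)
    have h2 : ‖v‖ = ‖v'‖ := by
      have h3 := congrArg norm h1
      rw [norm_radial hv0 (contraction_nonneg hv), norm_radial hv0' (contraction_nonneg hv')] at h3
      rw [← expansion_contraction ‖v‖, h3, expansion_contraction]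
    have h4 : ∀ f : ℝ → ℝ, 0 < f ‖v‖ → radial f v = radial f v' → v = v' := by
      intro f hf hfv
      rw [radial, radial, ← h2] at hfv
      have : 0 < ‖v‖ := by linarith
      exact mul_left_cancel₀ (Complex.ofReal_ne_zero.2 (by positivity)) hfv
    rcases hv.eq_or_lt with h5 | h5
    · rw [h4 _ (by simp [← h5, contraction_one]) h.2]
    · rw [h4 _ (contraction_pos h5) h1]
  · obtain ⟨v, rfl⟩ := hr
    exact absurd h (key v y' hy hr')
  · obtain ⟨v, rfl⟩ := hr'
    exact absurd h.symm (key v y hy' hr)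
  · rw [openDisc_of_notMem_range hr, openDisc_of_notMem_range hr'] at h
    exact hi (congrArg Prod.fst h)

theorem openDisc_fst_mem_range (y : S) : (openDisc i k y).1 ∈ range i := by
  unfold openDisc
  split_ifs
  exacts [mem_range_self _, mem_range_self _]

theorem continuousAt_openDisc [TopologicalSpace X] [TopologicalSpace S] [T2Space S]
    (hi : Continuous i) (hk : Topology.IsOpenEmbedding k) {y : S}
    (hy : y ∉ k '' ball 0 1) : ContinuousAt (openDisc i k) y := by
  by_cases h : y ∈ range k
  · obtain ⟨v, rfl⟩ := h
    have hv0 : v ≠ 0 := by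
      rintro rfl
      exact hy ⟨0, by simp, rfl⟩
    rw [← hk.continuousAt_iff]
    have h1 : openDisc i k ∘ k = fun v => (i (k (radial contraction v)),
        radial (fun r => max 0 (1 - contraction r)) v) :=
      funext fun v => openDisc_apply hk.injective v
    rw [h1]
    refine ContinuousAt.prodMk ?_ (continuousAt_radial
      (continuous_const.max (continuous_const.sub continuous_contraction)) hv0)
    exact (hi.comp hk.continuous).continuousAt.comp
      (continuousAt_radial continuous_contraction hv0)
  · have h1 : IsClosed (k '' closedBall 0 2) :=
      ((isCompact_closedBall _ _).image hk.continuous).isClosed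
    have h2 : ∀ᶠ z in 𝓝 y, openDisc i k z = (i z, 0) := by
      filter_upwards [h1.isOpen_compl.mem_nhds fun h' => h (image_subset_range _ _ h')] with z hz
      exact openDisc_of_notMem hk.injective fun h' => hz (image_mono ball_subset_closedBall h')
    exact (hi.continuousAt.prodMk continuousAt_const).congr (h2.mono fun z hz => hz.symm)

end OpenDisc

namespace Petals

variable {X : Type*} [MetricSpace X] {w : X} {ε : ℝ} (P : Petals w ε)
  {S : Type*} {i : S → X} {k : ℂ → S} {b : Bool}

theorem openDisc_mem (hi : Function.Injective i) (hk : Function.Injective k)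
    (hκ : ∀ v, P.κ b v = i (k v)) (hb : ∀ v, P.κ (!b) v ∈ range i → v = 0) {y : S}
    (hy : y ∉ k '' ball 0 1) : openDisc i k y ∈ P.blowup := by
  by_cases h : y ∈ range k
  · obtain ⟨v, rfl⟩ := h
    have hv := one_le_norm_of_notMem hy
    have hv0 : v ≠ 0 := by rintro rfl; norm_num at hv
    rw [openDisc_apply hk, ← hκ]
    rcases hv.eq_or_lt with h1 | h1
    · right
      refine ⟨by simp [radial, ← h1, contraction_one, P.map_zero], ?_⟩
      change ‖radial (fun r => max 0 (1 - contraction r)) v‖ = 1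
      rw [radial_eq_self hv0 (by simp [← h1, contraction_one]), ← h1]
    · left
      have h2 := contraction_pos h1
      have h3 : radial contraction v ≠ 0 := by
        rw [← norm_pos_iff, norm_radial hv0 h2.le]; exact h2
      exact ⟨P.κ_ne h3, by rw [P.dir_κ h3, shrink_eq_radial, radial_radial hv0 h2]; rfl⟩
  · rw [openDisc_of_notMem_range h]
    left
    have hw : i y ≠ w := by
      rw [← P.map_zero b, hκ]
      exact fun h' => h ⟨0, (hi h').symm⟩
    refine ⟨hw, (P.dir_eq_zero ?_).symm⟩
    rintro b' ⟨v, -, hv⟩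
    rcases eq_or_ne b' b with rfl | hbb
    · rw [hκ] at hv
      exact h ⟨v, hi hv⟩
    · obtain rfl : b' = !b := by cases b <;> cases b' <;> simp_all
      have := hb v ⟨y, hv.symm⟩
      rw [this, P.map_zero] at hv
      exact hw hv.symm

theorem exists_openDisc_eq (hi : Function.Injective i) (hk : Function.Injective k)
    (hκ : ∀ v, P.κ b v = i (k v)) (hb : ∀ v, P.κ (!b) v ∈ range i → v = 0) {z : X × ℂ}
    (hz : z ∈ P.blowup) (hzi : z.1 ∈ range i) : ∃ y ∉ k '' ball 0 1, openDisc i k y = z := by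
  have hmem : ∀ v : ℂ, 1 ≤ ‖v‖ → k v ∉ k '' ball 0 1 := by
    rintro v hv ⟨u, hu, huv⟩
    rw [hk huv, mem_ball_zero_iff] at hu
    linarith
  obtain ⟨x, u⟩ := z
  by_cases hx : x = w
  · have hu : ‖u‖ = 1 := (hz.resolve_left fun h => h.1 hx).2
    have hu0 : u ≠ 0 := by rintro rfl; norm_num at hu
    refine ⟨k u, hmem u hu.ge, ?_⟩
    rw [openDisc_apply hk, ← hκ, Prod.mk.injEq]
    constructor
    · rw [radial, hu, contraction_one]
      simp [P.map_zero, hx]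
    · exact radial_eq_self hu0 (by simp [hu, contraction_one])
  · have hfst : ∃ y ∉ k '' ball 0 1, (openDisc i k y).1 = x := by
      obtain ⟨y, rfl⟩ := hzi
      by_cases h : y ∈ range k
      · obtain ⟨v, rfl⟩ := h
        have hv0 : v ≠ 0 := by
          rintro rfl
          exact hx (by rw [← hκ, P.map_zero])
        have hv := norm_pos_iff.2 hv0
        have h1 : 1 < expansion ‖v‖ := lt_max_of_lt_left (by linarith)
        refine ⟨k (radial expansion v), hmem _ ?_, ?_⟩
        · rw [norm_radial hv0 (by linarith)]; exact h1.le
        · rw [openDisc_apply hk, radial_radial hv0 (by linarith),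
            radial_eq_self hv0 (contraction_expansion _)]
      · exact ⟨y, fun h' => h (image_subset_range _ _ h'), by rw [openDisc_of_notMem_range h]⟩
    obtain ⟨y, hy, rfl⟩ := hfst
    refine ⟨y, hy, Prod.ext rfl ?_⟩
    have h1 := (P.openDisc_mem hi hk hκ hb hy).resolve_right fun h => hx h.1
    have h2 := hz.resolve_right fun h => hx h.1
    exact h1.2.trans h2.2.symm

/-- Each half of the blowup is the complement of a disc. -/
theorem nonempty_homeomorph_half [TopologicalSpace S] [CompactSpace S] [T2Space S]
    (hi : Continuous i)
    (hi' : Function.Injective i) (hk : Topology.IsOpenEmbedding k) (hκ : ∀ v, P.κ b v = i (k v))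
    (hb : ∀ v, P.κ (!b) v ∈ range i → v = 0) :
    Nonempty ({z : P.blowup | z.1.1 ∈ range i} ≃ₜ ↥(k '' ball 0 1)ᶜ) := by
  have : CompactSpace ↥(k '' ball 0 1)ᶜ := isCompact_iff_compactSpace.1
    (hk.isOpenMap _ isOpen_ball).isClosed_compl.isCompact
  let F : ↥(k '' ball 0 1)ᶜ → {z : P.blowup | z.1.1 ∈ range i} := fun y =>
    ⟨⟨openDisc i k y, P.openDisc_mem hi' hk.injective hκ hb y.2⟩, openDisc_fst_mem_range _⟩
  have hF : Continuous F := by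
    refine Continuous.subtype_mk (Continuous.subtype_mk ?_ _) _
    exact continuous_iff_continuousAt.2 fun y =>
      (continuousAt_openDisc hi hk y.2).comp continuous_subtype_val.continuousAt
  have hFb : Function.Bijective F := by
    constructor
    · intro y y' h
      exact Subtype.ext (openDisc_injOn hi' hk.injective y.2 y'.2
        (congrArg (fun z => z.1.1) h))
    · rintro ⟨⟨z, hz⟩, hzi⟩
      obtain ⟨y, hy, rfl⟩ := P.exists_openDisc_eq hi' hk.injective hκ hb hz hzi
      exact ⟨⟨y, hy⟩, rfl⟩
  exact ⟨((isHomeomorph_iff_continuous_bijective.2 ⟨hF, hFb⟩).homeomorph F).symm⟩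

/-- The circle of directions. -/
theorem nonempty_homeomorph_rim :
    Nonempty ({z : P.blowup | z.1.1 = w} ≃ₜ AddCircle (1 : ℝ)) := by
  let F : Circle → {z : P.blowup | z.1.1 = w} := fun u => ⟨P.rim u, rfl⟩
  have hF : Continuous F := by
    refine Continuous.subtype_mk (Continuous.subtype_mk ?_ _) _
    exact continuous_const.prodMk continuous_subtype_val
  have hFb : Function.Bijective F := by
    constructor
    · intro u u' h
      exact Circle.ext (congrArg (fun z => z.1.1.2) h)
    · rintro ⟨z, hz⟩
      obtain ⟨u, rfl⟩ := P.exists_eq_rim hz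
      exact ⟨u, rfl⟩
  exact ⟨((AddCircle.homeomorphCircle one_ne_zero).trans
    ((isHomeomorph_iff_continuous_bijective.2 ⟨hF, hFb⟩).homeomorph F)).symm⟩

theorem rim_mem_closure (b : Bool) (u : Circle) :
    P.rim u ∈ closure (P.lift '' (P.κ b '' {0}ᶜ)) := by
  have hne : ∀ r : ℝ, 0 < r → (r : ℂ) * u ≠ 0 := fun r hr =>
    mul_ne_zero (Complex.ofReal_ne_zero.2 hr.ne') u.coe_ne_zero
  have hlim : Tendsto (fun r : ℝ => P.lift (P.κ b (r * u))) (𝓝[>] 0) (𝓝 (P.rim u)) := by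
    rw [tendsto_subtype_rng]
    have h1 : Tendsto (fun r : ℝ => (P.κ b (r * u), ((1 - r : ℝ) : ℂ) * u)) (𝓝[>] 0)
        (𝓝 (P.rim u).1) := by
      have h2 : Continuous fun r : ℝ => (P.κ b (r * u), ((1 - r : ℝ) : ℂ) * u) := by
        have := P.continuous_κ b
        fun_prop
      have h3 := (h2.tendsto 0).mono_left (nhdsWithin_le_nhds (s := Ioi 0))
      simpa [P.map_zero, rim] using h3
    refine h1.congr' ?_
    filter_upwards [Ioo_mem_nhdsGT (zero_lt_one (α := ℝ))] with r hr
    rw [P.lift_val (P.κ_ne (hne r hr.1)), P.dir_κ (hne r hr.1), shrink]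
    have h4 : ‖(r : ℂ) * u‖ = r := by
      rw [norm_mul, Circle.norm_coe, mul_one, Complex.norm_real, Real.norm_of_nonneg hr.1.le]
    rw [h4, max_eq_right (by linarith [hr.2]), ← mul_assoc, ← Complex.ofReal_mul,
      div_mul_cancel₀ _ hr.1.ne']
  refine mem_closure_of_tendsto hlim ?_
  filter_upwards [self_mem_nhdsWithin] with r hr
  exact ⟨_, ⟨_, hne r hr, rfl⟩, rfl⟩

end Petals

/-! ### Discs in surfaces, and the wedge sum -/

/-- The standard identification of the complex plane with the Euclidean plane. -/
noncomputable def planeHomeomorph : ℂ ≃ₜ EuclideanSpace ℝ (Fin 2) :=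
  Complex.orthonormalBasisOneI.repr.toHomeomorph

theorem nonempty_homeomorph_ball {S : Type*} [TopologicalSpace S] {k : ℂ → S}
    (hk : Topology.IsOpenEmbedding k) :
    Nonempty (↥(k '' ball 0 1) ≃ₜ ball (0 : EuclideanSpace ℝ (Fin 2)) 1) := by
  have h : planeHomeomorph '' ball 0 1 = ball (0 : EuclideanSpace ℝ (Fin 2)) 1 := by
    have := Complex.orthonormalBasisOneI.repr.image_ball 0 1
    rwa [map_zero] at this
  exact ⟨(hk.isEmbedding.homeomorphImage (ball 0 1)).symm.trans
    ((planeHomeomorph.image (ball 0 1)).trans (Homeomorph.setCongr h))⟩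

/-- Every point of a surface is the center of arbitrarily small open discs. -/
theorem exists_disc {S : Type*} [MetricSpace S] [ChartedSpace (EuclideanSpace ℝ (Fin 2)) S] (p : S)
    {ε : ℝ} (hε : 0 < ε) :
    ∃ k : ℂ → S, Topology.IsOpenEmbedding k ∧ k 0 = p ∧ ∀ v, dist (k v) p ≤ ε := by
  set e := chartAt (EuclideanSpace ℝ (Fin 2)) p
  have hp : p ∈ e.source := mem_chart_source _ p
  have h1 : e.target ∩ e.symm ⁻¹' ball p ε ∈ 𝓝 (e p) := by
    refine (e.isOpen_inter_preimage_symm isOpen_ball).mem_nhds ⟨e.map_source hp, ?_⟩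
    rw [mem_preimage, e.left_inv hp]
    exact mem_ball_self hε
  obtain ⟨r, hr, hsub⟩ := Metric.mem_nhds_iff.1 h1
  let f := (OpenPartialHomeomorph.univBall (e p) r).trans e.symm
  have hmem : ∀ v, OpenPartialHomeomorph.univBall (e p) r v ∈ ball (e p) r := fun v => by
    rw [← OpenPartialHomeomorph.univBall_target (e p) hr]
    exact OpenPartialHomeomorph.map_source _ (by simp)
  have hf : f.source = univ := by
    ext v
    simpa [f] using (hsub (hmem v)).1
  refine ⟨f ∘ planeHomeomorph,
    (f.isOpenEmbedding hf).comp planeHomeomorph.isOpenEmbedding, ?_, fun v => ?_⟩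
  · have : planeHomeomorph 0 = 0 := map_zero Complex.orthonormalBasisOneI.repr
    simp [f, this, e.left_inv hp]
  · exact (hsub (hmem _)).2.le

section Wedge

variable {S₁ S₂ X : Type*} [MetricSpace S₁] [MetricSpace S₂] [MetricSpace X]
  {p₁ : S₁} {p₂ : S₂} {i₁ : S₁ → X} {i₂ : S₂ → X}

/-- Open sets of a summand which avoid the base point are open in the wedge sum. -/
theorem isOpen_image_wedge (h₁ : Isometry i₁) (hcover : range i₁ ∪ range i₂ = univ)
    (hcross : ∀ x y, dist (i₁ x) (i₂ y) = dist x p₁ + dist p₂ y) {O : Set S₁} (hO : IsOpen O)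
    (hp : p₁ ∉ O) : IsOpen (i₁ '' O) := by
  rw [Metric.isOpen_iff]
  rintro _ ⟨x, hx, rfl⟩
  obtain ⟨δ, hδ, hsub⟩ := Metric.isOpen_iff.1 hO x hx
  have hxp : 0 < dist x p₁ := dist_pos.2 fun h => hp (h ▸ hx)
  refine ⟨min δ (dist x p₁), lt_min hδ hxp, fun y hy => ?_⟩
  rw [mem_ball] at hy
  rcases (hcover ▸ mem_univ y : y ∈ range i₁ ∪ range i₂) with ⟨y', rfl⟩ | ⟨y', rfl⟩
  · rw [h₁.dist_eq] at hy
    exact ⟨y', hsub (hy.trans_le (min_le_left _ _)), rfl⟩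
  · rw [dist_comm, hcross] at hy
    have := hy.trans_le (min_le_right _ _)
    linarith [dist_nonneg (x := p₂) (y := y')]

theorem image_union_image_mem_nhds (h₁ : Isometry i₁) (h₂ : Isometry i₂) (hwp : i₁ p₁ = i₂ p₂)
    (hcover : range i₁ ∪ range i₂ = univ) {O₁ : Set S₁} {O₂ : Set S₂} (hO₁ : O₁ ∈ 𝓝 p₁)
    (hO₂ : O₂ ∈ 𝓝 p₂) : i₁ '' O₁ ∪ i₂ '' O₂ ∈ 𝓝 (i₁ p₁) := by
  obtain ⟨δ, hδ, hsub⟩ := Metric.mem_nhds_iff.1 hO₁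
  obtain ⟨δ', hδ', hsub'⟩ := Metric.mem_nhds_iff.1 hO₂
  refine Metric.mem_nhds_iff.2 ⟨min δ δ', lt_min hδ hδ', fun y hy => ?_⟩
  rw [mem_ball] at hy
  rcases (hcover ▸ mem_univ y : y ∈ range i₁ ∪ range i₂) with ⟨y', rfl⟩ | ⟨y', rfl⟩
  · rw [h₁.dist_eq] at hy
    exact Or.inl ⟨y', hsub (hy.trans_le (min_le_left _ _)), rfl⟩
  · rw [hwp, h₂.dist_eq] at hy
    exact Or.inr ⟨y', hsub' (hy.trans_le (min_le_right _ _)), rfl⟩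

/-- Discs around the base points form a pair of petals in the wedge sum. -/
noncomputable def wedgePetals (h₁ : Isometry i₁) (h₂ : Isometry i₂) (hwp : i₁ p₁ = i₂ p₂)
    (hcover : range i₁ ∪ range i₂ = univ) (hinter : range i₁ ∩ range i₂ = {i₁ p₁})
    (hcross : ∀ x y, dist (i₁ x) (i₂ y) = dist x p₁ + dist p₂ y) {ε : ℝ}
    {k₁ : ℂ → S₁} {k₂ : ℂ → S₂} (hk₁ : Topology.IsOpenEmbedding k₁)
    (hk₂ : Topology.IsOpenEmbedding k₂) (h0₁ : k₁ 0 = p₁) (h0₂ : k₂ 0 = p₂)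
    (hε₁ : ∀ v, dist (k₁ v) p₁ ≤ ε) (hε₂ : ∀ v, dist (k₂ v) p₂ ≤ ε) : Petals (i₁ p₁) ε where
  κ b := bif b then i₁ ∘ k₁ else i₂ ∘ k₂
  continuous_κ b := by
    cases b
    exacts [h₂.continuous.comp hk₂.continuous, h₁.continuous.comp hk₁.continuous]
  map_zero b := by cases b <;> simp [h0₁, h0₂, hwp]
  eq_or_eq := by
    have key : ∀ v v', i₁ (k₁ v) = i₂ (k₂ v') → v = 0 ∧ v' = 0 := by
      intro v v' h
      have h3 : i₁ (k₁ v) = i₁ p₁ := hinter.subset ⟨⟨_, rfl⟩, ⟨_, h.symm⟩⟩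
      have h4 : i₂ (k₂ v') = i₂ p₂ := by rw [← h, h3, hwp]
      exact ⟨hk₁.injective (by rw [h₁.injective h3, h0₁]),
        hk₂.injective (by rw [h₂.injective h4, h0₂])⟩
    rintro (_ | _) (_ | _) v v' h
    · exact Or.inl ⟨rfl, hk₂.injective (h₂.injective h)⟩
    · exact Or.inr (key v' v h.symm).symm
    · exact Or.inr (key v v' h)
    · exact Or.inl ⟨rfl, hk₁.injective (h₁.injective h)⟩
  isOpen_image b O hO h0 := by
    cases b
    · simp only [cond_false, image_comp]
      refine isOpen_image_wedge (p₁ := p₂) (p₂ := p₁) (i₂ := i₁) h₂ (by rw [union_comm, hcover])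
        (fun x y => ?_) (hk₂.isOpenMap O hO) ?_
      · rw [dist_comm, hcross, dist_comm x, dist_comm y, add_comm]
      · rw [← h0₂, hk₂.injective.mem_set_image]; exact h0
    · simp only [cond_true, image_comp]
      refine isOpen_image_wedge h₁ hcover hcross (hk₁.isOpenMap O hO) ?_
      rw [← h0₁, hk₁.injective.mem_set_image]; exact h0
  mem_nhds r hr := by
    have := image_union_image_mem_nhds h₁ h₂ hwp hcover
      (h0₁ ▸ hk₁.isOpenMap.image_mem_nhds (ball_mem_nhds 0 hr))
      (h0₂ ▸ hk₂.isOpenMap.image_mem_nhds (ball_mem_nhds 0 hr))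
    refine mem_of_superset this ?_
    rw [← image_comp, ← image_comp]
    exact union_subset (subset_iUnion (fun b => (bif b then i₁ ∘ k₁ else i₂ ∘ k₂) '' ball 0 r) true)
      (subset_iUnion (fun b => (bif b then i₁ ∘ k₁ else i₂ ∘ k₂) '' ball 0 r) false)
  dist_le b v := by
    cases b
    · rw [hwp]
      exact (h₂.dist_eq _ _).trans_le (hε₂ v)
    · exact (h₁.dist_eq _ _).trans_le (hε₁ v)

end Wedge

theorem Petals.frontier_half {X S₁ S₂ : Type*} [MetricSpace X] [TopologicalSpace S₁]
    [TopologicalSpace S₂] [CompactSpace S₁] [CompactSpace S₂] {w : X} {ε : ℝ} (P : Petals w ε)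
    {i₁ : S₁ → X} {i₂ : S₂ → X} (hi₁ : Continuous i₁) (hi₂ : Continuous i₂)
    (hcover : range i₁ ∪ range i₂ = univ) (hinter : range i₁ ∩ range i₂ = {w}) {b : Bool}
    (hb : ∀ v, P.κ b v ∈ range i₂) :
    frontier {z : P.blowup | z.1.1 ∈ range i₁} = {z : P.blowup | z.1.1 = w} := by
  have hfst : Continuous fun z : P.blowup => z.1.1 := continuous_fst.comp continuous_subtype_val
  have hc₁ : IsClosed {z : P.blowup | z.1.1 ∈ range i₁} :=
    (isCompact_range hi₁).isClosed.preimage hfst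
  have hc₂ : IsClosed {z : P.blowup | z.1.1 ∈ range i₂} :=
    (isCompact_range hi₂).isClosed.preimage hfst
  rw [frontier_eq_closure_inter_closure, hc₁.closure_eq]
  apply Subset.antisymm
  · rintro z ⟨hz₁, hz₂⟩
    have h : z ∈ {z : P.blowup | z.1.1 ∈ range i₂} := by
      refine closure_minimal (fun y hy => ?_) hc₂ hz₂
      exact (hcover ▸ mem_univ y.1.1 : y.1.1 ∈ range i₁ ∪ range i₂).resolve_left hy
    exact hinter.subset ⟨hz₁, h⟩
  · intro z hz
    refine ⟨?_, ?_⟩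
    · have : z.1.1 ∈ range i₁ ∩ range i₂ := by rw [hinter]; exact hz
      exact this.1
    · obtain ⟨u, rfl⟩ := P.exists_eq_rim hz
      refine closure_mono ?_ (P.rim_mem_closure b u)
      rintro _ ⟨_, ⟨v, hv, rfl⟩, rfl⟩ h
      rw [mem_ofPred_eq, P.lift_fst] at h
      exact P.κ_ne hv (hinter.subset ⟨h, hb v⟩)

theorem Petals.isConnectedSumOf_blowup {X S₁ S₂ : Type} [MetricSpace X] [TopologicalSpace S₁]
    [TopologicalSpace S₂] [CompactSpace S₁] [CompactSpace S₂] [T2Space S₁] [T2Space S₂]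
    {w : X} {ε : ℝ} (P : Petals w ε) {i₁ : S₁ → X} {i₂ : S₂ → X} (hi₁ : Continuous i₁)
    (hi₂ : Continuous i₂) (hi₁' : Function.Injective i₁) (hi₂' : Function.Injective i₂)
    (hcover : range i₁ ∪ range i₂ = univ) (hinter : range i₁ ∩ range i₂ = {w})
    {k₁ : ℂ → S₁} {k₂ : ℂ → S₂} (hk₁ : Topology.IsOpenEmbedding k₁)
    (hk₂ : Topology.IsOpenEmbedding k₂) (hκ₁ : ∀ v, P.κ true v = i₁ (k₁ v))
    (hκ₂ : ∀ v, P.κ false v = i₂ (k₂ v)) : IsConnectedSumOf P.blowup S₁ S₂ := by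
  have hfst : Continuous fun z : P.blowup => z.1.1 := continuous_fst.comp continuous_subtype_val
  have hb₁ : ∀ v, P.κ true v ∈ range i₁ := fun v => ⟨_, (hκ₁ v).symm⟩
  have hb₂ : ∀ v, P.κ false v ∈ range i₂ := fun v => ⟨_, (hκ₂ v).symm⟩
  have hinter' : range i₂ ∩ range i₁ = {w} := by rw [inter_comm, hinter]
  have hAB : {z : P.blowup | z.1.1 ∈ range i₁} ∩ {z : P.blowup | z.1.1 ∈ range i₂}
      = {z : P.blowup | z.1.1 = w} := by
    ext z
    exact Set.ext_iff.1 hinter z.1.1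
  have hfA := P.frontier_half hi₁ hi₂ hcover hinter hb₂
  have hfB := P.frontier_half hi₂ hi₁ (by rw [union_comm, hcover]) hinter' hb₁
  refine ⟨{z | z.1.1 ∈ range i₁}, {z | z.1.1 ∈ range i₂}, k₁ '' ball 0 1, k₂ '' ball 0 1,
    (isCompact_range hi₁).isClosed.preimage hfst, (isCompact_range hi₂).isClosed.preimage hfst,
    ?_, by rw [hAB, hfA], by rw [hfA, hfB], ?_, hk₁.isOpenMap _ isOpen_ball,
    hk₂.isOpenMap _ isOpen_ball, nonempty_homeomorph_ball hk₁, nonempty_homeomorph_ball hk₂,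
    P.nonempty_homeomorph_half hi₁ hi₁' hk₁ hκ₁ fun v hv => ?_,
    P.nonempty_homeomorph_half hi₂ hi₂' hk₂ hκ₂ fun v hv => ?_⟩
  · exact eq_univ_of_forall fun z => (hcover ▸ mem_univ z.1.1 : z.1.1 ∈ range i₁ ∪ range i₂)
  · rw [hAB]
    exact P.nonempty_homeomorph_rim
  · by_contra h0
    exact P.κ_ne h0 (hinter.subset ⟨hv, hb₂ v⟩)
  · by_contra h0
    exact P.κ_ne h0 (hinter'.subset ⟨hv, hb₁ v⟩)

/-- A metric wedge sum of two closed length surfaces is the Gromov-Hausdorff limit of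
a sequence of length spaces each homeomorphic to a connected sum of the surfaces.
The wedge sum `X` is described by isometric embeddings `i₁, i₂` covering `X`,
identifying the basepoints, with cross-distances going through the wedge point. -/
theorem metric_wedge_of_surfaces_ghLimit_of_connected_sums
    (S₁ S₂ : Type) [MetricSpace S₁] [MetricSpace S₂]
    [CompactSpace S₁] [CompactSpace S₂] [ConnectedSpace S₁] [ConnectedSpace S₂]
    [ChartedSpace (EuclideanSpace ℝ (Fin 2)) S₁] [ChartedSpace (EuclideanSpace ℝ (Fin 2)) S₂]
    (hS₁ : IsLengthSpace S₁) (hS₂ : IsLengthSpace S₂) (p₁ : S₁) (p₂ : S₂)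
    (X : Type) [MetricSpace X] [Nonempty X] [CompactSpace X]
    (i₁ : S₁ → X) (i₂ : S₂ → X) (h₁ : Isometry i₁) (h₂ : Isometry i₂)
    (hwp : i₁ p₁ = i₂ p₂) (hcover : Set.range i₁ ∪ Set.range i₂ = Set.univ)
    (hinter : Set.range i₁ ∩ Set.range i₂ = {i₁ p₁})
    (hcross : ∀ (x : S₁) (y : S₂), dist (i₁ x) (i₂ y) = dist x p₁ + dist p₂ y) :
    ∃ F : ℕ → GHSpace,
      (∀ n, ∃ (Z : Type) (m : MetricSpace Z), letI := m;
        ∃ (_ : Nonempty Z) (_ : CompactSpace Z),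
          IsLengthSpace Z ∧ IsConnectedSumOf Z S₁ S₂ ∧ toGHSpace Z = F n) ∧
      Tendsto F atTop (nhds (toGHSpace X)) := by
  have hX : HasShortPaths X :=
    hasShortPaths_wedge hS₁.hasShortPaths hS₂.hasShortPaths h₁ h₂ hwp hcover hcross
  have key : ∀ n : ℕ, ∃ G : GHSpace, (∃ (Z : Type) (m : MetricSpace Z), letI := m;
        ∃ (_ : Nonempty Z) (_ : CompactSpace Z),
          IsLengthSpace Z ∧ IsConnectedSumOf Z S₁ S₂ ∧ toGHSpace Z = G) ∧
      dist G (toGHSpace X) ≤ 1 / ((n : ℝ) + 1) := by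
    intro n
    have hε : 0 < 1 / ((n : ℝ) + 1) := by positivity
    obtain ⟨k₁, hk₁, h0₁, hε₁⟩ := exists_disc p₁ hε
    obtain ⟨k₂, hk₂, h0₂, hε₂⟩ := exists_disc p₂ hε
    let P := wedgePetals h₁ h₂ hwp hcover hinter hcross hk₁ hk₂ h0₁ h0₂ hε₁ hε₂
    obtain ⟨m, hm, hlen, hdist⟩ := P.exists_metric_blowup hε hX
    have hsum : IsConnectedSumOf P.blowup S₁ S₂ :=
      P.isConnectedSumOf_blowup h₁.continuous h₂.continuous h₁.injective h₂.injective hcover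
        hinter hk₁ hk₂ (fun _ => rfl) (fun _ => rfl)
    have hne : Nonempty P.blowup := ⟨P.rim 1⟩
    have hcomp : @CompactSpace P.blowup
        m.toPseudoMetricSpace.toUniformSpace.toTopologicalSpace := by
      rw [hm]
      infer_instance
    refine ⟨@toGHSpace P.blowup m hcomp hne, ⟨P.blowup, m, hne, hcomp, hlen, ?_, rfl⟩, ?_⟩
    · rw [hm]
      exact hsum
    · exact @dist_toGHSpace_le P.blowup X m hcomp hne _ _ _ (fun p => p.1.1)
        (fun x => ⟨P.lift x, P.lift_fst x⟩) _ hdist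
  choose F hF hFX using key
  refine ⟨F, hF, ?_⟩
  rw [tendsto_iff_dist_tendsto_zero]
  exact squeeze_zero (fun _ => dist_nonneg) hFX tendsto_one_div_add_atTop_nhds_zero_nat
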